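/- arXiv:math/0104176 — 5 statements merged into one kernel-verified Lean document; each statement's English description precedes it below -/
import Mathlib

section
/- For (w,s) in ℂ² with s ≠ 0 and s ≠ w, the function Z_ℚ(w,s), defined on Re(w) < Re(s) < 0 by Z_ℚ(w,s) = ∫₀^∞ θ(t²)^s θ(1/t²)^{w-s} dt/t, extends to the meromorphic expression Z_ℚ(w,s) = -1/s + 1/(s-w) + ∫₀¹ (θ(1/t²)^w - 1)(t^{-s} + t^{-(w-s)}) dt/t, where the last integral defines an entire function on ℂ², and consequently Z_ℚ(w,s) = Z_ℚ(w, w-s). -/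
/-- The Jacobi theta function `θ(t) = ∑_{n ∈ ℤ} e^{-π n² t}` for real `t`. -/
noncomputable def theta (t : ℝ) : ℝ := ∑' n : ℤ, Real.exp (-Real.pi * (n : ℝ)^2 * t)

/-- The entire correction term `∫₀¹ (θ(1/t²)^w - 1)(t^{-s} + t^{-(w-s)}) dt/t`. -/
noncomputable def G (w s : ℂ) : ℂ :=
  ∫ t in Set.Ioo (0:ℝ) 1,
    (((theta (1/t^2) : ℂ)) ^ w - 1) * ((t : ℂ) ^ (-s) + (t : ℂ) ^ (-(w - s))) / t

open MeasureTheory Set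

section general

variable {α : Type*} [MeasurableSpace α] {μ : Measure α}
  {E : Type*} [NormedAddCommGroup E] [NormedSpace ℂ E]

/-- The `n`-th Taylor coefficient of `p ↦ c * exp (l p)`. -/
noncomputable def expCoeff (c : ℂ) (l : E →L[ℂ] ℂ) (n : ℕ) : E [×n]→L[ℂ] ℂ :=
  (c / (n.factorial : ℂ)) •
    (ContinuousMultilinearMap.mkPiAlgebraFin ℂ n ℂ).compContinuousLinearMap (fun _ => l)

lemma expCoeff_apply (c : ℂ) (l : E →L[ℂ] ℂ) (n : ℕ) (y : E) :
    expCoeff c l n (fun _ => y) = c * ((l y) ^ n / (n.factorial : ℂ)) := by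
  simp [expCoeff]
  ring

lemma norm_expCoeff_le (c : ℂ) (l : E →L[ℂ] ℂ) (n : ℕ) :
    ‖expCoeff c l n‖ ≤ ‖c‖ * (‖l‖ ^ n / (n.factorial : ℝ)) := by
  unfold expCoeff
  rw [norm_smul, norm_div]
  have h := ContinuousMultilinearMap.norm_compContinuousLinearMap_le
    (ContinuousMultilinearMap.mkPiAlgebraFin ℂ n ℂ) (fun _ => l)
  simp only [ContinuousMultilinearMap.norm_mkPiAlgebraFin, Finset.prod_const,
    Finset.card_univ, Fintype.card_fin, one_mul] at h
  have h2 : ‖(n.factorial : ℂ)‖ = n.factorial := by simp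
  rw [h2]
  calc _ ≤ ‖c‖ / n.factorial * ‖l‖ ^ n := by gcongr
    _ = _ := by ring

lemma aesm_expCoeff {c : α → ℂ} {l : α → E →L[ℂ] ℂ} (hc : AEStronglyMeasurable c μ)
    (hl : AEStronglyMeasurable l μ) (n : ℕ) :
    AEStronglyMeasurable (fun x => expCoeff (c x) (l x) n) μ := by
  unfold expCoeff
  refine AEStronglyMeasurable.smul (f := fun x => c x / (n.factorial : ℂ)) ?_ ?_
  · simp only [div_eq_mul_inv]
    exact hc.mul_const _
  · have hcont : Continuous (fun m : E →L[ℂ] ℂ =>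
        (ContinuousMultilinearMap.mkPiAlgebraFin ℂ n ℂ).compContinuousLinearMap (fun _ => m)) := by
      have := (ContinuousMultilinearMap.compContinuousLinearMapLRight (E := fun _ : Fin n => E)
        (ContinuousMultilinearMap.mkPiAlgebraFin ℂ n ℂ)).cont
      exact this.comp (continuous_pi fun _ => continuous_id)
    exact hcont.comp_aestronglyMeasurable hl

lemma pow_term_le {a r : ℝ} (ha : 0 ≤ a) (hr : 0 ≤ r) (n : ℕ) :
    a ^ n / (n.factorial : ℝ) * r ^ n ≤ Real.exp (r * a) := by
  have := Real.pow_div_factorial_le_exp (x := r * a) (by positivity) n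
  calc _ = (r * a) ^ n / n.factorial := by rw [mul_pow]; ring
    _ ≤ _ := this

theorem analytic_integral_exp {c : α → ℂ} {l : α → E →L[ℂ] ℂ} (hc : AEStronglyMeasurable c μ)
    (hl : AEStronglyMeasurable l μ)
    (hint : ∀ R : ℝ, 0 ≤ R → Integrable (fun x => ‖c x‖ * Real.exp (R * ‖l x‖)) μ) :
    AnalyticOn ℂ (fun p : E => ∫ x, c x * Complex.exp (l x p) ∂μ) univ := by
  have hcoef : ∀ n, Integrable (fun x => expCoeff (c x) (l x) n) μ := by
    intro n
    refine (hint 1 zero_le_one).mono' (aesm_expCoeff hc hl n) (Filter.Eventually.of_forall ?_)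
    intro x
    refine (norm_expCoeff_le _ _ _).trans ?_
    have := pow_term_le (norm_nonneg (l x)) zero_le_one n
    rw [one_pow, mul_one] at this
    gcongr
  let P : FormalMultilinearSeries ℂ E ℂ := fun n => ∫ x, expCoeff (c x) (l x) n ∂μ
  have hP : HasFPowerSeriesOnBall (fun p : E => ∫ x, c x * Complex.exp (l x p) ∂μ) P 0 ⊤ := by
    refine ⟨?_, by simp, ?_⟩
    · refine ENNReal.le_of_forall_nnreal_lt fun r _ => ?_
      refine P.le_radius_of_bound (∫ x, ‖c x‖ * Real.exp (r * ‖l x‖) ∂μ) fun n => ?_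
      calc ‖P n‖ * (r:ℝ) ^ n ≤ (∫ x, ‖expCoeff (c x) (l x) n‖ ∂μ) * (r:ℝ) ^ n := by
            gcongr
            exact norm_integral_le_integral_norm _
        _ = ∫ x, ‖expCoeff (c x) (l x) n‖ * (r:ℝ) ^ n ∂μ := by rw [integral_mul_const]
        _ ≤ _ := by
            refine integral_mono ((hcoef n).norm.mul_const _) (hint r r.2) fun x => ?_
            calc ‖expCoeff (c x) (l x) n‖ * (r:ℝ) ^ n
                ≤ (‖c x‖ * (‖l x‖ ^ n / (n.factorial : ℝ))) * (r:ℝ) ^ n := by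
                  gcongr
                  exact norm_expCoeff_le _ _ _
              _ = ‖c x‖ * (‖l x‖ ^ n / (n.factorial : ℝ) * (r:ℝ) ^ n) := by ring
              _ ≤ _ := by
                  gcongr
                  exact pow_term_le (norm_nonneg _) r.2 n
    · intro y _
      have hexp : ∀ a : ℝ, HasSum (fun n : ℕ => a ^ n / (n.factorial : ℝ)) (Real.exp a) := by
        intro a
        rw [Real.exp_eq_exp_ℝ]
        exact NormedSpace.expSeries_div_hasSum_exp a
      have key := hasSum_integral_of_dominated_convergence (μ := μ)
        (F := fun (n : ℕ) x => expCoeff (c x) (l x) n (fun _ => y))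
        (f := fun x => c x * Complex.exp (l x y))
        (fun n x => ‖c x‖ * ((‖y‖ * ‖l x‖) ^ n / (n.factorial : ℝ)))
        ?_ ?_ ?_ ?_ ?_
      · simp only [zero_add]
        convert key using 2 with n
        exact ContinuousMultilinearMap.integral_apply (hcoef n) _
      · intro n
        exact (ContinuousMultilinearMap.apply ℂ (fun _ : Fin n => E) ℂ
          (fun _ => y)).continuous.comp_aestronglyMeasurable (aesm_expCoeff hc hl n)
      · intro n
        refine Filter.Eventually.of_forall fun x => ?_
        rw [expCoeff_apply, norm_mul, norm_div, norm_pow]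
        have h2 : ‖(n.factorial : ℂ)‖ = n.factorial := by simp
        rw [h2]
        gcongr
        rw [mul_comm]
        exact (l x).le_opNorm y
      · exact Filter.Eventually.of_forall fun x => ((hexp _).mul_left _).summable
      · simp_rw [fun x => ((hexp (‖y‖ * ‖l x‖)).mul_left ‖c x‖).tsum_eq]
        exact hint _ (norm_nonneg y)
      · refine Filter.Eventually.of_forall fun x => ?_
        simp_rw [expCoeff_apply]
        apply HasSum.mul_left
        rw [Complex.exp_eq_exp_ℂ]
        exact NormedSpace.expSeries_div_hasSum_exp (l x y)
  have := hP.analyticOnNhd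
  intro p _
  exact (this p (by simp)).analyticWithinAt

end general
lemma theta_eq_jacobi (x : ℝ) : (theta x : ℂ) = jacobiTheta (Complex.I * x) := by
  unfold theta jacobiTheta
  rw [Complex.ofReal_tsum]
  congr 1
  ext n
  push_cast
  congr 1
  linear_combination (-(Real.pi:ℂ) * n^2 * x) * Complex.I_sq

lemma theta_summable {x : ℝ} (hx : 0 < x) :
    Summable (fun n : ℤ => Real.exp (-Real.pi * (n : ℝ)^2 * x)) := by
  have h := (hasSum_jacobiTheta₂_term (0:ℂ) (τ := Complex.I * x) (by simpa using hx)).summable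
  have h2 := h.norm
  refine h2.congr fun n => ?_
  rw [norm_jacobiTheta₂_term]
  simp

lemma one_le_theta {x : ℝ} (hx : 0 < x) : 1 ≤ theta x := by
  have := (theta_summable hx).le_tsum 0 (fun n _ => (Real.exp_pos _).le)
  simpa [theta] using this

lemma theta_sub_one_le {x : ℝ} (hx : 1 ≤ x) :
    theta x - 1 ≤ 2 / (1 - Real.exp (-Real.pi)) * Real.exp (-Real.pi * x) := by
  have hx0 : 0 < x := by linarith
  have h := norm_jacobiTheta_sub_one_le (τ := Complex.I * x) (by simpa using hx0)
  rw [← theta_eq_jacobi] at h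
  have h1 : ‖(theta x : ℂ) - 1‖ = theta x - 1 := by
    rw [← Complex.ofReal_one, ← Complex.ofReal_sub, Complex.norm_real, Real.norm_eq_abs,
      abs_of_nonneg (by linarith [one_le_theta hx0])]
  rw [h1] at h
  have h2 : (Complex.I * (x:ℂ)).im = x := by simp
  rw [h2] at h
  have hpi := Real.pi_pos
  have h3 : Real.exp (-Real.pi * x) ≤ Real.exp (-Real.pi) := by
    apply Real.exp_le_exp.mpr; nlinarith
  have h4 : Real.exp (-Real.pi) < 1 := by
    rw [Real.exp_lt_one_iff]; linarith
  refine h.trans ?_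
  gcongr

lemma theta_continuousOn : ContinuousOn theta (Ioi 0) := by
  have : ContinuousOn (fun x : ℝ => (jacobiTheta (Complex.I * x)).re) (Ioi 0) := by
    intro x hx
    apply ContinuousAt.continuousWithinAt
    have h1 : ContinuousAt jacobiTheta (Complex.I * x) :=
      (differentiableAt_jacobiTheta (by simpa using hx)).continuousAt
    have h2 : ContinuousAt (fun x : ℝ => Complex.I * (x:ℂ)) x := by fun_prop
    exact Complex.continuous_re.continuousAt.comp
      (ContinuousAt.comp (f := fun x : ℝ => Complex.I * (x:ℂ)) h1 h2)
  refine this.congr fun x _ => ?_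
  show theta x = (jacobiTheta (Complex.I * x)).re
  rw [← theta_eq_jacobi, Complex.ofReal_re]

lemma theta_feq {t : ℝ} (ht : 0 < t) : theta (t^2) = t⁻¹ * theta (1/t^2) := by
  have h := Real.tsum_exp_neg_mul_int_sq (a := t^2) (by positivity)
  have h1 : (t^2) ^ (1/2:ℝ) = t := by
    rw [← Real.sqrt_eq_rpow, Real.sqrt_sq ht.le]
  rw [h1] at h
  unfold theta
  rw [← one_div]
  convert h using 3
  · ring_nf
  · ext n; ring_nf

/-- `L t = log θ(1/t²)`. -/
noncomputable def LL (t : ℝ) : ℝ := Real.log (theta (1/t^2))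

lemma LL_nonneg {t : ℝ} (ht : 0 < t) : 0 ≤ LL t :=
  Real.log_nonneg (one_le_theta (by positivity))

lemma LL_continuousOn : ContinuousOn LL (Ioi 0) := by
  unfold LL
  apply ContinuousOn.log
  · apply theta_continuousOn.comp
    · apply ContinuousOn.div continuousOn_const (by fun_prop)
      intro x hx; have : (0:ℝ) < x := hx
      positivity
    · intro x hx; have : (0:ℝ) < x := hx
      show (0:ℝ) < _
      positivity
  · intro x hx; have : (0:ℝ) < x := hx
    have := one_le_theta (x := 1/x^2) (by positivity)
    linarith

lemma cpow_theta {t : ℝ} (ht : 0 < t) (w : ℂ) :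
    ((theta (1/t^2) : ℂ)) ^ w = Complex.exp (w * LL t) := by
  have h := one_le_theta (x := 1/t^2) (by positivity)
  have h' : (theta (1/t^2) : ℂ) ≠ 0 := by
    rw [Complex.ofReal_ne_zero]; linarith
  rw [Complex.cpow_def_of_ne_zero h', LL, Complex.ofReal_log (by linarith), mul_comm]

lemma cpow_t {t : ℝ} (ht : 0 < t) (s : ℂ) :
    (t : ℂ) ^ s = Complex.exp (s * Real.log t) := by
  rw [Complex.cpow_def_of_ne_zero (by exact_mod_cast ht.ne'), Complex.ofReal_log ht.le, mul_comm]

lemma LL_le {t : ℝ} (ht : t ∈ Ioo (0:ℝ) 1) :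
    LL t ≤ 2 / (1 - Real.exp (-Real.pi)) * Real.exp (-Real.pi * (1/t^2)) := by
  obtain ⟨h0, h1⟩ := ht
  have h2 : 1 ≤ 1/t^2 := by
    rw [le_div_iff₀ (by positivity)]; nlinarith
  refine le_trans ?_ (theta_sub_one_le h2)
  exact Real.log_le_sub_one_of_pos (by linarith [one_le_theta (x := 1/t^2) (by positivity)])

lemma main_bound (R : ℝ) (hR : 0 ≤ R) : ∃ M : ℝ, ∀ t ∈ Ioo (0:ℝ) 1,
    LL t / t * Real.exp (R * (LL t + |Real.log t|)) ≤ M := by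
  set C := 2 / (1 - Real.exp (-Real.pi)) with hC
  have hCpos : 0 < C := by
    have h4 : Real.exp (-Real.pi) < 1 := by
      rw [Real.exp_lt_one_iff]; linarith [Real.pi_pos]
    have : 0 < 1 - Real.exp (-Real.pi) := by linarith
    positivity
  obtain ⟨k, hk⟩ := exists_nat_ge R
  refine ⟨C * (k+1).factorial * Real.exp (R * C), fun t ht => ?_⟩
  have hL := LL_le ht
  rw [← hC] at hL
  obtain ⟨h0, h1⟩ := ht
  have hL0 := LL_nonneg h0
  have hLC : LL t ≤ C := by
    refine hL.trans ?_
    have : Real.exp (-Real.pi * (1/t^2)) ≤ 1 := by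
      rw [Real.exp_le_one_iff]
      have : 0 < Real.pi * (1/t^2) := by have := Real.pi_pos; positivity
      linarith
    nlinarith
  have hlog : |Real.log t| = Real.log t⁻¹ := by
    rw [abs_of_nonpos (Real.log_nonpos h0.le h1.le), Real.log_inv]
  have hy1 : 1 ≤ t⁻¹ := (one_le_inv₀ h0).mpr h1.le
  have hy0 : 0 < t⁻¹ := by positivity
  have e1 : Real.exp (R * |Real.log t|) ≤ t⁻¹ ^ k := by
    rw [hlog]
    have : t⁻¹ ^ k = Real.exp (k * Real.log t⁻¹) := by
      rw [mul_comm, Real.exp_mul, Real.exp_log hy0, Real.rpow_natCast]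
    rw [this]
    apply Real.exp_le_exp.mpr
    have := Real.log_nonneg hy1
    gcongr
  have e2 : t⁻¹ ^ (k+1) ≤ (k+1).factorial * Real.exp (Real.pi * (1/t^2)) := by
    have h := Real.pow_div_factorial_le_exp (x := (t⁻¹)^2) (by positivity) (k+1)
    rw [div_le_iff₀ (by positivity)] at h
    calc t⁻¹ ^ (k+1) ≤ ((t⁻¹)^2) ^ (k+1) := by
          gcongr; nlinarith
      _ ≤ _ := h
      _ = (k+1).factorial * Real.exp ((t⁻¹)^2) := by ring
      _ ≤ _ := by
        gcongr
        have : 1/t^2 = (t⁻¹)^2 := by field_simp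
        rw [this]
        nlinarith [Real.pi_gt_three, sq_nonneg t⁻¹]
  have e3 : Real.exp (-Real.pi * (1/t^2)) * Real.exp (Real.pi * (1/t^2)) = 1 := by
    rw [← Real.exp_add]; simp
  calc LL t / t * Real.exp (R * (LL t + |Real.log t|))
      = LL t * (t⁻¹ * Real.exp (R * |Real.log t|)) * Real.exp (R * LL t) := by
        rw [mul_add, Real.exp_add]; ring
    _ ≤ (C * Real.exp (-Real.pi * (1/t^2))) * (t⁻¹ * t⁻¹ ^ k) * Real.exp (R * C) := by
        gcongr
    _ = C * Real.exp (-Real.pi * (1/t^2)) * (t⁻¹ ^ (k+1)) * Real.exp (R * C) := by ring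
    _ ≤ C * Real.exp (-Real.pi * (1/t^2)) * ((k+1).factorial * Real.exp (Real.pi * (1/t^2)))
          * Real.exp (R * C) := by gcongr
    _ = C * (k+1).factorial * Real.exp (R * C)
          * (Real.exp (-Real.pi * (1/t^2)) * Real.exp (Real.pi * (1/t^2))) := by ring
    _ = _ := by rw [e3, mul_one]
/-- Lebesgue measure on the open unit square. -/
noncomputable def sqMeasure : Measure (ℝ × ℝ) :=
  (volume.restrict (Ioo (0:ℝ) 1)).prod (volume.restrict (Ioo (0:ℝ) 1))

instance : IsFiniteMeasure (volume.restrict (Ioo (0:ℝ) 1)) := ⟨by simp⟩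

instance : IsFiniteMeasure sqMeasure := by unfold sqMeasure; infer_instance

noncomputable def cc (x : ℝ × ℝ) : ℂ := ((LL x.1 / x.1 : ℝ) : ℂ)

noncomputable def ll (x : ℝ × ℝ) : ℂ × ℂ →L[ℂ] ℂ :=
  ((x.2 * LL x.1 : ℝ) : ℂ) • ContinuousLinearMap.fst ℂ ℂ ℂ +
    ((-Real.log x.1 : ℝ) : ℂ) • ContinuousLinearMap.snd ℂ ℂ ℂ

lemma ll_apply (x : ℝ × ℝ) (w s : ℂ) :
    ll x (w, s) = (x.2 * LL x.1 : ℝ) * w + (-Real.log x.1 : ℝ) * s := by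
  simp [ll]

lemma aesm_LL : AEStronglyMeasurable LL (volume.restrict (Ioo (0:ℝ) 1)) :=
  (LL_continuousOn.mono (fun _ h => h.1)).aestronglyMeasurable measurableSet_Ioo

lemma aesm_cc : AEStronglyMeasurable cc sqMeasure := by
  have h1 : AEStronglyMeasurable (fun t : ℝ => ((LL t / t : ℝ) : ℂ))
      (volume.restrict (Ioo (0:ℝ) 1)) := by
    apply Complex.continuous_ofReal.comp_aestronglyMeasurable
    simp only [div_eq_mul_inv]
    exact aesm_LL.mul measurable_inv.aestronglyMeasurable
  exact h1.comp_fst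

lemma aesm_ll : AEStronglyMeasurable ll sqMeasure := by
  have h1 : AEStronglyMeasurable (fun x : ℝ × ℝ => LL x.1) sqMeasure := aesm_LL.comp_fst
  have h2 : AEStronglyMeasurable (fun x : ℝ × ℝ => ((x.2 * LL x.1 : ℝ) : ℂ)) sqMeasure :=
    Complex.continuous_ofReal.comp_aestronglyMeasurable
      (measurable_snd.aestronglyMeasurable.mul h1)
  have h3 : AEStronglyMeasurable (fun x : ℝ × ℝ => ((-Real.log x.1 : ℝ) : ℂ)) sqMeasure :=
    Complex.continuous_ofReal.comp_aestronglyMeasurable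
      (Real.measurable_log.comp measurable_fst).neg.aestronglyMeasurable
  exact (h2.smul_const _).add (h3.smul_const _)

lemma ae_sq : ∀ᵐ x ∂sqMeasure, x.1 ∈ Ioo (0:ℝ) 1 ∧ x.2 ∈ Ioo (0:ℝ) 1 := by
  unfold sqMeasure
  rw [Measure.prod_restrict]
  filter_upwards [ae_restrict_mem (measurableSet_Ioo.prod measurableSet_Ioo)] with x hx
  exact hx

lemma norm_ll_le {x : ℝ × ℝ} (h1 : x.1 ∈ Ioo (0:ℝ) 1) (h2 : x.2 ∈ Ioo (0:ℝ) 1) :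
    ‖ll x‖ ≤ LL x.1 + |Real.log x.1| := by
  have hL := LL_nonneg h1.1
  unfold ll
  refine (norm_add_le _ _).trans ?_
  rw [norm_smul, norm_smul, Complex.norm_real, Complex.norm_real, Real.norm_eq_abs,
    Real.norm_eq_abs, abs_neg, abs_mul, abs_of_nonneg hL, abs_of_pos h2.1]
  have a1 := ContinuousLinearMap.norm_fst_le ℂ ℂ ℂ
  have a2 := ContinuousLinearMap.norm_snd_le ℂ ℂ ℂ
  have b : x.2 * LL x.1 ≤ LL x.1 := mul_le_of_le_one_left hL h2.2.le
  have b0 : 0 ≤ x.2 * LL x.1 := mul_nonneg h2.1.le hL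
  have := abs_nonneg (Real.log x.1)
  refine add_le_add ?_ ?_
  · exact (mul_le_of_le_one_right b0 a1).trans b
  · exact mul_le_of_le_one_right this a2

lemma hint_sq (R : ℝ) (hR : 0 ≤ R) :
    Integrable (fun x => ‖cc x‖ * Real.exp (R * ‖ll x‖)) sqMeasure := by
  obtain ⟨M, hM⟩ := main_bound R hR
  refine Integrable.mono' (integrable_const M) ?_ ?_
  · exact aesm_cc.norm.mul (Real.continuous_exp.comp_aestronglyMeasurable
      (aesm_ll.norm.const_mul R))
  · filter_upwards [ae_sq] with x hx
    have hL := LL_nonneg hx.1.1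
    have h0 := hx.1.1
    have : ‖cc x‖ = LL x.1 / x.1 := by
      unfold cc
      rw [Complex.norm_real, Real.norm_eq_abs, abs_of_nonneg (by positivity)]
    rw [Real.norm_eq_abs, abs_of_nonneg (by positivity), this]
    refine le_trans ?_ (hM _ hx.1)
    have := norm_ll_le hx.1 hx.2
    gcongr

lemma integrable_sq (p : ℂ × ℂ) :
    Integrable (fun x => cc x * Complex.exp (ll x p)) sqMeasure := by
  refine (hint_sq ‖p‖ (norm_nonneg _)).mono' ?_ (Filter.Eventually.of_forall fun x => ?_)
  · refine aesm_cc.mul (Complex.continuous_exp.comp_aestronglyMeasurable ?_)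
    exact (ContinuousLinearMap.apply ℂ ℂ p).continuous.comp_aestronglyMeasurable aesm_ll
  · rw [norm_mul, Complex.norm_exp]
    gcongr
    refine (Complex.re_le_norm _).trans ?_
    rw [mul_comm]
    exact (ll x).le_opNorm p

/-- One half of the integrand of `G`. -/
noncomputable def aFun (w s : ℂ) (t : ℝ) : ℂ :=
  (((theta (1/t^2) : ℂ)) ^ w - 1) * (t : ℂ) ^ (-s) / t

lemma inner_integral (w s : ℂ) {t : ℝ} (ht : t ∈ Ioo (0:ℝ) 1) :
    w * ∫ u in Ioo (0:ℝ) 1, cc (t, u) * Complex.exp (ll (t, u) (w, s)) = aFun w s t := by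
  have e : ∀ u : ℝ, cc (t, u) * Complex.exp (ll (t, u) (w, s)) =
      ((LL t : ℂ) / t * (t : ℂ) ^ (-s)) * Complex.exp (w * LL t * u) := by
    intro u
    rw [ll_apply, Complex.exp_add, cpow_t ht.1, cc]
    push_cast
    ring_nf
  simp_rw [e]
  rw [integral_const_mul, ← integral_Ioc_eq_integral_Ioo,
    ← intervalIntegral.integral_of_le zero_le_one, aFun, cpow_theta ht.1]
  by_cases h : w * LL t = 0
  · rw [h]
    simp only [Complex.exp_zero, sub_self, zero_mul, zero_div]
    linear_combination (((t : ℂ))⁻¹ * (t : ℂ) ^ (-s) * ∫ x in (0:ℝ)..1, (1:ℂ)) * h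
  · rw [integral_exp_mul_complex h]
    have hw : w ≠ 0 := left_ne_zero_of_mul h
    have hL : (LL t : ℂ) ≠ 0 := right_ne_zero_of_mul h
    have ht0 : (t : ℂ) ≠ 0 := by exact_mod_cast ht.1.ne'
    simp only [Complex.ofReal_one, Complex.ofReal_zero, mul_one, mul_zero, Complex.exp_zero]
    field_simp

lemma aFun_integrable (w s : ℂ) : IntegrableOn (aFun w s) (Ioo (0:ℝ) 1) := by
  have h := (integrable_sq (w, s))
  unfold sqMeasure at h
  have h2 := (h.integral_prod_left).const_mul w
  refine IntegrableOn.congr_fun (f := fun t => w * ∫ u in Ioo (0:ℝ) 1,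
    cc (t, u) * Complex.exp (ll (t, u) (w, s))) h2 (fun t ht => ?_) measurableSet_Ioo
  exact inner_integral w s ht

/-- One half of `G`. -/
noncomputable def AA (w s : ℂ) : ℂ := ∫ t in Ioo (0:ℝ) 1, aFun w s t

lemma AA_eq (w s : ℂ) :
    AA w s = w * ∫ x, cc x * Complex.exp (ll x (w, s)) ∂sqMeasure := by
  have h := (integrable_sq (w, s))
  unfold sqMeasure at h ⊢
  rw [integral_prod _ h, ← integral_const_mul]
  unfold AA
  exact setIntegral_congr_fun measurableSet_Ioo fun t ht => (inner_integral w s ht).symm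

lemma AA_analytic : AnalyticOn ℂ (fun p : ℂ × ℂ => AA p.1 p.2) univ := by
  have h := analytic_integral_exp aesm_cc aesm_ll hint_sq
  have h2 := (analyticOn_fst (𝕜 := ℂ) (E := ℂ) (F := ℂ) (t := univ)).mul h
  refine h2.congr fun p _ => ?_
  exact AA_eq p.1 p.2

lemma G_eq (w s : ℂ) : G w s = AA w s + AA w (w - s) := by
  unfold AA
  rw [← integral_add (aFun_integrable w s) (aFun_integrable w (w - s))]
  unfold G
  congr 1
  ext t
  unfold aFun
  ring

lemma G_analytic : AnalyticOn ℂ (fun p : ℂ × ℂ => G p.1 p.2) univ := by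
  simp_rw [G_eq]
  refine AA_analytic.add ?_
  exact AA_analytic.comp (f := fun p : ℂ × ℂ => AA p.1 p.2) (g := fun p : ℂ × ℂ => (p.1, p.1 - p.2))
    (analyticOn_fst.prod (analyticOn_fst.sub analyticOn_snd)) (fun _ _ => mem_univ _)

/-- The original integrand. -/
noncomputable def zFun (w s : ℂ) (t : ℝ) : ℂ :=
  ((theta (t^2) : ℂ)) ^ s * ((theta (1/t^2) : ℂ)) ^ (w - s) / t

lemma zFun_eq (w s : ℂ) {t : ℝ} (ht : 0 < t) :
    zFun w s t = aFun w s t + (t : ℂ) ^ (-s - 1) := by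
  have ht0 : (t : ℂ) ≠ 0 := by exact_mod_cast ht.ne'
  have h1 := one_le_theta (x := 1/t^2) (by positivity)
  have h2 : (theta (t^2) : ℂ) ^ s = (t : ℂ) ^ (-s) * (theta (1/t^2) : ℂ) ^ s := by
    rw [theta_feq ht, Complex.ofReal_mul,
      Complex.mul_cpow_ofReal_nonneg (by positivity) (by linarith), Complex.ofReal_inv,
      Complex.inv_cpow _ _ (by rw [Complex.arg_ofReal_of_nonneg ht.le]; exact Real.pi_pos.ne),
      Complex.cpow_neg]
  have h3 : (theta (1/t^2) : ℂ) ≠ 0 := by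
    rw [Complex.ofReal_ne_zero]; linarith
  unfold zFun aFun
  rw [h2, Complex.cpow_sub _ _ h3, Complex.cpow_sub _ _ ht0, Complex.cpow_one]
  have : (theta (1/t^2) : ℂ) ^ s ≠ 0 :=
    fun h => h3 ((Complex.cpow_eq_zero_iff _ _).mp h).1
  field_simp
  ring

lemma zFun_inv (w s : ℂ) {t : ℝ} (ht : 0 < t) :
    |-(t^2)⁻¹| • zFun w s t⁻¹ = zFun w (w - s) t := by
  have ht0 : (t : ℂ) ≠ 0 := by exact_mod_cast ht.ne'
  unfold zFun
  rw [abs_neg, abs_of_pos (by positivity), Complex.real_smul]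
  have e1 : (t⁻¹)^2 = 1/t^2 := by field_simp
  have e2 : 1/(t⁻¹)^2 = t^2 := by field_simp
  rw [e2, e1, sub_sub_cancel]
  push_cast
  field_simp

lemma cpow_int {s : ℂ} (hs : s.re < 0) :
    IntegrableOn (fun t : ℝ => (t : ℂ) ^ (-s - 1)) (Ioo (0:ℝ) 1) ∧
    ∫ t in Ioo (0:ℝ) 1, (t : ℂ) ^ (-s - 1) = -1/s := by
  have hr : -1 < (-s - 1).re := by simp; linarith
  have hs0 : s ≠ 0 := by rintro rfl; simp at hs
  constructor
  · have := intervalIntegral.intervalIntegrable_cpow' (a := 0) (b := 1) hr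
    rw [intervalIntegrable_iff_integrableOn_Ioo_of_le zero_le_one] at this
    exact this
  · rw [← integral_Ioc_eq_integral_Ioo, ← intervalIntegral.integral_of_le zero_le_one,
      integral_cpow (Or.inl hr)]
    have : -s - 1 + 1 = -s := by ring
    rw [this]
    simp [Complex.zero_cpow, hs0]
    field_simp

lemma zFun_int (w s : ℂ) (hs : s.re < 0) :
    IntegrableOn (zFun w s) (Ioo (0:ℝ) 1) ∧
    ∫ t in Ioo (0:ℝ) 1, zFun w s t = AA w s + -1/s := by
  obtain ⟨i1, i2⟩ := cpow_int hs
  have hA := aFun_integrable w s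
  constructor
  · refine IntegrableOn.congr_fun (hA.add i1) (fun t ht => ?_) measurableSet_Ioo
    exact (zFun_eq w s ht.1).symm
  · rw [← i2, AA, ← integral_add hA i1]
    exact setIntegral_congr_fun measurableSet_Ioo fun t ht => zFun_eq w s ht.1

lemma image_inv_Ioo01 : (fun t : ℝ => t⁻¹) '' Ioo (0:ℝ) 1 = Ioi 1 := by
  ext y
  constructor
  · rintro ⟨t, ⟨h0, h1⟩, rfl⟩
    exact (one_lt_inv₀ h0).mpr h1
  · intro hy
    have hy' : (1:ℝ) < y := hy
    exact ⟨y⁻¹, ⟨by positivity, inv_lt_one_of_one_lt₀ hy'⟩, inv_inv y⟩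

lemma zFun_int_Ioi (w s : ℂ) (hs : (w - s).re < 0) :
    IntegrableOn (zFun w s) (Ioi 1) ∧
    ∫ t in Ioi (1:ℝ), zFun w s t = AA w (w - s) + -1/(w - s) := by
  obtain ⟨i1, i2⟩ := zFun_int w (w - s) hs
  have hd : ∀ x ∈ Ioo (0:ℝ) 1,
      HasDerivWithinAt (fun t : ℝ => t⁻¹) (-(x^2)⁻¹) (Ioo (0:ℝ) 1) x := fun x hx =>
    (hasDerivAt_inv hx.1.ne').hasDerivWithinAt
  have hinj : InjOn (fun t : ℝ => t⁻¹) (Ioo (0:ℝ) 1) := inv_injective.injOn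
  rw [← image_inv_Ioo01,
    integrableOn_image_iff_integrableOn_abs_deriv_smul measurableSet_Ioo hd hinj,
    integral_image_eq_integral_abs_deriv_smul measurableSet_Ioo hd hinj, ← i2]
  constructor
  · exact i1.congr_fun (fun t ht => (zFun_inv w s ht.1).symm) measurableSet_Ioo
  · exact setIntegral_congr_fun measurableSet_Ioo fun t ht => zFun_inv w s ht.1

/-- the integral `G` is entire on `ℂ²`; for `Re(w) < Re(s) < 0` the original
integral equals `-1/s + 1/(s-w) + G(w,s)`; and this meromorphic expression is invariant
under `s ↦ w - s` whenever `s ≠ 0` and `s ≠ w`. -/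
theorem Z_meromorphic_continuation :
    AnalyticOn ℂ (fun p : ℂ × ℂ => G p.1 p.2) Set.univ ∧
    (∀ w s : ℂ, w.re < s.re → s.re < 0 →
      (∫ t in Set.Ioi (0:ℝ), ((theta (t^2) : ℂ)) ^ s * ((theta (1/t^2) : ℂ)) ^ (w - s) / t)
        = -1/s + 1/(s - w) + G w s) ∧
    (∀ w s : ℂ, s ≠ 0 → s ≠ w →
      -1/s + 1/(s - w) + G w s
        = -1/(w - s) + 1/((w - s) - w) + G w (w - s)) := by 
  refine ⟨G_analytic, ?_, ?_⟩
  · intro w s hws hs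
    obtain ⟨a1, a2⟩ := zFun_int w s hs
    obtain ⟨b1, b2⟩ := zFun_int_Ioi w s (by rw [Complex.sub_re]; linarith)
    have hU : Set.Ioi (0:ℝ) = Set.Ioc 0 1 ∪ Set.Ioi 1 :=
      (Set.Ioc_union_Ioi_eq_Ioi zero_le_one).symm
    change ∫ t in Set.Ioi (0:ℝ), zFun w s t = _
    rw [hU, setIntegral_union (Set.Ioc_disjoint_Ioi le_rfl) measurableSet_Ioi
      (by rw [integrableOn_Ioc_iff_integrableOn_Ioo]; exact a1) b1,
      integral_Ioc_eq_integral_Ioo, a2, b2, G_eq]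
    have : -1 / (w - s) = 1 / (s - w) := by
      rw [← neg_sub s w, neg_div_neg_eq]
    rw [this]
    ring
  · intro w s _ _
    rw [G_eq, G_eq, sub_sub_cancel]
    have h1 : -1 / (w - s) = 1 / (s - w) := by
      rw [← neg_sub s w, neg_div_neg_eq]
    have h2 : 1 / (w - s - w) = -1 / s := by
      have : w - s - w = -s := by ring
      rw [this, div_neg, neg_div]
    rw [h1, h2]
    ring
end

section
/- For each integer m ≥ 1, the polynomial c_m*(w) := (-1)^m m! c_m(-w) has nonnegative integer coefficients, leading term 2^m w^m, and zero constant term, where c_m(w) are the Fourier coefficients of θ^w. -/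
/-- The "binomial coefficient" polynomial `C(w, j) = w(w-1)⋯(w-j+1)/j!` in `ℚ[w]`. -/
noncomputable def binomPoly (j : ℕ) : Polynomial ℚ :=
  Polynomial.C ((j.factorial : ℚ)⁻¹) * ∏ i ∈ Finset.range j, (Polynomial.X - Polynomial.C (i : ℚ))

/-- `repCount j m` is the number of `j`-tuples of positive integers whose squares sum to `m`. -/
def repCount (j m : ℕ) : ℕ :=
  (Finset.univ.filter (fun f : Fin j → Fin (m + 1) =>
    (∀ i, 1 ≤ (f i).1) ∧ ∑ i, ((f i).1)^2 = m)).card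

/-- `thetaCoeff m = c_m(w)`, the `m`-th Fourier coefficient of `θ^w`, defined via the
binomial expansion `ϑ(q)^w = 1 + ∑_{j≥1} C(w,j) 2^j (∑_{n≥1} q^{n²})^j`. -/
noncomputable def thetaCoeff (m : ℕ) : Polynomial ℚ :=
  ∑ j ∈ Finset.Icc 1 m, ((2:ℚ)^j * (repCount j m : ℚ)) • binomPoly j

/-- `c_m^*(w) := (-1)^m m! c_m(-w)`. -/
noncomputable def thetaCoeffStar (m : ℕ) : Polynomial ℚ :=
  Polynomial.C ((-1)^m * (m.factorial : ℚ)) * (thetaCoeff m).comp (-Polynomial.X)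

namespace ThetaAux

open PowerSeries

/-- The Euler operator `q d/dq`. -/
noncomputable def eul (f : ℚ⟦X⟧) : ℚ⟦X⟧ := X * derivative ℚ f

lemma coeff_eul (f : ℚ⟦X⟧) (m : ℕ) : coeff m (eul f) = m * coeff m f := by
  unfold eul
  cases m with
  | zero => simp
  | succ n =>
    rw [coeff_succ_X_mul, coeff_derivative]
    push_cast; ring

lemma eul_add (f g : ℚ⟦X⟧) : eul (f + g) = eul f + eul g := by
  simp [eul, mul_add]

lemma eul_mul (f g : ℚ⟦X⟧) : eul (f * g) = f * eul g + g * eul f := by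
  simp only [eul, Derivation.leibniz, smul_eq_mul]; ring

lemma eul_one : eul 1 = 0 := by simp [eul]

lemma eul_pow (f : ℚ⟦X⟧) (n : ℕ) : f * eul (f ^ n) = n * eul f * f ^ n := by
  induction n with
  | zero => simp [eul_one]
  | succ n ih =>
    rw [pow_succ, eul_mul, mul_add, mul_left_comm f f, mul_left_comm f f, ih]
    push_cast; ring

lemma eul_X_pow (k : ℕ) : eul (X ^ k) = (k : ℚ⟦X⟧) * X ^ k := by
  ext m
  rw [coeff_eul]
  have : ((k : ℕ) : ℚ⟦X⟧) = C (k : ℚ) := by simp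
  rw [this, coeff_C_mul, coeff_X_pow]
  split_ifs with h <;> simp [h]

/-- Power series with natural number coefficients. -/
noncomputable def NS : Subsemiring ℚ⟦X⟧ := (PowerSeries.map (Nat.castRingHom ℚ)).rangeS

lemma NS_coeff {f : ℚ⟦X⟧} (hf : f ∈ NS) (m : ℕ) : ∃ n : ℕ, coeff m f = n := by
  obtain ⟨g, rfl⟩ := hf
  exact ⟨coeff m g, by simp⟩

lemma X_mem_NS : (X : ℚ⟦X⟧) ∈ NS := ⟨X, by simp⟩

/-- inverse of `1 + X^k` -/
noncomputable def u (k : ℕ) : ℚ⟦X⟧ := (1 + X ^ k)⁻¹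

lemma u_spec (k : ℕ) : (1 + X ^ k) * u k = 1 := by
  apply PowerSeries.mul_inv_cancel
  rcases Nat.eq_zero_or_pos k with rfl | h
  · simp
  · simp [h.ne']

noncomputable def r (k : ℕ) : ℚ⟦X⟧ := (1 - X ^ k) * u k

lemma exists_geom (j : ℕ) (hj : 0 < j) : ∃ g ∈ NS, (1 - X ^ j) * g = 1 := by
  refine ⟨mk fun m => if j ∣ m then 1 else 0, ⟨mk fun m => if j ∣ m then 1 else 0, ?_⟩, ?_⟩
  · ext m; simp
  · ext m
    rw [sub_mul, one_mul, map_sub, coeff_X_pow_mul', coeff_mk, coeff_one]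
    by_cases h : j ≤ m
    · rw [if_pos h, coeff_mk, if_neg (by omega : m ≠ 0)]
      have : j ∣ m - j ↔ j ∣ m := (Nat.dvd_sub_iff_left h dvd_rfl)
      simp [this]
    · rw [if_neg h]
      by_cases h0 : m = 0
      · simp [h0]
      · have : ¬ j ∣ m := fun hd => h (Nat.le_of_dvd (by omega) hd)
        simp [h0, this]

lemma eul_r (k : ℕ) (hk : 0 < k) : ∃ K ∈ NS, - eul (r k) = K * r k := by
  obtain ⟨g, hg, hg1⟩ := exists_geom (2 * k) (by omega)
  refine ⟨2 * (k : ℚ⟦X⟧) * X ^ k * g, ?_, ?_⟩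
  · refine mul_mem (mul_mem (mul_mem ?_ (natCast_mem _ _)) (pow_mem X_mem_NS _)) hg
    exact_mod_cast natCast_mem NS 2
  · have hu := u_spec k
    have h1 : (1 + X ^ k) * r k = 1 - X ^ k := by
      unfold r; linear_combination (1 - X ^ k) * hu
    have e1 : eul (1 + X ^ k) = (k : ℚ⟦X⟧) * X ^ k := by rw [eul_add, eul_one, eul_X_pow, zero_add]
    have e2 : eul (1 - X ^ k) = - ((k : ℚ⟦X⟧) * X ^ k) := by
      have : eul ((1 - X ^ k) + X ^ k) = 0 := by simpa using eul_one
      rw [eul_add, eul_X_pow] at this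
      linear_combination this
    have h2 := congrArg eul h1
    rw [eul_mul, e1, e2] at h2
    have hg2 : (1 - X ^ k) * g = u k := by
      have : X ^ (2 * k) = (X ^ k * X ^ k : ℚ⟦X⟧) := by ring
      rw [this] at hg1
      linear_combination u k * hg1 - (1 - X ^ k) * g * hu
    have h3 : eul (r k) = - (2 * (k : ℚ⟦X⟧) * X ^ k * (u k) ^ 2) := by
      have h4 : eul (r k) = u k * (-((k : ℚ⟦X⟧) * X ^ k) - r k * ((k : ℚ⟦X⟧) * X ^ k)) := by
        linear_combination u k * h2 - eul (r k) * hu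
      rw [h4, r]
      linear_combination ((k : ℚ⟦X⟧) * X ^ k * u k) * hu
    rw [h3, r]
    linear_combination - 2 * (k : ℚ⟦X⟧) * X ^ k * u k * hg2

noncomputable def Q (s n : ℕ) : ℚ⟦X⟧ := ∏ k ∈ Finset.Ico (s + 1) (n + 1), r k

lemma Q_self (n : ℕ) : Q n n = 1 := by simp [Q]

lemma Q_succ (s n : ℕ) (h : s ≤ n) : Q s (n + 1) = Q s n * r (n + 1) := by
  unfold Q
  rw [Finset.prod_Ico_succ_top (by omega)]

lemma Q_left (s n : ℕ) (h : s < n) : Q s n = r (s + 1) * Q (s + 1) n := by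
  unfold Q
  rw [Finset.prod_eq_prod_Ico_succ_bot (by omega)]

lemma eul_Q (n : ℕ) : ∃ K ∈ NS, - eul (Q 0 n) = K * Q 0 n := by
  induction n with
  | zero => exact ⟨0, zero_mem _, by simp [Q_self, eul_one]⟩
  | succ n ih =>
    obtain ⟨K, hK, h⟩ := ih
    obtain ⟨K', hK', h'⟩ := eul_r (n + 1) (by omega)
    refine ⟨K + K', add_mem hK hK', ?_⟩
    rw [Q_succ _ _ (by omega), eul_mul]
    linear_combination r (n + 1) * h + Q 0 n * h'

lemma constantCoeff_Q (n : ℕ) : constantCoeff (Q 0 n) = 1 := by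
  unfold Q
  rw [map_prod]
  apply Finset.prod_eq_one
  intro k hk
  have hk : k ≠ 0 := by simp at hk; omega
  have := congrArg constantCoeff (u_spec k)
  simp [hk] at this
  simp [r, hk, this]

/-- Shanks' sum. -/
noncomputable def F (n : ℕ) : ℚ⟦X⟧ :=
  ∑ s ∈ Finset.range (n + 1), (-1) ^ s * (2 * u s) * Q s n * X ^ (s * (n + 1))

noncomputable def T (n : ℕ) : ℕ → ℚ⟦X⟧
  | 0 => 0
  | j + 1 => Q j n * X ^ ((j + 1) * (n + 1))

lemma T_eq (n j : ℕ) (h : j ≤ n) : T n j = r j * Q j n * X ^ (j * (n + 1)) := by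
  cases j with
  | zero => simp [T, r]
  | succ j => rw [T, Q_left _ _ h]

lemma tele (n j : ℕ) (h : j ≤ n + 1) :
    ∑ s ∈ Finset.range j, ((-1) ^ s * (2 * u s) * Q s (n + 1) * X ^ (s * (n + 2))
      - (-1) ^ s * (2 * u s) * Q s n * X ^ (s * (n + 1))) = 2 * u (n + 1) * (-1) ^ j * T n j := by
  induction j with
  | zero => simp [T]
  | succ j ih =>
    rw [Finset.sum_range_succ, ih (by omega), T_eq _ _ (by omega), T, Q_succ _ _ (by omega)]
    have h1 := u_spec j
    have h2 := u_spec (n + 1)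
    have e1 : (X : ℚ⟦X⟧) ^ (j * (n + 2)) = X ^ (j * (n + 1)) * X ^ j := by
      rw [← pow_add]; congr 1
    have e2 : (X : ℚ⟦X⟧) ^ ((j + 1) * (n + 1)) = X ^ (j * (n + 1)) * X ^ (n + 1) := by
      rw [← pow_add]; congr 1; ring
    rw [e1, e2, r, r]
    generalize (X : ℚ⟦X⟧) ^ (j * (n + 1)) = A
    generalize (X : ℚ⟦X⟧) ^ j = B at *
    generalize (X : ℚ⟦X⟧) ^ (n + 1) = D at *
    generalize u j = v at *
    generalize u (n + 1) = w at *
    generalize Q j n = q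
    rw [pow_succ]
    generalize ((-1) ^ j : ℚ⟦X⟧) = e
    linear_combination (2 * e * q * A) * (v * h2 - D * w * h1)

lemma F_succ (n : ℕ) : F (n + 1) = F n + 2 * (-1) ^ (n + 1) * X ^ ((n + 1) ^ 2) := by
  have h := tele n (n + 1) le_rfl
  rw [Finset.sum_sub_distrib] at h
  have h2 := u_spec (n + 1)
  unfold F
  rw [Finset.sum_range_succ, Q_self]
  rw [T, Q_self] at h
  have e1 : (X : ℚ⟦X⟧) ^ ((n + 1) * (n + 1 + 1)) = X ^ ((n + 1) ^ 2) * X ^ (n + 1) := by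
    rw [← pow_add]; congr 1; ring
  have e2 : (n + 1) * (n + 1) = (n + 1) ^ 2 := by ring
  rw [e2] at h
  rw [e1]
  linear_combination h + 2 * (-1) ^ (n + 1) * X ^ ((n + 1) ^ 2) * h2

lemma F_eq (n : ℕ) :
    F n = 1 + 2 * ∑ s ∈ Finset.range n, (-1) ^ (s + 1) * X ^ ((s + 1) ^ 2) := by
  induction n with
  | zero =>
    have := u_spec 0
    simp [F, Q_self]
    linear_combination this
  | succ n ih => rw [F_succ, ih, Finset.sum_range_succ]; ring

lemma F_mod (n : ℕ) : X ^ (n + 1) ∣ F n - Q 0 n := by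
  unfold F
  have h0 : (2 * u 0 : ℚ⟦X⟧) = 1 := by
    have := u_spec 0
    linear_combination this
  rw [Finset.sum_range_succ', h0]
  simp only [pow_zero, zero_mul, one_mul, mul_one, add_sub_cancel_right]
  apply Finset.dvd_sum
  intro s _
  apply Dvd.dvd.mul_left
  exact pow_dvd_pow _ (by nlinarith)

noncomputable def hser : ℚ⟦X⟧ := mk fun m => if m ≠ 0 ∧ IsSquare m then 1 else 0

/-- `ϑ(q)` -/
noncomputable def theta : ℚ⟦X⟧ := 1 + 2 * hser

/-- `ϑ(-q)` -/
noncomputable def thm : ℚ⟦X⟧ := evalNegHom theta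

lemma coeff_evalNeg (f : ℚ⟦X⟧) (m : ℕ) : coeff m (evalNegHom f) = (-1) ^ m * coeff m f := by
  simp [evalNegHom]

lemma hser_mod (n : ℕ) : X ^ (n + 1) ∣ hser - ∑ s ∈ Finset.range n, X ^ ((s + 1) ^ 2) := by
  rw [X_pow_dvd_iff]
  intro m hm
  rw [map_sub, map_sum, hser, coeff_mk, sub_eq_zero]
  simp only [coeff_X_pow]
  split_ifs with h
  · obtain ⟨h0, a, rfl⟩ := h
    have ha : a ≠ 0 := by rintro rfl; simp at h0
    rw [Finset.sum_eq_single (a - 1)]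
    · rw [if_pos]; rw [Nat.sub_add_cancel (by omega)]; ring
    · intro b _ hb
      rw [if_neg]
      intro hh
      apply hb
      have : a = b + 1 := by nlinarith
      omega
    · intro hh
      exfalso; apply hh
      rw [Finset.mem_range]
      have : a ≤ a * a := Nat.le_mul_self a
      omega
  · symm
    apply Finset.sum_eq_zero
    intro s _
    rw [if_neg]
    rintro rfl
    exact h ⟨by positivity, s + 1, by ring⟩

lemma thm_mod (n : ℕ) : X ^ (n + 1) ∣ thm - Q 0 n := by
  have h1 : X ^ (n + 1) ∣ thm - F n := by
    obtain ⟨g, hg⟩ := hser_mod n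
    have h2 : hser = ∑ s ∈ Finset.range n, X ^ ((s + 1) ^ 2) + X ^ (n + 1) * g := by
      linear_combination hg
    refine ⟨2 * (-1) ^ (n + 1) * evalNegHom g, ?_⟩
    have hs : ∀ s : ℕ, (-X : ℚ⟦X⟧) ^ ((s + 1) ^ 2) = (-1) ^ (s + 1) * X ^ ((s + 1) ^ 2) := by
      intro s
      rw [neg_pow]
      congr 1
      rw [pow_two, pow_mul]
      rcases neg_one_pow_eq_or ℚ⟦X⟧ (s + 1) with h | h <;> rw [h]
      · simp
      · exact h
    have h3 : thm = 1 + 2 * (∑ s ∈ Finset.range n, (-1) ^ (s + 1) * X ^ ((s + 1) ^ 2)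
        + (-1) ^ (n + 1) * X ^ (n + 1) * evalNegHom g) := by
      rw [thm, theta, h2]
      simp only [map_add, map_mul, map_one, map_sum, map_pow, evalNegHom_X, map_ofNat, hs]
      rw [neg_pow X (n + 1)]
    rw [h3, F_eq]; ring
  have := dvd_add h1 (F_mod n)
  simpa using this

lemma coeff_zero_thm : constantCoeff thm = 1 := by
  rw [← coeff_zero_eq_constantCoeff_apply, thm, coeff_evalNeg]
  simp [theta, hser]

noncomputable def L : ℚ⟦X⟧ := - eul thm * thm⁻¹

lemma L_spec : L * thm = - eul thm := by
  rw [L, mul_assoc, PowerSeries.inv_mul_cancel _ (by rw [coeff_zero_thm]; norm_num), mul_one]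

lemma L_nat (n : ℕ) : ∃ l : ℕ, coeff n L = l := by
  obtain ⟨K, hK, h⟩ := eul_Q n
  obtain ⟨R, hR⟩ := thm_mod n
  have hR' : thm = Q 0 n + X ^ (n + 1) * R := by linear_combination hR
  have hL := L_spec
  have hdvd : X ^ (n + 1) ∣ (L - K) * Q 0 n := by
    refine ⟨- eul R - (n + 1 : ℕ) * R - L * R, ?_⟩
    rw [hR', eul_add, eul_mul, eul_X_pow] at hL
    linear_combination hL + h
  have hq := PowerSeries.mul_inv_cancel (Q 0 n) (by rw [constantCoeff_Q]; norm_num)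
  have hd2 : X ^ (n + 1) ∣ L - K := by
    have := hdvd.mul_right (Q 0 n)⁻¹
    rwa [mul_assoc, hq, mul_one] at this
  have := X_pow_dvd_iff.1 hd2 n (by omega)
  rw [map_sub, sub_eq_zero] at this
  rw [this]
  exact NS_coeff hK n

lemma L_zero : coeff 0 L = 0 := by
  have := congrArg (coeff 0) L_spec
  rw [map_neg, coeff_eul] at this
  simpa [coeff_zero_thm] using this

lemma L_one : coeff 1 L = 2 := by
  have := congrArg (coeff 1) L_spec
  rw [map_neg, coeff_eul, coeff_mul, Finset.Nat.sum_antidiagonal_succ] at this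
  have h0 : coeff 0 thm = 1 := by rw [coeff_zero_eq_constantCoeff_apply, coeff_zero_thm]
  have h1 : coeff 1 thm = -2 := by
    have e : (2 : ℚ⟦X⟧) = C (2 : ℚ) := (map_ofNat C 2).symm
    rw [thm, coeff_evalNeg, theta, map_add, e, coeff_C_mul, hser, coeff_mk]
    simp [coeff_one]
  simp only [Finset.Nat.antidiagonal_zero, Finset.sum_singleton, L_zero, h0, h1] at this
  norm_num at this
  exact this

lemma coeff_hser_pow (j m : ℕ) : coeff m (hser ^ j) = repCount j m := by
  have h1 := (hser_mod m).trans (sub_dvd_pow_sub_pow _ _ j)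
  have h2 := X_pow_dvd_iff.1 h1 m (by omega)
  rw [map_sub, sub_eq_zero] at h2
  have h3 : ∑ s ∈ Finset.range m, (X : ℚ⟦X⟧) ^ ((s + 1) ^ 2)
      = ∑ a : Fin (m + 1), if 1 ≤ a.1 then (X : ℚ⟦X⟧) ^ (a.1 ^ 2) else 0 := by
    rw [Fin.sum_univ_eq_sum_range (fun a => if 1 ≤ a then (X : ℚ⟦X⟧) ^ (a ^ 2) else 0),
      Finset.sum_range_succ']
    simp
  rw [h2, h3, Fintype.sum_pow, map_sum, repCount, Finset.card_filter]
  push_cast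
  apply Finset.sum_congr rfl
  intro f _
  rw [Finset.prod_ite_zero, Finset.prod_pow_eq_pow_sum]
  by_cases h : ∀ i, 1 ≤ (f i).1
  · simp [h, coeff_X_pow, eq_comm]
  · simp [h]

lemma repCount_zero (j m : ℕ) (h : m < j) : repCount j m = 0 := by
  have hX : (X : ℚ⟦X⟧) ∣ hser := by
    rw [X_dvd_iff, ← coeff_zero_eq_constantCoeff_apply, hser, coeff_mk]; simp
  have := X_pow_dvd_iff.1 (pow_dvd_pow_of_dvd hX j) m h
  rw [coeff_hser_pow] at this
  exact_mod_cast this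

lemma binom_eval (j N : ℕ) : (binomPoly j).eval (N : ℚ) = (N.choose j : ℚ) := by
  have h : ∏ i ∈ Finset.range j, ((N : ℚ) - i) = (N.descFactorial j : ℚ) := by
    rw [← descPochhammer_eval_eq_descFactorial ℚ N j, descPochhammer_eval_eq_prod_range]
  rw [binomPoly, Polynomial.eval_mul, Polynomial.eval_prod]
  simp only [Polynomial.eval_C, Polynomial.eval_sub, Polynomial.eval_X]
  rw [h, Nat.descFactorial_eq_factorial_mul_choose]
  have := Nat.factorial_ne_zero j
  push_cast
  field_simp

lemma repCount_zero_left (m : ℕ) (h : m ≠ 0) : repCount 0 m = 0 := by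
  have := coeff_hser_pow 0 m
  rw [pow_zero, coeff_one, if_neg h] at this
  exact_mod_cast this.symm

/-- `c_m(w)` including `c_0 = 1`. -/
noncomputable def c (m : ℕ) : Polynomial ℚ := if m = 0 then 1 else thetaCoeff m

lemma c_eval (m N : ℕ) : (c m).eval (N : ℚ) = coeff m (theta ^ N) := by
  unfold c
  split_ifs with h
  · subst h
    simp [theta, hser]
  · rw [theta, add_comm, add_pow, map_sum, thetaCoeff, Polynomial.eval_finset_sum]
    have e : ∀ j, coeff m ((2 * hser) ^ j * 1 ^ (N - j) * ((N.choose j : ℕ) : ℚ⟦X⟧))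
        = 2 ^ j * (repCount j m : ℚ) * (N.choose j : ℚ) := by
      intro j
      have e1 : (2 * hser) ^ j * 1 ^ (N - j) * ((N.choose j : ℕ) : ℚ⟦X⟧)
          = C ((2 : ℚ) ^ j * (N.choose j : ℚ)) * hser ^ j := by
        simp only [map_mul, map_pow, map_ofNat, map_natCast, one_pow]; ring
      rw [e1, coeff_C_mul, coeff_hser_pow]; ring
    simp only [e, Polynomial.eval_smul, binom_eval, smul_eq_mul]
    have s1 : Finset.Icc 1 m ⊆ Finset.range (N + m + 1) := by
      intro x; simp; omega
    have s2 : Finset.range (N + 1) ⊆ Finset.range (N + m + 1) := by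
      intro x; simp; omega
    rw [Finset.sum_subset s1, Finset.sum_subset s2]
    · intro x _ hx
      rw [Nat.choose_eq_zero_of_lt (by simpa using hx)]; simp
    · intro x _ hx
      have : repCount x m = 0 := by
        rcases Nat.eq_zero_or_pos x with rfl | hp
        · exact repCount_zero_left m h
        · apply repCount_zero
          simp at hx
          omega
      simp [this]

/-- `(-1)^m c_m(-w)` -/
noncomputable def a (m : ℕ) : Polynomial ℚ := Polynomial.C ((-1) ^ m) * (c m).comp (-Polynomial.X)

lemma a_eval (m N : ℕ) : (a m).eval (-(N : ℚ)) = coeff m (thm ^ N) := by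
  rw [a, thm, ← map_pow, coeff_evalNeg, ← c_eval]
  simp

lemma thm_pow_rec (N : ℕ) : eul (thm ^ N) = - N * (thm ^ N * L) := by
  have h := eul_pow thm N
  have h2 := L_spec
  have h3 := PowerSeries.inv_mul_cancel thm (by rw [coeff_zero_thm]; norm_num)
  linear_combination thm⁻¹ * h - (eul (thm ^ N) + N * thm ^ N * L) * h3
    + thm⁻¹ * N * thm ^ N * h2

lemma a_rec (m : ℕ) : Polynomial.C ((m + 1 : ℕ) : ℚ) * a (m + 1)
    = Polynomial.X * ∑ j ∈ Finset.range (m + 1), Polynomial.C (coeff (m + 1 - j) L) * a j := by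
  apply Polynomial.eq_of_infinite_eval_eq
  apply Set.infinite_of_injective_forall_mem (f := fun N : ℕ => -(N : ℚ))
  · intro x y h; simpa using h
  · intro N
    have h := congrArg (coeff (m + 1)) (thm_pow_rec N)
    have e : (-(N : ℚ⟦X⟧)) = C (-(N : ℚ)) := by simp
    rw [coeff_eul, e, coeff_C_mul, coeff_mul,
      Finset.Nat.sum_antidiagonal_eq_sum_range_succ
        (fun i j => coeff i (thm ^ N) * coeff j L), Finset.sum_range_succ, Nat.sub_self, L_zero,
        mul_zero, add_zero] at h
    simp only [Set.mem_setOf_eq, Polynomial.eval_mul, Polynomial.eval_C, Polynomial.eval_X,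
      Polynomial.eval_finset_sum, a_eval]
    rw [h]
    congr 1
    exact Finset.sum_congr rfl fun _ _ => mul_comm _ _

/-- `m! (-1)^m c_m(-w)` -/
noncomputable def b (m : ℕ) : Polynomial ℚ := Polynomial.C (m.factorial : ℚ) * a m

lemma b_zero : b 0 = 1 := by simp [b, a, c]

lemma b_rec (m : ℕ) : b (m + 1) = Polynomial.X *
    ∑ j ∈ Finset.range (m + 1),
      Polynomial.C (coeff (m + 1 - j) L * ((m.factorial / j.factorial : ℕ) : ℚ)) * b j := by
  have h := a_rec m
  have e : b (m + 1) = Polynomial.C (m.factorial : ℚ) *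
      (Polynomial.C ((m + 1 : ℕ) : ℚ) * a (m + 1)) := by
    rw [b, Nat.factorial_succ, ← mul_assoc, ← Polynomial.C_mul]
    push_cast; ring_nf
  rw [e, h, mul_left_comm, Finset.mul_sum]
  congr 1
  apply Finset.sum_congr rfl
  intro j hj
  have hd : j.factorial ∣ m.factorial :=
    Nat.factorial_dvd_factorial (by simp at hj; omega)
  have hm : (m.factorial : ℚ) = ((m.factorial / j.factorial : ℕ) : ℚ) * j.factorial := by
    rw [← Nat.cast_mul, Nat.div_mul_cancel hd]
  rw [b, hm]
  simp only [Polynomial.C_mul]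
  ring

lemma b_nat (m : ℕ) : b m ∈ (Polynomial.mapRingHom (Nat.castRingHom ℚ)).rangeS := by
  induction m using Nat.strong_induction_on with
  | _ m ih =>
    cases m with
    | zero => rw [b_zero]; exact one_mem _
    | succ m =>
      rw [b_rec]
      refine mul_mem ⟨Polynomial.X, by simp⟩ (sum_mem fun j hj => mul_mem ?_ ?_)
      · obtain ⟨l, hl⟩ := L_nat (m + 1 - j)
        rw [hl, ← Nat.cast_mul]
        exact ⟨Polynomial.C (l * (m.factorial / j.factorial)), by simp⟩
      · exact ih j (by simpa using hj)

lemma b_deg (m : ℕ) : (b m).natDegree ≤ m ∧ (b m).coeff m = 2 ^ m := by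
  induction m using Nat.strong_induction_on with
  | _ m ih =>
    cases m with
    | zero => rw [b_zero]; simp
    | succ m =>
      rw [b_rec]
      constructor
      · refine Polynomial.natDegree_mul_le.trans ?_
        rw [Polynomial.natDegree_X, add_comm]
        apply Nat.add_le_add_right
        apply Polynomial.natDegree_sum_le_of_forall_le
        intro j hj
        have hj : j < m + 1 := by simpa using hj
        refine (Polynomial.natDegree_C_mul_le _ _).trans ((ih j hj).1.trans (by omega))
      · rw [Polynomial.coeff_X_mul, Polynomial.finset_sum_coeff, Finset.sum_range_succ,
          Finset.sum_eq_zero, zero_add, Polynomial.coeff_C_mul, (ih m (by omega)).2,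
          Nat.div_self (Nat.factorial_pos m), Nat.add_sub_cancel_left, L_one]
        · push_cast; ring
        · intro j hj
          have hj : j < m := by simpa using hj
          rw [Polynomial.coeff_C_mul, Polynomial.coeff_eq_zero_of_natDegree_lt, mul_zero]
          exact lt_of_le_of_lt (ih j (by omega)).1 hj

lemma star_eq (m : ℕ) (hm : 1 ≤ m) : thetaCoeffStar m = b m := by
  rw [thetaCoeffStar, b, a, c, if_neg (by omega), Polynomial.C_mul]
  ring

end ThetaAux

/-- for `m ≥ 1`, `c_m^*(w)` has nonnegative integer coefficients,
leading term `2^m w^m`, and zero constant term. -/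
theorem thetaCoeffStar_nonneg (m : ℕ) (hm : 1 ≤ m) :
    (∀ k : ℕ, ∃ n : ℕ, (thetaCoeffStar m).coeff k = (n : ℚ)) ∧
    (thetaCoeffStar m).degree = m ∧
    (thetaCoeffStar m).leadingCoeff = 2^m ∧
    (thetaCoeffStar m).coeff 0 = 0 := by 
  rw [ThetaAux.star_eq m hm]
  obtain ⟨h1, h2⟩ := ThetaAux.b_deg m
  have hd : (ThetaAux.b m).natDegree = m :=
    le_antisymm h1 (Polynomial.le_natDegree_of_ne_zero (by rw [h2]; positivity))
  have hne : ThetaAux.b m ≠ 0 := by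
    intro h
    rw [h] at h2
    simp at h2
    exact absurd h2.symm (by positivity)
  refine ⟨fun k => ?_, ?_, ?_, ?_⟩
  · obtain ⟨p, hp⟩ := ThetaAux.b_nat m
    exact ⟨p.coeff k, by rw [← hp]; simp⟩
  · rw [Polynomial.degree_eq_natDegree hne, hd]
  · rw [Polynomial.leadingCoeff, hd, h2]
  · obtain ⟨n, rfl⟩ : ∃ n, m = n + 1 := ⟨m - 1, by omega⟩
    rw [ThetaAux.b_rec]
    simp
end

section
/- The Fourier coefficients c'_m of log θ, defined by log θ(t) = Σ_{m≥1} c'_m e^{-πmt}, are given by c'_m = 2σ_{-1}(m) - 5σ_{-1}(m/2) + 2σ_{-1}(m/4), where σ_{-1}(m) = Σ_{d|m} 1/d for positive integers m and σ_{-1}(x) = 0 if x is not a positive integer. -/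
/-- `σ₋₁(m) = ∑_{d ∣ m} 1/d` (equal to `0` for `m = 0`). -/
def sigmaNegOne (m : ℕ) : ℚ := ∑ d ∈ m.divisors, (1 : ℚ) / d

/-- `c'_m = 2σ₋₁(m) - 5σ₋₁(m/2) + 2σ₋₁(m/4)`, where `σ₋₁(x) = 0` if `x` is not a
positive integer. -/
def cPrime (m : ℕ) : ℚ :=
  2 * sigmaNegOne m - 5 * (if 2 ∣ m then sigmaNegOne (m / 2) else 0)
    + 2 * (if 4 ∣ m then sigmaNegOne (m / 4) else 0)

open Finset Filter Topology

/-- `∏_{k=1}^N (1 - p^k)` -/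
noncomputable def qP (p : ℝ) (N : ℕ) : ℝ := ∏ k ∈ range N, (1 - p ^ (k + 1))

lemma qP_succ (p : ℝ) (N : ℕ) : qP p (N + 1) = qP p N * (1 - p ^ (N + 1)) := by
  simp [qP, prod_range_succ]

lemma one_sub_pow_pos' {p : ℝ} (h0 : 0 < p) (h1 : p < 1) (k : ℕ) : 0 < 1 - p ^ (k + 1) := by
  have := pow_lt_one₀ h0.le h1 (Nat.add_one_ne_zero k)
  linarith

lemma qP_pos {p : ℝ} (h0 : 0 < p) (h1 : p < 1) (N : ℕ) : 0 < qP p N :=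
  prod_pos fun k _ => one_sub_pow_pos' h0 h1 k

/-- q-binomial theorem -/
lemma q_binomial {p : ℝ} (h0 : 0 < p) (h1 : p < 1) (x : ℝ) (N : ℕ) :
    ∏ k ∈ range N, (1 + x * p ^ k) =
      qP p N * ∑ a ∈ antidiagonal N, p ^ (a.2.choose 2) * x ^ a.2 / (qP p a.1 * qP p a.2) := by
  induction N with
  | zero => simp [qP]
  | succ N ih =>
    have key : (1 - p ^ (N + 1)) * ∑ a ∈ antidiagonal (N + 1),
        p ^ (a.2.choose 2) * x ^ a.2 / (qP p a.1 * qP p a.2) =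
        (1 + x * p ^ N) * ∑ a ∈ antidiagonal N,
          p ^ (a.2.choose 2) * x ^ a.2 / (qP p a.1 * qP p a.2) := by
      have e1 : (1 - p ^ (N + 1)) * ∑ a ∈ antidiagonal (N + 1),
          p ^ (a.2.choose 2) * x ^ a.2 / (qP p a.1 * qP p a.2) =
          ∑ a ∈ antidiagonal (N + 1), (1 - p ^ a.1) *
            (p ^ (a.2.choose 2) * x ^ a.2 / (qP p a.1 * qP p a.2)) +
          ∑ a ∈ antidiagonal (N + 1), p ^ a.1 * (1 - p ^ a.2) *
            (p ^ (a.2.choose 2) * x ^ a.2 / (qP p a.1 * qP p a.2)) := by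
        rw [mul_sum, ← sum_add_distrib]
        refine sum_congr rfl fun a ha => ?_
        rw [← HasAntidiagonal.mem_antidiagonal.mp ha, pow_add]
        ring
      rw [e1, Nat.sum_antidiagonal_succ, Nat.sum_antidiagonal_succ', add_mul, mul_sum, mul_sum]
      simp only [pow_zero, sub_self, zero_mul, mul_zero, zero_add, one_mul]
      congr 1
      · refine sum_congr rfl fun a ha => ?_
        rw [qP_succ]
        have h2 := (one_sub_pow_pos' h0 h1 a.1).ne'
        have h3 := (qP_pos h0 h1 a.1).ne'
        have h4 := (qP_pos h0 h1 a.2).ne'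
        field_simp
      · refine sum_congr rfl fun a ha => ?_
        rw [qP_succ, ← HasAntidiagonal.mem_antidiagonal.mp ha, Nat.choose_succ_succ' a.2 1, Nat.choose_one_right,
          pow_add p a.2 (a.2.choose (1 + 1)), pow_succ x]
        have h2 := (one_sub_pow_pos' h0 h1 a.2).ne'
        have h3 := (qP_pos h0 h1 a.1).ne'
        have h4 := (qP_pos h0 h1 a.2).ne'
        rw [pow_add p a.1 a.2]
        generalize 1 - p ^ (a.2 + 1) = w at *
        field_simp
    rw [prod_range_succ, ih, qP_succ, mul_assoc (qP p N) (1 - p ^ (N + 1)), key]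
    ring

lemma prod_aux {q : ℝ} (h0 : 0 < q) (n : ℕ) :
    ∏ k ∈ range (2 * n), (1 + q * (q ^ (2 * n))⁻¹ * (q ^ 2) ^ k) =
      (q ^ (n ^ 2))⁻¹ * (∏ k ∈ range n, (1 + q ^ (2 * k + 1))) ^ 2 := by
  have hq := h0.ne'
  rw [two_mul, prod_range_add]
  have e1 : ∏ k ∈ range n, (1 + q * (q ^ (n + n))⁻¹ * (q ^ 2) ^ (n + k)) =
      ∏ k ∈ range n, (1 + q ^ (2 * k + 1)) := by
    refine prod_congr rfl fun k _ => ?_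
    rw [← pow_mul, mul_add 2 n k, two_mul n, pow_add _ (n + n)]
    field_simp
    ring
  have e2 : ∏ k ∈ range n, (1 + q * (q ^ (n + n))⁻¹ * (q ^ 2) ^ k) =
      (q ^ (n ^ 2))⁻¹ * ∏ k ∈ range n, (1 + q ^ (2 * k + 1)) := by
    have e3 : (q ^ (n ^ 2)) = ∏ k ∈ range n, q ^ (2 * k + 1) := by
      rw [prod_pow_eq_pow_sum]
      congr 1
      clear e1
      induction n with
      | zero => simp
      | succ n ih => rw [sum_range_succ, ← ih]; ring
    rw [e3, ← prod_inv_distrib, ← prod_mul_distrib, ← prod_range_reflect]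
    refine prod_congr rfl fun k hk => ?_
    obtain ⟨j, rfl⟩ := Nat.exists_eq_add_of_lt (mem_range.mp hk)
    have : k + j + 1 - 1 - k = j := by omega
    rw [this]
    have e4 : q ^ (k + j + 1 + (k + j + 1)) = q * q ^ (2 * k + 1) * (q ^ 2) ^ j := by
      rw [← pow_mul]; ring
    rw [e4]
    field_simp
    ring
  rw [e1, e2]; ring

/-- summand of the finite triple product -/
noncomputable def fT (q : ℝ) (n : ℕ) (k : ℤ) : ℝ :=
  if k.natAbs ≤ n then
    q ^ (k.natAbs ^ 2) * (qP (q ^ 2) (2 * n) / 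
      (qP (q ^ 2) ((n : ℤ) - k).toNat * qP (q ^ 2) ((n : ℤ) + k).toNat))
  else 0

lemma finite_triple {q : ℝ} (h0 : 0 < q) (h1 : q < 1) (n : ℕ) :
    ∑' k : ℤ, fT q n k = (∏ k ∈ range n, (1 + q ^ (2 * k + 1))) ^ 2 := by
  have hq := h0.ne'
  have hA := prod_aux h0 n
  rw [q_binomial (by positivity) (pow_lt_one₀ h0.le h1 two_ne_zero)] at hA
  have hB : (∏ k ∈ range n, (1 + q ^ (2 * k + 1))) ^ 2 = q ^ (n ^ 2) *
    ((q ^ (n ^ 2))⁻¹ * (∏ k ∈ range n, (1 + q ^ (2 * k + 1))) ^ 2) := by field_simp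
  rw [hB, ← hA, mul_sum, mul_sum]
  rw [tsum_eq_sum (s := Icc (-(n : ℤ)) n)]
  · symm
    refine sum_bij (fun a _ => (a.2 : ℤ) - n) ?_ ?_ ?_ ?_
    · rintro ⟨i, j⟩ ha
      simp only [HasAntidiagonal.mem_antidiagonal, mem_Icc] at ha ⊢
      omega
    · rintro ⟨i, j⟩ ha ⟨i', j'⟩ ha' h
      simp only [HasAntidiagonal.mem_antidiagonal, Prod.mk.injEq] at *
      omega
    · intro k hk
      simp only [mem_Icc] at hk
      exact ⟨(((n : ℤ) - k).toNat, ((n : ℤ) + k).toNat), by simp only [HasAntidiagonal.mem_antidiagonal]; omega,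
        by simp only; omega⟩
    · rintro ⟨i, j⟩ ha
      simp only [HasAntidiagonal.mem_antidiagonal] at ha
      have e1 : ((n : ℤ) - ((j : ℤ) - n)).toNat = i := by omega
      have e2 : ((n : ℤ) + ((j : ℤ) - n)).toNat = j := by omega
      simp only [fT]
      rw [if_pos (by omega), e1, e2]
      have e3 : q ^ (n ^ 2) * ((q ^ 2) ^ (j.choose 2) * (q * (q ^ (2 * n))⁻¹) ^ j) =
          q ^ (((j : ℤ) - n).natAbs ^ 2) := by
        rw [← zpow_natCast q (((j : ℤ) - n).natAbs ^ 2)]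
        push_cast
        rw [sq_abs]
        have e4 : ((j.choose 2 : ℕ) : ℤ) * 2 = j * (j - 1) := by
          cases j with
          | zero => simp
          | succ j =>
            have := Nat.choose_two_right (j + 1)
            have h2 := Nat.triangle_succ j
            have h3 := Nat.div_mul_cancel (Nat.even_mul_pred_self (j + 1)).two_dvd
            rw [← this] at h3
            simp at h3
            push_cast
            zify at h3
            linarith
        have e5 : ((j : ℤ) - n) ^ 2 = n ^ 2 + (j.choose 2 : ℕ) * 2 + j - 2 * n * j := by
          rw [e4]; ring
        rw [e5, zpow_sub₀ hq, zpow_add₀ hq, zpow_add₀ hq, mul_pow, inv_pow, ← pow_mul, ← pow_mul]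
        norm_cast
        rw [mul_comm 2 (j.choose 2)]
        field_simp
      rw [← e3]
      ring
  · intro k hk
    rw [fT, if_neg]
    simp only [mem_Icc] at hk
    omega

lemma hasSum_congr_aux {f g : ℕ → ℝ} {a : ℝ} (h : ∀ m, f m = g m) (hf : HasSum f a) :
    HasSum g a := by
  rwa [← funext h]

/-- `∑_{k ≥ 1} log (1 - q^k)` -/
noncomputable def Lam (q : ℝ) : ℝ := ∑' k : ℕ, Real.log (1 - q ^ (k + 1))

lemma summable_pow_succ {q : ℝ} (h0 : 0 < q) (h1 : q < 1) : Summable fun k : ℕ => q ^ (k + 1) :=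
  (summable_nat_add_iff 1).mpr (summable_geometric_of_lt_one h0.le h1)

lemma hasSum_Lam {q : ℝ} (h0 : 0 < q) (h1 : q < 1) :
    HasSum (fun k : ℕ => Real.log (1 - q ^ (k + 1))) (Lam q) := by
  have := Real.summable_log_one_add_of_summable (summable_pow_succ h0 h1).neg
  simp only [← sub_eq_add_neg] at this
  exact this.hasSum

lemma lambert {q : ℝ} (h0 : 0 < q) (h1 : q < 1) :
    HasSum (fun m : ℕ => (sigmaNegOne m : ℝ) * q ^ m) (-Lam q) := by
  have hin : ∀ k : ℕ, HasSum (fun n : ℕ => (q ^ (k + 1)) ^ (n + 1) / ((n : ℝ) + 1))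
      (-Real.log (1 - q ^ (k + 1))) := fun k => by
    apply Real.hasSum_pow_div_log_of_abs_lt_one
    rw [abs_of_pos (by positivity)]
    exact pow_lt_one₀ h0.le h1 (Nat.succ_ne_zero k)
  have hs : Summable fun p : ℕ × ℕ => (q ^ (p.1 + 1)) ^ (p.2 + 1) / ((p.2 : ℝ) + 1) := by
    rw [summable_prod_of_nonneg (fun p => by dsimp; positivity)]
    refine ⟨fun k => (hin k).summable, ?_⟩
    simp only [(hin _).tsum_eq]
    exact (hasSum_Lam h0 h1).neg.summable
  have hg : HasSum (fun p : ℕ × ℕ => (q ^ (p.1 + 1)) ^ (p.2 + 1) / ((p.2 : ℝ) + 1)) (-Lam q) := by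
    have h2 := hs.hasSum
    have h3 := h2.prod_fiberwise hin
    rwa [h3.unique (hasSum_Lam h0 h1).neg] at h2
  set h : ℕ × ℕ → ℝ := fun p => if (p.2 + 1) ∣ p.1 ∧ p.1 ≠ 0 then q ^ p.1 / ((p.2 : ℝ) + 1) else 0
    with hh
  have hh' : HasSum h (-Lam q) := by
    let i : ℕ × ℕ → ℕ × ℕ := fun p => ((p.1 + 1) * (p.2 + 1), p.2)
    have hi : Function.Injective i := by
      rintro ⟨a, b⟩ ⟨c, d⟩ hab
      simp only [i, Prod.mk.injEq] at hab
      obtain ⟨h1, rfl⟩ := hab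
      have := Nat.eq_of_mul_eq_mul_right (Nat.succ_pos b) h1
      simp_all
    rw [← hi.hasSum_iff]
    · convert hg using 2 with p
      simp [h, i, pow_mul]
    · rintro ⟨m, n⟩ hm
      simp only [h]
      rw [if_neg]
      rintro ⟨⟨c, hc⟩, h0⟩
      apply hm
      obtain ⟨c, rfl⟩ := Nat.exists_eq_succ_of_ne_zero (n := c) (by rintro rfl; simp_all)
      exact ⟨(c, n), by simp [i, hc, mul_comm]⟩
  refine hh'.prod_fiberwise fun m => ?_
  have : (sigmaNegOne m : ℝ) * q ^ m = ∑ n ∈ range m, h (m, n) := by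
    simp only [sigmaNegOne, Nat.divisors, h]
    push_cast
    rw [sum_mul, sum_filter, Finset.sum_Ico_eq_sum_range]
    simp only [Nat.add_sub_cancel]
    refine sum_congr rfl fun n hn => ?_
    have : m ≠ 0 := by rintro rfl; simp at hn
    simp only [this, ne_eq, not_false_iff, and_true, add_comm 1 n]
    split_ifs
    · push_cast; ring
    · rfl
  rw [this]
  apply hasSum_sum_of_ne_finset_zero
  intro n hn
  simp only [h]
  rw [if_neg]
  rintro ⟨h2, h3⟩
  have := Nat.le_of_dvd (Nat.pos_of_ne_zero h3) h2
  simp at hn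
  omega

lemma lambert_dvd {q : ℝ} (h0 : 0 < q) (h1 : q < 1) (d : ℕ) (hd : 0 < d) :
    HasSum (fun m : ℕ => (if d ∣ m then (sigmaNegOne (m / d) : ℝ) else 0) * q ^ m)
      (-Lam (q ^ d)) := by
  have hi : Function.Injective (fun m : ℕ => d * m) := fun a b h => 
    Nat.eq_of_mul_eq_mul_left hd h
  rw [← hi.hasSum_iff]
  · convert lambert (q := q ^ d) (by positivity) (pow_lt_one₀ h0.le h1 hd.ne') using 2 with m
    simp [hd, pow_mul]
  · intro m hm
    rw [if_neg, zero_mul]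
    rintro ⟨c, rfl⟩
    exact hm ⟨c, rfl⟩

lemma hasSum_cPrime {q : ℝ} (h0 : 0 < q) (h1 : q < 1) :
    HasSum (fun m : ℕ => (cPrime (m + 1) : ℝ) * q ^ (m + 1))
      (-2 * Lam q + 5 * Lam (q ^ 2) - 2 * Lam (q ^ 4)) := by
  have := (((lambert h0 h1).mul_left 2).sub ((lambert_dvd h0 h1 2 two_pos).mul_left 5)).add
    ((lambert_dvd h0 h1 4 four_pos).mul_left 2)
  have e : HasSum (fun m : ℕ => (cPrime m : ℝ) * q ^ m)
      (-2 * Lam q + 5 * Lam (q ^ 2) - 2 * Lam (q ^ 4)) := by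
    have hv : -2 * Lam q + 5 * Lam (q ^ 2) - 2 * Lam (q ^ 4) =
      2 * -Lam q - 5 * -Lam (q ^ 2) + 2 * -Lam (q ^ 4) := by ring
    rw [hv]
    refine hasSum_congr_aux (fun m => ?_) this
    simp only [cPrime]
    split_ifs <;> push_cast <;> ring
  simpa [cPrime, sigmaNegOne] using (hasSum_nat_add_iff' 1).mpr e

lemma qP_tendsto {p : ℝ} (h0 : 0 < p) (h1 : p < 1) :
    Tendsto (qP p) atTop (𝓝 (Real.exp (Lam p))) :=
  (Real.hasProd_of_hasSum_log (fun k => one_sub_pow_pos' h0 h1 k)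
    (hasSum_Lam h0 h1)).tendsto_prod_nat

lemma qP_antitone {p : ℝ} (h0 : 0 < p) (h1 : p < 1) : Antitone (qP p) := by
  refine antitone_nat_of_succ_le fun n => ?_
  rw [qP_succ]
  refine mul_le_of_le_one_right (qP_pos h0 h1 n).le ?_
  have : 0 < p ^ (n + 1) := by positivity
  linarith

lemma qP_ge {p : ℝ} (h0 : 0 < p) (h1 : p < 1) (n : ℕ) : Real.exp (Lam p) ≤ qP p n :=
  (qP_antitone h0 h1).le_of_tendsto (qP_tendsto h0 h1) n

lemma qP_le_one {p : ℝ} (h0 : 0 < p) (h1 : p < 1) (n : ℕ) : qP p n ≤ 1 := by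
  simpa [qP] using (qP_antitone h0 h1) (Nat.zero_le n)

lemma summable_sq {q : ℝ} (h0 : 0 < q) (h1 : q < 1) :
    Summable fun k : ℤ => q ^ (k.natAbs ^ 2) := by
  have : Summable fun k : ℕ => q ^ (k ^ 2) :=
    (summable_geometric_of_lt_one h0.le h1).of_nonneg_of_le (fun k => by positivity)
      fun k => pow_le_pow_of_le_one h0.le h1.le (Nat.le_self_pow two_ne_zero k)
  exact Summable.of_nat_of_neg (by simpa using this) (by simpa using this)

lemma odd_log {q : ℝ} (h0 : 0 < q) (h1 : q < 1) :
    HasSum (fun k : ℕ => Real.log (1 + q ^ (2 * k + 1)))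
      (2 * Lam (q ^ 2) - Lam q - Lam (q ^ 4)) := by
  have hall : ∀ {x : ℝ}, 0 < x → x < 1 → HasSum (fun k : ℕ => Real.log (1 + x ^ (k + 1)))
      (Lam (x ^ 2) - Lam x) := by
    intro x hx0 hx1
    refine hasSum_congr_aux (fun k => ?_) ((hasSum_Lam (q := x ^ 2) (by positivity)
      (pow_lt_one₀ hx0.le hx1 two_ne_zero)).sub (hasSum_Lam hx0 hx1))
    have h2 := one_sub_pow_pos' hx0 hx1 k
    have h3 : 0 < 1 + x ^ (k + 1) := by positivity
    have : 1 - (x ^ 2) ^ (k + 1) = (1 + x ^ (k + 1)) * (1 - x ^ (k + 1)) := by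
      rw [← pow_mul, mul_comm 2, pow_mul]; ring
    rw [this, Real.log_mul h3.ne' h2.ne']
    ring
  have hs : Summable (fun k : ℕ => Real.log (1 + q ^ (2 * k + 1))) := by
    have := (hall h0 h1).summable.comp_injective (i := fun k : ℕ => 2 * k)
      (fun a b h => by simpa using h)
    exact this
  have hE := hall (x := q ^ 2) (by positivity) (pow_lt_one₀ h0.le h1 two_ne_zero)
  have := HasSum.even_add_odd (f := fun k : ℕ => Real.log (1 + q ^ (k + 1))) hs.hasSum
    (by convert hE using 4 with k; rw [← pow_mul]; ring_nf)
  have h4 := this.unique (hall h0 h1)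
  have h5 := hs.hasSum
  rw [← pow_mul] at h4
  norm_num at h4
  convert h5 using 1
  linarith

lemma theta_q {q : ℝ} (h0 : 0 < q) (h1 : q < 1) :
    ∑' k : ℤ, q ^ (k.natAbs ^ 2) =
      Real.exp (-2 * Lam q + 5 * Lam (q ^ 2) - 2 * Lam (q ^ 4)) := by
  set p := q ^ 2 with hp
  have p0 : 0 < p := by positivity
  have p1 : p < 1 := pow_lt_one₀ h0.le h1 two_ne_zero
  set E := Real.exp (Lam p) with hE
  have E0 : 0 < E := Real.exp_pos _
  have hlim : Tendsto (fun n => ∑' k : ℤ, fT q n k) atTop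
      (𝓝 (∑' k : ℤ, q ^ (k.natAbs ^ 2) * (E / (E * E)))) := by
    refine tendsto_tsum_of_dominated_convergence
      (bound := fun k : ℤ => q ^ (k.natAbs ^ 2) * (1 / (E * E)))
      ((summable_sq h0 h1).mul_right _) ?_ ?_
    · intro k
      have t1 : Tendsto (fun n : ℕ => ((n : ℤ) - k).toNat) atTop atTop :=
        tendsto_atTop.mpr fun b => by
          filter_upwards [eventually_ge_atTop (b + k.natAbs)] with n hn
          omega
      have t2 : Tendsto (fun n : ℕ => ((n : ℤ) + k).toNat) atTop atTop :=
        tendsto_atTop.mpr fun b => by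
          filter_upwards [eventually_ge_atTop (b + k.natAbs)] with n hn
          omega
      have t3 : Tendsto (fun n : ℕ => 2 * n) atTop atTop :=
        tendsto_atTop.mpr fun b => by
          filter_upwards [eventually_ge_atTop b] with n hn
          omega
      have hP := qP_tendsto p0 p1
      have := ((hP.comp t3).div ((hP.comp t1).mul (hP.comp t2)) (by positivity)).const_mul
        (q ^ (k.natAbs ^ 2))
      refine this.congr' ?_
      filter_upwards [eventually_ge_atTop k.natAbs] with n hn
      simp [fT, hn, hp]
    · refine Eventually.of_forall fun n k => ?_
      have a1 := qP_pos p0 p1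
      have a2 := qP_ge p0 p1
      have a3 := qP_le_one p0 p1
      rw [fT]
      split_ifs
      · have b1 := a1 (2 * n)
        have b2 := a1 ((n : ℤ) - k).toNat
        have b3 := a1 ((n : ℤ) + k).toNat
        rw [← hp, Real.norm_of_nonneg (by positivity)]
        gcongr
        · exact a3 _
        · exact a2 _
        · exact a2 _
      · rw [norm_zero]; positivity
  have hprod := (Real.hasProd_of_hasSum_log (fun k => by positivity)
    (odd_log h0 h1)).tendsto_prod_nat.pow 2
  simp only [finite_triple h0 h1] at hlim
  have := tendsto_nhds_unique hlim hprod
  rw [tsum_mul_right] at this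
  have h2 : ∑' k : ℤ, q ^ (k.natAbs ^ 2) = E * (∑' k : ℤ, q ^ (k.natAbs ^ 2) * (E / (E * E))) := by
    rw [tsum_mul_right]; field_simp
  rw [h2, tsum_mul_right, this, hE, ← Real.exp_nat_mul, ← Real.exp_add]
  congr 1
  push_cast
  ring

/-- the Fourier coefficients of `log θ` are
`c'_m = 2σ₋₁(m) - 5σ₋₁(m/2) + 2σ₋₁(m/4)`. -/
theorem log_theta_fourier (t : ℝ) (ht : 0 < t) :
    Real.log (theta t)
      = ∑' m : ℕ, (cPrime (m + 1) : ℝ) * Real.exp (-Real.pi * (m + 1) * t) := by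
  set q := Real.exp (-Real.pi * t) with hq
  have h0 : 0 < q := Real.exp_pos _
  have h1 : q < 1 := by
    rw [hq, Real.exp_lt_one_iff]
    have := mul_pos Real.pi_pos ht
    linarith
  have e1 : theta t = ∑' k : ℤ, q ^ (k.natAbs ^ 2) := by
    unfold theta
    refine tsum_congr fun k => ?_
    rw [hq, ← Real.exp_nat_mul]
    congr 1
    push_cast
    rw [Nat.cast_natAbs, Int.cast_abs, sq_abs]
    ring
  rw [e1, theta_q h0 h1, Real.log_exp, ← (hasSum_cPrime h0 h1).tsum_eq]
  refine tsum_congr fun m => ?_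
  rw [hq, ← Real.exp_nat_mul]
  congr 2
  push_cast
  ring
end

section
/- For real u ≥ 0 and integer m ≥ 2, the Fourier coefficients of θ^u satisfy |c_m(u)| ≤ 24 m^{u/2}. -/
noncomputable def thT (q : ℂ) : ℂ := ∑' n : ℤ, q ^ (n.natAbs ^ 2)

lemma summable_natsq {r : ℝ} (h0 : 0 ≤ r) (h1 : r < 1) : Summable (fun n : ℕ => r ^ (n ^ 2)) := by
  refine Summable.of_nonneg_of_le (fun n => by positivity) (fun n => ?_)
    (summable_geometric_of_lt_one h0 h1)
  exact pow_le_pow_of_le_one h0 h1.le (by nlinarith [Nat.zero_le n, sq_nonneg n, Nat.le_self_pow (n := 2) (by norm_num) n])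

lemma summable_intsq {r : ℝ} (h0 : 0 ≤ r) (h1 : r < 1) :
    Summable (fun n : ℤ => r ^ (n.natAbs ^ 2)) := by
  apply Summable.of_nat_of_neg
  · simpa using summable_natsq h0 h1
  · simpa using summable_natsq h0 h1

lemma summable_thT {q : ℂ} (h : ‖q‖ < 1) : Summable (fun n : ℤ => ‖q ^ (n.natAbs ^ 2)‖) := by
  simpa using summable_intsq (norm_nonneg q) h

lemma natAbs_pow_neg (a : ℤ) (q : ℂ) : (-q) ^ (a.natAbs ^ 2) = (-1) ^ a.natAbs * q ^ (a.natAbs ^ 2) := by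
  rw [neg_pow]
  congr 1
  rw [sq, pow_mul]
  rcases Nat.even_or_odd a.natAbs with h | h
  · simp [h.neg_one_pow]
  · simp [h.neg_one_pow]

lemma thT_landen {q : ℂ} (h : ‖q‖ < 1) : thT q * thT (-q) = thT (-q ^ 2) ^ 2 := by
  have h' : ‖-q‖ < 1 := by simpa
  have h2 : ‖-q ^ 2‖ < 1 := by
    simp only [norm_neg, norm_pow]; nlinarith [norm_nonneg q]
  have hs := summable_mul_of_summable_norm (summable_thT h) (summable_thT h')
  set G : ℤ × ℤ → ℂ := fun x => q ^ (x.1.natAbs ^ 2) * (-q) ^ (x.2.natAbs ^ 2) with hG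
  have e1 : thT q * thT (-q) = ∑' x, G x :=
    tsum_mul_tsum_of_summable_norm (summable_thT h) (summable_thT h')
  have hsw : Summable (fun x : ℤ × ℤ => G x.swap) := (Equiv.prodComm ℤ ℤ).summable_iff.mpr hs
  have e2 : ∑' x : ℤ × ℤ, G x.swap = ∑' x, G x := (Equiv.prodComm ℤ ℤ).tsum_eq G
  set K : ℤ × ℤ → ℂ := fun x => (G x + G x.swap) / 2 with hK
  have e3 : ∑' x, K x = ∑' x, G x := by
    rw [hK, tsum_div_const, hs.tsum_add hsw, e2]; ring
  let φ : ℤ × ℤ → ℤ × ℤ := fun x => (x.1 + x.2, x.1 - x.2)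
  have hφ : Function.Injective φ := by
    rintro ⟨a, b⟩ ⟨c, d⟩ hx
    simp only [φ, Prod.mk.injEq] at hx ⊢
    omega
  have hsupp : Function.support K ⊆ Set.range φ := by
    rintro ⟨a, b⟩ hx
    by_contra hn
    apply hx
    have hodd : Odd (a + b) := by
      by_contra he
      rw [Int.not_odd_iff_even] at he
      obtain ⟨c, hc⟩ := he
      exact hn ⟨(c, a - c), by simp only [φ, Prod.mk.injEq]; omega⟩
    simp only [hK, hG, Prod.swap, natAbs_pow_neg]
    rcases Int.even_or_odd a with ha | ha
    · have hb : Odd b := by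
        rw [Int.odd_add'] at hodd; exact hodd.mpr ha
      rw [(Int.natAbs_even.mpr ha).neg_one_pow, (Int.natAbs_odd.mpr hb).neg_one_pow]; ring
    · have hb : Even b := by
        rw [Int.odd_add] at hodd; exact hodd.mp ha
      rw [(Int.natAbs_odd.mpr ha).neg_one_pow, (Int.natAbs_even.mpr hb).neg_one_pow]; ring
  have e4 : ∑' x, K (φ x) = ∑' x, K x := hφ.tsum_eq hsupp
  have e5 : thT (-q ^ 2) ^ 2 = ∑' x : ℤ × ℤ, (-q^2) ^ (x.1.natAbs ^ 2) * (-q^2) ^ (x.2.natAbs ^ 2) := by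
    rw [sq (thT _)]
    exact tsum_mul_tsum_of_summable_norm (summable_thT h2) (summable_thT h2)
  rw [e1, ← e3, ← e4, e5]
  congr 1
  ext ⟨c, d⟩
  simp only [hK, hG, φ, Prod.swap, natAbs_pow_neg]
  have hpar : ((-1 : ℂ)) ^ (c + d).natAbs = (-1) ^ c.natAbs * (-1) ^ d.natAbs := by
    rw [← pow_add]
    apply neg_one_pow_congr
    rw [Int.natAbs_even, Int.even_add, Nat.even_add, Int.natAbs_even, Int.natAbs_even]
  have hpar2 : ((-1 : ℂ)) ^ (c - d).natAbs = (-1) ^ c.natAbs * (-1) ^ d.natAbs := by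
    rw [← pow_add]
    apply neg_one_pow_congr
    rw [Int.natAbs_even, Int.even_sub, Nat.even_add, Int.natAbs_even, Int.natAbs_even]
  have hexp : (c + d).natAbs ^ 2 + (c - d).natAbs ^ 2 = 2 * c.natAbs ^ 2 + 2 * d.natAbs ^ 2 := by
    zify; simp only [sq_abs]; ring
  rw [hpar, hpar2]
  have : q ^ ((c + d).natAbs ^ 2) * q ^ ((c - d).natAbs ^ 2) =
      (q ^ 2) ^ (c.natAbs ^ 2) * (q ^ 2) ^ (d.natAbs ^ 2) := by
    rw [← pow_add, hexp, pow_add, pow_mul, pow_mul]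
  linear_combination ((-1) ^ c.natAbs * (-1) ^ d.natAbs) * this

lemma differentiableOn_thT : DifferentiableOn ℂ thT (Metric.ball 0 1) := by
  intro q hq
  rw [mem_ball_zero_iff] at hq
  obtain ⟨r, h1, h2⟩ := exists_between hq
  have hr : 0 ≤ r := (norm_nonneg q).trans h1.le
  have := Complex.differentiableOn_tsum_of_summable_norm (U := Metric.ball (0:ℂ) r)
    (F := fun (n : ℤ) (w : ℂ) => w ^ (n.natAbs ^ 2)) (summable_intsq hr h2)
    (fun i => by fun_prop) Metric.isOpen_ball (fun i w hw => by
      rw [mem_ball_zero_iff] at hw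
      rw [norm_pow]
      gcongr)
  exact (this.differentiableAt (Metric.isOpen_ball.mem_nhds (by simpa using h1))).differentiableWithinAt

lemma thT_eq_nat {q : ℂ} (h : ‖q‖ < 1) : thT q = 1 + 2 * ∑' n : ℕ, q ^ ((n + 1) ^ 2) := by
  have hs : Summable (fun n : ℤ => q ^ (n.natAbs ^ 2)) := (summable_thT h).of_norm
  have := tsum_int_eq_zero_add_two_mul_tsum_pnat (f := fun n : ℤ => q ^ (n.natAbs ^ 2)) (by intro n; simp) hs
  rw [thT, this, tsum_pnat_eq_tsum_succ (f := fun n : ℕ => q ^ ((n:ℤ).natAbs ^ 2))]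
  have hc : ∀ n : ℕ, ((n : ℤ) + 1).natAbs = n + 1 := by intro n; omega
  simp [hc]

lemma thT_zero : thT 0 = 1 := by
  rw [thT_eq_nat (by simp)]; simp

lemma thT_ne_zero {q : ℂ} (h : ‖q‖ < 1) : thT q ≠ 0 := by
  intro h0
  have key : ∀ q : ℂ, ‖q‖ < 1 → thT q = 0 → thT (-q ^ 2) = 0 := by
    intro q h h0
    have := thT_landen h
    rw [h0, zero_mul] at this
    exact pow_eq_zero_iff (two_ne_zero) |>.mp this.symm
  have hn : ∀ n : ℕ, ‖((fun z : ℂ => -z ^ 2)^[n] q)‖ ≤ ‖q‖ ^ (n + 1) ∧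
      thT ((fun z : ℂ => -z ^ 2)^[n] q) = 0 := by
    intro n
    induction n with
    | zero => simp [h0]
    | succ n ih =>
      rw [Function.iterate_succ_apply']
      have hl : ‖((fun z : ℂ => -z ^ 2)^[n] q)‖ < 1 :=
        ih.1.trans_lt (pow_lt_one₀ (norm_nonneg _) h (by simp))
      refine ⟨?_, key _ hl ih.2⟩
      simp only [norm_neg, norm_pow]
      calc _ ≤ (‖q‖ ^ (n + 1)) ^ 2 := by gcongr; exact ih.1
        _ = ‖q‖ ^ ((n + 1) * 2) := by rw [← pow_mul]
        _ ≤ _ := pow_le_pow_of_le_one (norm_nonneg _) h.le (by omega)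
  have ht : Filter.Tendsto (fun n : ℕ => ((fun z : ℂ => -z ^ 2)^[n] q)) Filter.atTop (nhds 0) :=
    squeeze_zero_norm (fun n => (hn n).1)
      ((tendsto_pow_atTop_nhds_zero_of_lt_one (norm_nonneg _) h).comp (Filter.tendsto_add_atTop_nat 1))
  have hc : ContinuousAt thT 0 :=
    (differentiableOn_thT.differentiableAt (Metric.isOpen_ball.mem_nhds (by simp))).continuousAt
  have := hc.tendsto.comp ht
  have h3 : thT ∘ (fun n : ℕ => ((fun z : ℂ => -z ^ 2)^[n] q)) = fun _ => 0 := by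
    ext n; exact (hn n).2
  rw [h3, thT_zero] at this
  exact zero_ne_one (tendsto_nhds_unique tendsto_const_nhds this)

lemma exists_log_thT : ∃ g : ℂ → ℂ, DifferentiableOn ℂ g (Metric.ball 0 1) ∧ g 0 = 0 ∧
    ∀ z ∈ Metric.ball (0:ℂ) 1, Complex.exp (g z) = thT z := by
  have hne : ∀ z ∈ Metric.ball (0:ℂ) 1, thT z ≠ 0 := fun z hz => thT_ne_zero (by simpa using hz)
  have hd : DifferentiableOn ℂ (fun z => deriv thT z / thT z) (Metric.ball 0 1) :=
    (differentiableOn_thT.deriv Metric.isOpen_ball).div differentiableOn_thT hne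
  obtain ⟨g, g0, hg⟩ := hd.isExactOn_ball.with_val_at 0 0
  refine ⟨g, fun z hz => (hg z hz).differentiableAt.differentiableWithinAt, g0, ?_⟩
  have hder : ∀ z ∈ Metric.ball (0:ℂ) 1, HasDerivAt (fun z => Complex.exp (-g z) * thT z) 0 z := by
    intro z hz
    have h1 := (hg z hz).neg.cexp
    have h2 := (differentiableOn_thT.differentiableAt (Metric.isOpen_ball.mem_nhds hz)).hasDerivAt
    have h3 := h1.mul h2
    refine h3.congr_deriv ?_
    have := hne z hz
    have e : deriv thT z / thT z * thT z = deriv thT z := div_mul_cancel₀ _ this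
    change Complex.exp (-g z) * -(deriv thT z / thT z) * thT z + Complex.exp (-g z) * deriv thT z = 0
    linear_combination -Complex.exp (-g z) * e
  intro z hz
  have := (convex_ball (0:ℂ) 1).is_const_of_fderivWithin_eq_zero (𝕜 := ℂ)
    (f := fun z => Complex.exp (-g z) * thT z)
    (fun z hz => (hder z hz).differentiableAt.differentiableWithinAt)
    (fun z hz => by
      rw [fderivWithin_of_isOpen Metric.isOpen_ball hz]
      ext; simp [(hder z hz).deriv]) hz (Metric.mem_ball_self one_pos)
  simp only [g0, thT_zero, Complex.exp_neg] at this
  have hz := Complex.exp_ne_zero (g z)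
  field_simp at this
  simpa using this.symm

lemma tail_le {q : ℂ} (h : ‖q‖ < 1) (m : ℕ) :
    ‖∑' n : ℕ, q ^ ((n + m + 1) ^ 2)‖ ≤ ‖q‖ ^ (m + 1) * (1 - ‖q‖)⁻¹ := by
  have hg := (hasSum_geometric_of_lt_one (norm_nonneg q) h).mul_left (‖q‖ ^ (m + 1))
  refine tsum_of_norm_bounded hg (fun n => ?_)
  rw [norm_pow, ← pow_add]
  exact pow_le_pow_of_le_one (norm_nonneg _) h.le (by nlinarith)

lemma norm_thT_le {q : ℂ} (h : ‖q‖ < 1) : ‖thT q‖ ≤ ∑' n : ℤ, ‖q‖ ^ (n.natAbs ^ 2) := by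
  have := norm_tsum_le_tsum_norm (summable_thT h)
  simpa [thT] using this

lemma real_th_le {s : ℝ} (h0 : 0 ≤ s) (h : s < 1) :
    ∑' n : ℤ, s ^ (n.natAbs ^ 2) ≤ 1 + 2 * (s * (1 - s)⁻¹) := by
  have hs : ‖(s : ℂ)‖ = s := by simp [abs_of_nonneg h0]
  have e : ((∑' n : ℤ, s ^ (n.natAbs ^ 2) : ℝ) : ℂ) = thT s := by
    rw [thT, Complex.ofReal_tsum]; simp
  have h1 : ‖thT s‖ ≤ 1 + 2 * (s * (1 - s)⁻¹) := by
    have ht := tail_le (q := s) (by rwa [hs]) 0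
    rw [hs] at ht
    simp only [add_zero, zero_add, pow_one] at ht
    rw [thT_eq_nat (by rwa [hs])]
    refine (norm_add_le _ _).trans ?_
    rw [norm_mul]
    simp only [norm_one, Complex.norm_ofNat]
    linarith
  rw [← e, Complex.norm_real] at h1
  exact (le_abs_self _).trans h1

lemma norm_thT_le_sqrt {m : ℕ} (hm : 2 ≤ m) {q : ℂ} (hq : ‖q‖ = Real.exp (-Real.pi * (1.01 / m))) :
    ‖thT q‖ ≤ (m : ℝ) ^ (1 / 2 : ℝ) := by
  have hm' : (2 : ℝ) ≤ m := by exact_mod_cast hm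
  have hpi := Real.pi_gt_d4
  have hq1 : ‖q‖ < 1 := by
    rw [hq, Real.exp_lt_one_iff]
    have : 0 < Real.pi * (1.01 / m) := by positivity
    linarith
  refine (norm_thT_le hq1).trans ?_
  have ha : (0:ℝ) < 1.01 / m := by positivity
  have hpow : ∀ c : ℝ, (fun n : ℤ => Real.exp c ^ (n.natAbs ^ 2)) = fun n : ℤ => Real.exp (c * (n:ℝ) ^ 2) := by
    intro c; ext n
    rw [← Real.exp_nat_mul]
    congr 1
    push_cast
    rw [Nat.cast_natAbs, Int.cast_abs, sq_abs]; ring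
  have hf := Real.tsum_exp_neg_mul_int_sq ha
  rw [← hpow, ← hpow] at hf
  rw [hq, hf]
  set s := Real.exp (-Real.pi / (1.01 / m)) with hs
  have hs_le : s ≤ 1 / 403 := by
    have h1 : s ≤ Real.exp (-6) := by
      apply Real.exp_le_exp.mpr
      rw [div_le_iff₀ ha]
      have : (1.01:ℝ) / m ≤ 1.01 / 2 := by gcongr
      linarith
    have h2 : (403:ℝ) ≤ Real.exp 6 := by
      have := Real.exp_one_gt_d9
      rw [show (6:ℝ) = ((6:ℕ):ℝ) * 1 by norm_num, Real.exp_nat_mul]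
      calc (403:ℝ) ≤ 2.7182818283 ^ 6 := by norm_num
        _ ≤ _ := by gcongr
    rw [Real.exp_neg] at h1
    refine h1.trans ?_
    rw [one_div]
    exact inv_anti₀ (by norm_num) h2
  have hs0 : 0 ≤ s := (Real.exp_pos _).le
  have hb : ∑' n : ℤ, s ^ (n.natAbs ^ 2) ≤ 1 + 2 / 402 := by
    refine (real_th_le hs0 (by linarith)).trans ?_
    have : s * (1 - s)⁻¹ ≤ 1 / 402 := by
      rw [← div_eq_mul_inv, div_le_div_iff₀ (by linarith) (by norm_num)]; linarith
    linarith
  have hb2 : (1 + 2 / 402 : ℝ) ≤ (1.01 : ℝ) ^ (1/2 : ℝ) := by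
    rw [← Real.sqrt_eq_rpow]
    apply Real.le_sqrt_of_sq_le
    norm_num
  rw [Real.div_rpow (by norm_num) (by positivity), one_div_div, div_mul_eq_mul_div,
    div_le_iff₀ (by positivity)]
  gcongr
  exact hb.trans hb2

lemma exp_bound : Real.exp (1.01 * Real.pi) ≤ 24 := by
  have hpi := Real.pi_lt_d4
  have h1 : Real.exp (1.01 * Real.pi) ≤ Real.exp (3 * 1 + 0.1735) := by
    apply Real.exp_le_exp.mpr; linarith
  refine h1.trans ?_
  rw [Real.exp_add, show (3:ℝ) = ((3:ℕ):ℝ) by norm_num, Real.exp_nat_mul]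
  have h2 : Real.exp 0.1735 ≤ 1.1915 := by
    have := Real.exp_bound' (x := 0.1735) (by norm_num) (by norm_num) (n := 4) (by norm_num)
    refine this.trans ?_
    norm_num [Finset.sum_range_succ, Nat.factorial]
  calc _ ≤ (2.7182818286:ℝ) ^ 3 * 1.1915 := by
        gcongr
        exact Real.exp_one_lt_d9.le
    _ ≤ 24 := by norm_num

lemma iteratedDeriv_eq_of_isBigO {F : ℂ → ℂ} (hF : AnalyticAt ℂ F 0) (m : ℕ)
    (h : F =O[nhds 0] fun z => z ^ (m + 1)) : iteratedDeriv m F 0 = 0 := by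
  have : ((m + 1 : ℕ) : ℕ∞) ≤ analyticOrderAt F 0 := by
    by_contra hlt
    rw [not_le] at hlt
    have hfin : analyticOrderAt F 0 ≠ ⊤ := ne_top_of_lt hlt
    obtain ⟨n, hn⟩ := ENat.ne_top_iff_exists.mp hfin
    rw [← hn] at hlt
    have hnm : n < m + 1 := by exact_mod_cast hlt
    obtain ⟨g, hg, hg0, hfg⟩ := (hF.analyticOrderAt_eq_natCast).mp hn.symm
    simp only [sub_zero, smul_eq_mul] at hfg
    obtain ⟨C, hC⟩ := h.bound
    have h1 : ∀ᶠ z in nhdsWithin (0:ℂ) {0}ᶜ, ‖g z‖ ≤ C * ‖z‖ ^ (m + 1 - n) := by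
      filter_upwards [hC.filter_mono nhdsWithin_le_nhds, hfg.filter_mono nhdsWithin_le_nhds,
        self_mem_nhdsWithin] with z h1 h2 h3
      have h3 : 0 < ‖z‖ := norm_pos_iff.mpr h3
      rw [h2, norm_mul, norm_pow, norm_pow,
        show m + 1 = n + (m + 1 - n) by omega, pow_add] at h1
      have : 0 < ‖z‖ ^ n := by positivity
      nlinarith
    have h2 : Filter.Tendsto (fun z => ‖g z‖) (nhdsWithin (0:ℂ) {0}ᶜ) (nhds ‖g 0‖) :=
      hg.continuousAt.norm.tendsto.mono_left nhdsWithin_le_nhds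
    have h3 : Filter.Tendsto (fun z : ℂ => C * ‖z‖ ^ (m + 1 - n)) (nhdsWithin (0:ℂ) {0}ᶜ) (nhds 0) := by
      have : Continuous (fun z : ℂ => C * ‖z‖ ^ (m + 1 - n)) := by fun_prop
      have := this.tendsto 0
      rw [norm_zero, zero_pow (by omega), mul_zero] at this
      exact this.mono_left nhdsWithin_le_nhds
    have := le_of_tendsto_of_tendsto h2 h3 h1
    exact hg0 (norm_le_zero_iff.mp this)
  exact (natCast_le_analyticOrderAt_iff_iteratedDeriv_eq_zero hF).mp this m (by omega)

lemma iteratedDeriv_poly (Q : Polynomial ℂ) (m : ℕ) :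
    iteratedDeriv m (fun z => Q.eval z) 0 = m.factorial * Q.coeff m := by
  have hit : ∀ (k : ℕ), iteratedDeriv k (fun z => Q.eval z) =
      fun z => ((Polynomial.derivative^[k] Q).eval z) := by
    intro k
    induction k with
    | zero => simp
    | succ k ih =>
      rw [iteratedDeriv_succ, ih, Function.iterate_succ_apply']
      ext z
      exact Polynomial.deriv _
  rw [hit]
  beta_reduce
  have := Polynomial.coeff_iterate_derivative (p := Q) (k := m) 0
  rw [← Polynomial.coeff_zero_eq_eval_zero, this]
  simp [Nat.descFactorial_self]

/-- Truncated theta polynomial. -/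
noncomputable def thP (m : ℕ) : Polynomial ℂ :=
  ∑ a : Fin (m + 1), if 1 ≤ a.1 then Polynomial.X ^ (a.1 ^ 2) else 0

lemma thP_pow_coeff (m j : ℕ) : ((thP m) ^ j).coeff m = repCount j m := by
  have : (thP m) ^ j = ∏ _i : Fin j, thP m := by simp
  rw [this]
  simp only [thP]
  rw [Finset.prod_univ_sum, Polynomial.finsetSum_coeff, repCount, Finset.card_filter]
  push_cast
  simp only [Fintype.piFinset_univ]
  refine Finset.sum_congr rfl (fun f _ => ?_)
  by_cases hf : ∀ i, 1 ≤ (f i).1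
  · simp only [hf, if_true, Finset.prod_pow_eq_pow_sum, Polynomial.coeff_X_pow]
    simp [eq_comm]
  · rw [if_neg (fun h => hf h.1)]
    push Not at hf
    obtain ⟨i, hi⟩ := hf
    rw [Finset.prod_eq_zero (Finset.mem_univ i)]
    · simp
    · rw [if_neg (by omega)]

lemma thP_eval (m : ℕ) (z : ℂ) : (thP m).eval z = ∑ n ∈ Finset.range m, z ^ ((n + 1) ^ 2) := by
  rw [thP, Fin.sum_univ_succ, Polynomial.eval_add, Polynomial.eval_finsetSum, Finset.sum_range]
  simp

lemma choose_eq (u : ℝ) (j : ℕ) :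
    ((Polynomial.aeval u (binomPoly j) : ℝ) : ℂ) = Ring.choose (u : ℂ) j := by
  rw [← Complex.ofReal_choose, Ring.choose_eq_smul, binomPoly]
  congr 1
  rw [← Polynomial.eval₂_smulOneHom_eq_smeval, ← Polynomial.eval_map,
     descPochhammer_map, descPochhammer_eval_eq_prod_range]
  simp

lemma thT_sub_isBigO (m : ℕ) :
    (fun z => (thT z - 1) - 2 * (thP m).eval z) =O[nhds 0] fun z : ℂ => z ^ (m + 1) := by
  apply Asymptotics.IsBigO.of_bound 4
  filter_upwards [Metric.ball_mem_nhds (0:ℂ) (show (0:ℝ) < 1 / 2 by norm_num)] with z hz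
  rw [mem_ball_zero_iff] at hz
  have h1 : ‖z‖ < 1 := by linarith
  have hs : Summable (fun n : ℕ => z ^ ((n + 1) ^ 2)) := by
    have := (summable_natsq (norm_nonneg z) h1)
    have := (summable_nat_add_iff 1).mpr this
    apply Summable.of_norm
    simpa using this
  have e : (thT z - 1) - 2 * (thP m).eval z = 2 * ∑' n : ℕ, z ^ ((n + m + 1) ^ 2) := by
    rw [thT_eq_nat h1, thP_eval, ← hs.sum_add_tsum_nat_add m]; ring
  rw [e, norm_mul, norm_pow, Complex.norm_ofNat]
  have ht := tail_le h1 m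
  have hi : (1 - ‖z‖)⁻¹ ≤ 2 := by
    rw [inv_le_comm₀ (by linarith) (by norm_num)]; linarith
  have : ‖z‖ ^ (m + 1) * (1 - ‖z‖)⁻¹ ≤ ‖z‖ ^ (m + 1) * 2 := by gcongr
  linarith

/-- The polynomial approximating `θ^u` to order `m`. -/
noncomputable def thQ (u : ℝ) (m : ℕ) : Polynomial ℂ :=
  ∑ j ∈ Finset.range (m + 1), Polynomial.C (Ring.choose (u : ℂ) j) * (Polynomial.C 2 * thP m) ^ j

lemma thQ_coeff (u : ℝ) {m : ℕ} (hm : 2 ≤ m) :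
    (thQ u m).coeff m = ((Polynomial.aeval u (thetaCoeff m) : ℝ) : ℂ) := by
  rw [thQ, Polynomial.finsetSum_coeff, thetaCoeff, map_sum, Complex.ofReal_sum,
    Finset.sum_range_succ']
  have h0 : (Polynomial.C (Ring.choose (u : ℂ) 0) * (Polynomial.C 2 * thP m) ^ 0).coeff m = 0 := by
    simp [Polynomial.coeff_one]; omega
  rw [h0, add_zero, Finset.range_eq_Ico]
  refine (Finset.sum_Ico_add' (fun j : ℕ =>
    (Polynomial.C (Ring.choose (u : ℂ) j) * (Polynomial.C 2 * thP m) ^ j).coeff m) 0 m 1).trans ?_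
  refine Finset.sum_congr (by ext; simp [Finset.mem_Ico, Finset.mem_Icc]) (fun j _ => ?_)
  rw [Polynomial.coeff_C_mul, mul_pow, ← Polynomial.C_pow, Polynomial.coeff_C_mul, thP_pow_coeff,
    ← choose_eq, map_smul, Rat.smul_def]
  push_cast
  ring

lemma pow_theta_isBigO (u : ℝ) (m : ℕ) :
    (fun z => (1 + (thT z - 1)) ^ (u : ℂ) - (thQ u m).eval z) =O[nhds 0]
      fun z : ℂ => z ^ (m + 1) := by
  have hcont : ContinuousAt thT 0 :=
    (differentiableOn_thT.differentiableAt (Metric.isOpen_ball.mem_nhds (by simp))).continuousAt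
  have hw : Filter.Tendsto (fun z => thT z - 1) (nhds 0) (nhds 0) := by
    have := hcont.tendsto.sub_const 1
    simpa [thT_zero] using this
  have hwO : (fun z => thT z - 1) =O[nhds 0] fun z : ℂ => z := by
    have hd := (differentiableOn_thT.differentiableAt
      (Metric.isOpen_ball.mem_nhds (Metric.mem_ball_self (x := (0:ℂ)) one_pos))).isBigO_sub
    simpa [thT_zero] using hd
  have hT := ((Complex.one_add_cpow_hasFPowerSeriesAt_zero (a := (u : ℂ))).isBigO_sub_partialSum_pow
    (m + 1)).comp_tendsto hw
  have h1 : (fun z => (1 + (thT z - 1)) ^ (u : ℂ) -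
      ∑ j ∈ Finset.range (m + 1), Ring.choose (u : ℂ) j * (thT z - 1) ^ j) =O[nhds 0]
      fun z : ℂ => z ^ (m + 1) := by
    refine (hT.congr_left ?_).trans ?_
    · intro z
      simp [FormalMultilinearSeries.partialSum, Function.comp, binomialSeries,
        FormalMultilinearSeries.coeff_ofScalars, mul_comm]
    · refine Asymptotics.IsBigO.trans ?_ (hwO.pow (m + 1))
      refine Asymptotics.IsBigO.of_bound 1 (Filter.Eventually.of_forall fun z => ?_)
      simp
  have hP0 : ContinuousAt (fun z : ℂ => 2 * (thP m).eval z) 0 := by fun_prop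
  have h2 : (fun z => ∑ j ∈ Finset.range (m + 1), Ring.choose (u : ℂ) j * (thT z - 1) ^ j
      - (thQ u m).eval z) =O[nhds 0] fun z : ℂ => z ^ (m + 1) := by
    have : (fun z => ∑ j ∈ Finset.range (m + 1), Ring.choose (u : ℂ) j * (thT z - 1) ^ j
      - (thQ u m).eval z) = fun z => ∑ j ∈ Finset.range (m + 1), Ring.choose (u : ℂ) j *
        ((∑ i ∈ Finset.range j, (thT z - 1) ^ i * (2 * (thP m).eval z) ^ (j - 1 - i)) *
          ((thT z - 1) - 2 * (thP m).eval z)) := by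
      ext z
      rw [thQ, Polynomial.eval_finsetSum, ← Finset.sum_sub_distrib]
      refine Finset.sum_congr rfl fun j _ => ?_
      rw [(Commute.all _ _).geom_sum₂_mul]
      simp
      ring
    rw [this]
    refine Asymptotics.IsBigO.fun_sum fun j _ => ?_
    refine Asymptotics.IsBigO.const_mul_left ?_ _
    have hc : ContinuousAt (fun z : ℂ => ∑ i ∈ Finset.range j, (thT z - 1) ^ i *
        (2 * (thP m).eval z) ^ (j - 1 - i)) 0 := by
      fun_prop
    have := (hc.isBigO_one ℂ).mul (thT_sub_isBigO m)
    simpa using this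
  exact (h1.add h2).congr_left fun z => by ring

/-- for real `u ≥ 0` and `m ≥ 2`, `|c_m(u)| ≤ 24 m^{u/2}`. -/
theorem thetaCoeff_bound (u : ℝ) (hu : 0 ≤ u) (m : ℕ) (hm : 2 ≤ m) :
    |Polynomial.aeval u (thetaCoeff m)| ≤ 24 * (m : ℝ) ^ (u / 2) := by
  obtain ⟨g, hg, g0, hge⟩ := exists_log_thT
  have hmpos : (0:ℝ) < m := by positivity
  set F : ℂ → ℂ := fun z => Complex.exp (u * g z) with hF
  have hFd : DifferentiableOn ℂ F (Metric.ball 0 1) := by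
    simp only [hF]; fun_prop
  have h0 : Metric.ball (0:ℂ) 1 ∈ nhds 0 := Metric.ball_mem_nhds _ one_pos
  have hFa : AnalyticAt ℂ F 0 := hFd.analyticAt h0
  have hQa : AnalyticAt ℂ (fun z => (thQ u m).eval z) 0 :=
    (Polynomial.differentiable _).analyticAt 0
  have hgc : ContinuousAt g 0 := (hg.differentiableAt h0).continuousAt
  have hFO : (fun z => F z - (thQ u m).eval z) =O[nhds 0] fun z : ℂ => z ^ (m + 1) := by
    refine (pow_theta_isBigO u m).congr' ?_ Filter.EventuallyEq.rfl
    have hsmall : ∀ᶠ z in nhds (0:ℂ), ‖g z‖ < 1 := by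
      have := hgc.norm.tendsto
      rw [g0, norm_zero] at this
      exact this.eventually (gt_mem_nhds one_pos)
    filter_upwards [h0, hsmall] with z hz hs
    have him : |(g z).im| < 1 := (Complex.abs_im_le_norm _).trans_lt hs
    rw [abs_lt] at him
    have hpi := Real.pi_gt_three
    rw [add_sub_cancel, Complex.cpow_def_of_ne_zero (thT_ne_zero (by simpa using hz)), ← hge z hz,
      Complex.log_exp (by linarith) (by linarith), mul_comm]
  have hder : iteratedDeriv m F 0 = m.factorial * (thQ u m).coeff m := by
    have h1 := iteratedDeriv_eq_of_isBigO (hFa.fun_sub hQa) m hFO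
    rw [iteratedDeriv_fun_sub hFa.contDiffAt hQa.contDiffAt, iteratedDeriv_poly] at h1
    linear_combination h1
  set R : ℝ := Real.exp (-Real.pi * (1.01 / m)) with hR
  have hR1 : R < 1 := by
    rw [hR, Real.exp_lt_one_iff]
    have : 0 < Real.pi * (1.01 / m) := by positivity
    linarith
  have hRpos : 0 < R := Real.exp_pos _
  have hbound : ∀ z ∈ Metric.sphere (0:ℂ) R, ‖F z‖ ≤ (m : ℝ) ^ (u / 2) := by
    intro z hz
    rw [mem_sphere_zero_iff_norm] at hz
    have hzb : z ∈ Metric.ball (0:ℂ) 1 := by rw [mem_ball_zero_iff, hz]; exact hR1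
    have h1 := norm_thT_le_sqrt hm hz
    have h2 : ‖F z‖ = ‖thT z‖ ^ u := by
      rw [← hge z hzb, Complex.norm_exp, Complex.norm_exp, ← Real.exp_mul]
      simp [mul_comm]
    rw [h2]
    calc _ ≤ ((m : ℝ) ^ (1 / 2 : ℝ)) ^ u := Real.rpow_le_rpow (norm_nonneg _) h1 hu
      _ = _ := by rw [← Real.rpow_mul hmpos.le]; congr 1; ring
  have hdc : DiffContOnCl ℂ F (Metric.ball 0 R) := by
    apply DifferentiableOn.diffContOnCl
    apply hFd.mono
    rw [closure_ball _ hRpos.ne']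
    exact Metric.closedBall_subset_ball hR1
  have hC := Complex.norm_iteratedDeriv_le_of_forall_mem_sphere_norm_le m hRpos hdc hbound
  rw [hder, thQ_coeff u hm, norm_mul, Complex.norm_real, Complex.norm_natCast, mul_div_assoc] at hC
  have hfac : (0:ℝ) < m.factorial := by exact_mod_cast Nat.factorial_pos m
  have hC' := le_of_mul_le_mul_left hC hfac
  rw [Real.norm_eq_abs] at hC'
  refine hC'.trans ?_
  have hRm : (R ^ m)⁻¹ = Real.exp (1.01 * Real.pi) := by
    rw [hR, ← Real.exp_nat_mul, ← Real.exp_neg]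
    congr 1
    field_simp
  rw [div_eq_mul_inv, hRm, mul_comm]
  gcongr
  exact exp_bound
end

section
/- For real u ≥ 0 and integer m ≥ 1, the Fourier coefficients of θ^u satisfy |c_m(u)| ≤ 6u·m^{u/2+1}. -/
/-- The finite `Q`-Pochhammer symbol `(Q;Q)_n`. -/
noncomputable def qPoch (Q : ℂ) (n : ℕ) : ℂ := ∏ i ∈ Finset.range n, (1 - Q ^ (i + 1))

lemma qPoch_succ (Q : ℂ) (n : ℕ) : qPoch Q (n + 1) = qPoch Q n * (1 - Q ^ (n + 1)) := by
  simp [qPoch, Finset.prod_range_succ]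

lemma qPoch_zero (Q : ℂ) : qPoch Q 0 = 1 := by simp [qPoch]

lemma one_sub_pow_ne {Q : ℂ} (hQ : ‖Q‖ < 1) (n : ℕ) : 1 - Q ^ (n + 1) ≠ 0 := by
  intro h
  have h1 : Q ^ (n + 1) = 1 := (sub_eq_zero.mp h).symm
  have h2 : ‖Q‖ ^ (n + 1) = 1 := by rw [← norm_pow, h1, norm_one]
  have h3 : ‖Q‖ ^ (n + 1) < 1 := pow_lt_one₀ (norm_nonneg _) hQ (by omega)
  linarith

lemma qPoch_ne {Q : ℂ} (hQ : ‖Q‖ < 1) (n : ℕ) : qPoch Q n ≠ 0 := by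
  rw [qPoch, Finset.prod_ne_zero_iff]
  intro i _
  exact one_sub_pow_ne hQ i

/-- The Gaussian binomial coefficient. -/
noncomputable def qBin (Q : ℂ) (n k : ℕ) : ℂ :=
  if k ≤ n then qPoch Q n / (qPoch Q k * qPoch Q (n - k)) else 0

lemma qBin_zero {Q : ℂ} (hQ : ‖Q‖ < 1) (n : ℕ) : qBin Q n 0 = 1 := by
  have := qPoch_ne hQ n
  simp [qBin, qPoch_zero, this]

lemma qBin_succ_succ {Q : ℂ} (hQ : ‖Q‖ < 1) {n k : ℕ} (hk : k ≤ n) :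
    qBin Q (n + 1) (k + 1) = qBin Q n (k + 1) + Q ^ (n - k) * qBin Q n k := by
  obtain ⟨d, rfl⟩ := Nat.exists_eq_add_of_le hk
  have e1 : k + d - k = d := by omega
  have e2 : k + d + 1 - (k + 1) = d := by omega
  have h1 := qPoch_ne hQ k
  have h2 := qPoch_ne hQ (k + d)
  have h3 := one_sub_pow_ne hQ k
  rcases d with _ | d
  · have h4 := one_sub_pow_ne hQ k
    simp [qBin, qPoch_succ, qPoch_zero]
    field_simp
  · have e3 : k + (d + 1) - (k + 1) = d := by omega
    have h5 := qPoch_ne hQ d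
    have h6 := one_sub_pow_ne hQ d
    simp only [qBin, e1, e2, e3]
    rw [if_pos (by omega), if_pos (by omega), if_pos (by omega)]
    rw [qPoch_succ Q (k + (d + 1)), qPoch_succ Q k, qPoch_succ Q d]
    field_simp
    ring

/-- Gauss' `q`-binomial theorem. -/
lemma q_binomial_s13 {Q : ℂ} (hQ : ‖Q‖ < 1) (x : ℂ) (n : ℕ) :
    ∏ i ∈ Finset.range n, (1 + x * Q ^ i) =
      ∑ k ∈ Finset.range (n + 1), qBin Q n k * Q ^ (k.choose 2) * x ^ k := by
  induction n with
  | zero => simp [qBin, qPoch_zero]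
  | succ n ih =>
    rw [Finset.prod_range_succ, ih, mul_add, mul_one]
    rw [Finset.sum_range_succ' _ (n + 1)]
    have h1 : ∀ k ∈ Finset.range (n + 1),
        qBin Q (n + 1) (k + 1) * Q ^ ((k + 1).choose 2) * x ^ (k + 1) =
          qBin Q n (k + 1) * Q ^ ((k + 1).choose 2) * x ^ (k + 1) +
          qBin Q n k * Q ^ (k.choose 2) * x ^ k * (x * Q ^ n) := by
      intro k hk
      have hk' : k ≤ n := by simpa [Nat.lt_succ_iff] using hk
      rw [qBin_succ_succ hQ hk']
      have : (k + 1).choose 2 = k + k.choose 2 := by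
        rw [Nat.choose_succ_succ' k 1, Nat.choose_one_right]
      rw [this]
      have e : Q ^ n = Q ^ (n - k) * Q ^ k := by rw [← pow_add]; congr 1; omega
      rw [e]
      ring
    rw [Finset.sum_congr rfl h1, Finset.sum_add_distrib, Finset.sum_mul]
    rw [Finset.sum_range_succ' _ n]
    rw [Finset.sum_range_succ (fun k => qBin Q n (k + 1) * Q ^ ((k + 1).choose 2) * x ^ (k + 1)) n]
    have h2 : qBin Q n (n + 1) = 0 := by simp [qBin]
    rw [h2, qBin_zero hQ, qBin_zero hQ]
    ring

/-- Finite form of the Jacobi triple product (at `z = 1`). -/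
lemma finite_jtp {q : ℂ} (hq : ‖q‖ < 1) (hq0 : q ≠ 0) (N : ℕ) :
    (∏ i ∈ Finset.range N, (1 + q ^ (2 * i + 1))) ^ 2 =
      ∑ k ∈ Finset.range (2 * N + 1), qBin (q ^ 2) (2 * N) k * q ^ (((k : ℤ) - N).natAbs ^ 2) := by
  have hQ : ‖q ^ 2‖ < 1 := by rw [norm_pow]; exact pow_lt_one₀ (norm_nonneg _) hq (by omega)
  have key := q_binomial_s13 hQ (q * (q ^ (2 * N))⁻¹) (2 * N)
  have hqN : q ^ (N ^ 2) ≠ 0 := pow_ne_zero _ hq0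
  have hL : q ^ (N ^ 2) * ∏ i ∈ Finset.range (2 * N), (1 + q * (q ^ (2 * N))⁻¹ * (q ^ 2) ^ i) =
      (∏ i ∈ Finset.range N, (1 + q ^ (2 * i + 1))) ^ 2 := by
    have e : 2 * N = N + N := by ring
    rw [e, Finset.prod_range_add, ← e, sq (∏ i ∈ Finset.range N, (1 + q ^ (2 * i + 1))), ← mul_assoc]
    congr 1
    · rw [← Finset.prod_range_reflect]
      have : q ^ (N ^ 2) = ∏ i ∈ Finset.range N, q ^ (2 * i + 1) := by
        rw [Finset.prod_pow_eq_pow_sum]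
        congr 1
        clear * -
        induction N with
        | zero => simp
        | succ n ih => rw [Finset.sum_range_succ, ← ih]; ring
      rw [this, ← Finset.prod_mul_distrib]
      refine Finset.prod_congr rfl fun i hi => ?_
      have hi' := Finset.mem_range.mp hi
      have h3 : q ^ (2 * N) = q ^ (2 * i + 1) * q * (q ^ 2) ^ (N - 1 - i) := by
        rw [← pow_mul, ← pow_succ, ← pow_add]; congr 1; omega
      rw [h3]
      have := pow_ne_zero (2 * i + 1) hq0
      have := pow_ne_zero (N - 1 - i) (pow_ne_zero 2 hq0)
      field_simp
      ring
    · refine Finset.prod_congr rfl fun i _ => ?_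
      have := pow_ne_zero (2 * N) hq0
      have h3 : (q ^ 2) ^ (N + i) = q ^ (2 * N) * q ^ (2 * i) := by
        rw [← pow_mul, ← pow_add]; congr 1; ring
      rw [h3]
      field_simp
      ring
  rw [← hL, key, Finset.mul_sum]
  refine Finset.sum_congr rfl fun k _ => ?_
  have h4 : q ^ (N ^ 2) * ((q ^ 2) ^ (k.choose 2) * (q * (q ^ (2 * N))⁻¹) ^ k) =
      q ^ (((k : ℤ) - N).natAbs ^ 2) := by
    rw [mul_pow, inv_pow, ← pow_mul, ← pow_mul]
    have h5 : q ^ (2 * N * k) ≠ 0 := pow_ne_zero _ hq0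
    field_simp
    rw [← pow_add, ← pow_add, ← pow_add]
    congr 1
    have h6 : 2 * k.choose 2 + k = k ^ 2 := by
      have := Nat.triangle_succ k
      rw [Nat.choose_two_right]
      rcases k with _ | k
      · simp
      · have h : 2 ∣ (k + 1) * (k + 1 - 1) := by
          simpa [mul_comm] using (Nat.even_mul_succ_self k).two_dvd
        rw [Nat.mul_div_cancel' h]
        simp; ring
    zify
    rw [sq_abs]
    zify at h6
    linear_combination h6
  rw [← h4]; ring

/-- Factors of the product expansion of the theta function. -/
noncomputable def jf (n : ℕ) (z : ℂ) : ℂ :=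
  if Even n then (1 + z ^ (n + 1)) ^ 2 else 1 - z ^ (n + 1)

lemma jf_even (n : ℕ) (z : ℂ) : jf (2 * n) z = (1 + z ^ (2 * n + 1)) ^ 2 := by
  simp [jf]

lemma jf_odd (n : ℕ) (z : ℂ) : jf (2 * n + 1) z = 1 - (z ^ 2) ^ (n + 1) := by
  have : ¬ Even (2 * n + 1) := by simp
  rw [jf, if_neg this, ← pow_mul]; ring_nf

lemma prod_jf (N : ℕ) (z : ℂ) : ∏ n ∈ Finset.range (2 * N), jf n z =
    qPoch (z ^ 2) N * (∏ i ∈ Finset.range N, (1 + z ^ (2 * i + 1))) ^ 2 := by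
  induction N with
  | zero => simp [qPoch]
  | succ N ih =>
    rw [show 2 * (N + 1) = 2 * N + 1 + 1 by ring, Finset.prod_range_succ, Finset.prod_range_succ,
      ih, jf_even, jf_odd, qPoch_succ, Finset.prod_range_succ]
    ring

lemma norm_jf_sub_one_le (n : ℕ) (z : ℂ) (hz : ‖z‖ < 1) : ‖jf n z - 1‖ ≤ 3 * ‖z‖ ^ (n + 1) := by
  have h0 : 0 ≤ ‖z‖ ^ (n + 1) := by positivity
  have h1 : ‖z‖ ^ (n + 1) ≤ 1 := pow_le_one₀ (norm_nonneg _) hz.le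
  rw [jf]
  split_ifs
  · have : (1 + z ^ (n + 1)) ^ 2 - 1 = 2 * z ^ (n + 1) + z ^ (n + 1) * z ^ (n + 1) := by ring
    rw [this]
    refine (norm_add_le _ _).trans ?_
    rw [norm_mul, norm_mul, norm_pow]
    simp only [Complex.norm_ofNat]
    nlinarith
  · simp only [sub_sub_cancel_left, norm_neg, norm_pow]
    linarith

lemma jf_ne_zero (n : ℕ) {z : ℂ} (hz : ‖z‖ < 1) : jf n z ≠ 0 := by
  rw [jf]
  split_ifs
  · apply pow_ne_zero
    intro h
    have h1 : z ^ (n + 1) = -1 := by linear_combination h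
    have h2 : ‖z‖ ^ (n + 1) = 1 := by rw [← norm_pow, h1]; simp
    have h3 : ‖z‖ ^ (n + 1) < 1 := pow_lt_one₀ (norm_nonneg _) hz (by omega)
    linarith
  · exact one_sub_pow_ne hz n

lemma jf_differentiable (n : ℕ) : Differentiable ℂ (jf n) := by
  unfold jf
  split_ifs <;> fun_prop

lemma summable_geom3 {r : ℝ} (h0 : 0 ≤ r) (h1 : r < 1) : Summable fun n : ℕ => 3 * r ^ (n + 1) :=
  ((summable_nat_add_iff 1).mpr (summable_geometric_of_lt_one h0 h1)).mul_left 3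

lemma summable_jf {z : ℂ} (hz : ‖z‖ < 1) : Summable fun n => ‖jf n z - 1‖ :=
  Summable.of_nonneg_of_le (fun _ => norm_nonneg _) (fun n => norm_jf_sub_one_le n z hz)
    (summable_geom3 (norm_nonneg _) hz)

lemma multipliable_jf {z : ℂ} (hz : ‖z‖ < 1) : Multipliable fun n => jf n z := by
  have := multipliable_one_add_of_summable (f := fun n => jf n z - 1) (summable_jf hz)
  simpa using this

lemma tprod_jf_ne_zero {z : ℂ} (hz : ‖z‖ < 1) : ∏' n, jf n z ≠ 0 := by
  have := tprod_one_add_ne_zero_of_summable (f := fun n => jf n z - 1)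
    (fun n => by simpa using jf_ne_zero n hz) (summable_jf hz)
  simpa using this

lemma multipliableLocallyUniformlyOn_jf :
    MultipliableLocallyUniformlyOn (fun n z => jf n z) (Metric.ball (0 : ℂ) 1) := by
  use fun q ↦ ∏' n, jf n q
  have e : (fun (n : ℕ) (z : ℂ) => jf n z) = fun n z => 1 + (jf n z - 1) := by
    ext n z; ring
  rw [show (fun q ↦ ∏' n, jf n q) = fun q ↦ ∏' n, (1 + (jf n q - 1)) by simp, e]
  apply hasProdLocallyUniformlyOn_of_forall_compact Metric.isOpen_ball
  intro K hK hcK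
  rcases K.eq_empty_or_nonempty with hN | hN
  · simpa [hasProdUniformlyOn_iff_tendstoUniformlyOn, hN] using tendstoUniformlyOn_empty
  · obtain ⟨q₀, hq₀, _, HB⟩ := hcK.exists_sSup_image_eq_and_ge hN
      (show ContinuousOn (fun q : ℂ ↦ ‖q‖) K by fun_prop)
    refine (summable_geom3 (norm_nonneg q₀)
      (by simpa [Metric.mem_ball, dist_zero_right] using hK hq₀)).hasProdUniformlyOn_nat_one_add
      hcK (.of_forall fun n x hx ↦ ?_) (fun n ↦ ((jf_differentiable n).continuous.sub continuous_const).continuousOn)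
    refine (norm_jf_sub_one_le n x (by simpa using hK hx)).trans ?_
    have := pow_le_pow_left₀ (norm_nonneg _) (HB x hx) (n + 1)
    linarith

/-- The theta function in the nome. -/
noncomputable def thetaC (z : ℂ) : ℂ := ∑' j : ℤ, z ^ (j.natAbs ^ 2)

lemma summable_theta {r : ℝ} (h0 : 0 ≤ r) (h1 : r < 1) :
    Summable fun j : ℤ => r ^ (j.natAbs ^ 2) := by
  have hs : Summable fun n : ℕ => r ^ (n ^ 2) := by
    refine Summable.of_nonneg_of_le (fun _ => by positivity) (fun n => ?_)
      (summable_geometric_of_lt_one h0 h1)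
    exact pow_le_pow_of_le_one h0 h1.le (by nlinarith [Nat.le_self_pow (two_ne_zero) n])
  exact Summable.of_nat_of_neg (by simpa using hs) (by simpa using hs)

lemma qPoch_bounds {Q : ℂ} (hQ : ‖Q‖ < 1) : ∃ P : ℂ, P ≠ 0 ∧
    Filter.Tendsto (qPoch Q) Filter.atTop (nhds P) := by
  refine ⟨∏' n : ℕ, (1 - Q ^ (n + 1)), ?_, ?_⟩
  · have := tprod_one_add_ne_zero_of_summable (f := fun n : ℕ ↦ -Q ^ (n + 1))
      (fun n => by simpa [← sub_eq_add_neg] using one_sub_pow_ne hQ n)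
      (by simpa using (summable_nat_add_iff 1).mpr (summable_geometric_of_lt_one (norm_nonneg _) hQ))
    simpa [← sub_eq_add_neg] using this
  · exact (ModularForm.multipliable_one_sub_pow hQ).hasProd.tendsto_prod_nat

/-- Jacobi triple product at `z = 1`. -/
lemma tprod_jf_eq {z : ℂ} (hz : ‖z‖ < 1) : ∏' n, jf n z = thetaC z := by
  rcases eq_or_ne z 0 with rfl | hz0
  · have h1 : ∀ n, jf n 0 = 1 := by intro n; simp [jf]
    simp only [h1, tprod_one, thetaC]
    rw [tsum_eq_single 0]
    · simp
    · intro j hj; simp [hj]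
  have hQ : ‖z ^ 2‖ < 1 := by rw [norm_pow]; exact pow_lt_one₀ (norm_nonneg _) hz (by omega)
  obtain ⟨P, hP0, hP⟩ := qPoch_bounds hQ
  have hPi : Filter.Tendsto (fun n => (qPoch (z ^ 2) n)⁻¹) Filter.atTop (nhds P⁻¹) := hP.inv₀ hP0
  obtain ⟨A, hA⟩ := (Metric.isBounded_range_of_tendsto _ hP).exists_norm_le
  obtain ⟨B, hB⟩ := (Metric.isBounded_range_of_tendsto _ hPi).exists_norm_le
  have hA' : ∀ n, ‖qPoch (z ^ 2) n‖ ≤ A := fun n => hA _ ⟨n, rfl⟩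
  have hB' : ∀ n, ‖(qPoch (z ^ 2) n)⁻¹‖ ≤ B := fun n => hB _ ⟨n, rfl⟩
  have hA0 : 0 ≤ A := (norm_nonneg _).trans (hA' 0)
  have hB0 : 0 ≤ B := (norm_nonneg _).trans (hB' 0)
  let F : ℕ → ℤ → ℂ := fun N j => if -(N : ℤ) ≤ j ∧ j ≤ N then
    qPoch (z ^ 2) N * (qPoch (z ^ 2) (2 * N) *
      ((qPoch (z ^ 2) (N + j).toNat)⁻¹ * (qPoch (z ^ 2) (N - j).toNat)⁻¹)) * z ^ (j.natAbs ^ 2) else 0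
  have hF : ∀ N, ∑' j, F N j = ∏ n ∈ Finset.range (2 * N), jf n z := by
    intro N
    rw [prod_jf, finite_jtp hz hz0, Finset.mul_sum]
    rw [tsum_eq_sum (s := Finset.Icc (-(N : ℤ)) N)]
    · symm
      refine Finset.sum_bij (fun k _ => (k : ℤ) - N) ?_ ?_ ?_ ?_
      · intro k hk
        simp only [Finset.mem_range, Finset.mem_Icc] at *
        omega
      · intro a _ b _ h
        simpa using h
      · intro b hb
        simp only [Finset.mem_Icc] at hb
        refine ⟨(b + N).toNat, ?_, ?_⟩
        · simp only [Finset.mem_range]; omega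
        · omega
      · intro k hk
        simp only [Finset.mem_range] at hk
        simp only [F]
        rw [if_pos (by omega), qBin, if_pos (by omega)]
        have e1 : ((N : ℤ) + ((k : ℤ) - N)).toNat = k := by omega
        have e2 : ((N : ℤ) - ((k : ℤ) - N)).toNat = 2 * N - k := by omega
        rw [e1, e2, div_eq_mul_inv, mul_inv]
        ring
    · intro j hj
      simp only [Finset.mem_Icc] at hj
      simp only [F]
      rw [if_neg hj]
  have hlim : Filter.Tendsto (fun N => ∑' j, F N j) Filter.atTop (nhds (thetaC z)) := by
    refine tendsto_tsum_of_dominated_convergence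
      (bound := fun j : ℤ => A * (A * (B * B)) * ‖z‖ ^ (j.natAbs ^ 2)) ?_ ?_ ?_
    · exact (summable_theta (norm_nonneg _) hz).mul_left _
    · intro j
      have h2N : Filter.Tendsto (fun N : ℕ => 2 * N) Filter.atTop Filter.atTop :=
        Filter.tendsto_atTop_mono (fun n => by simp only [id]; omega) Filter.tendsto_id
      have hp : Filter.Tendsto (fun N : ℕ => ((N : ℤ) + j).toNat) Filter.atTop Filter.atTop := by
        refine Filter.tendsto_atTop.mpr fun b => ?_
        filter_upwards [Filter.eventually_ge_atTop (b + j.natAbs)] with N hN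
        omega
      have hm : Filter.Tendsto (fun N : ℕ => ((N : ℤ) - j).toNat) Filter.atTop Filter.atTop := by
        refine Filter.tendsto_atTop.mpr fun b => ?_
        filter_upwards [Filter.eventually_ge_atTop (b + j.natAbs)] with N hN
        omega
      have := ((hP.mul ((hP.comp h2N).mul ((hPi.comp hp).mul (hPi.comp hm)))).mul_const
        (z ^ (j.natAbs ^ 2)))
      have e : P * (P * (P⁻¹ * P⁻¹)) * z ^ (j.natAbs ^ 2) = z ^ (j.natAbs ^ 2) := by
        field_simp
      rw [e] at this
      refine this.congr' ?_
      filter_upwards [Filter.eventually_ge_atTop j.natAbs] with N hN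
      simp only [F, Function.comp]
      rw [if_pos (by omega)]
    · refine Filter.Eventually.of_forall fun N j => ?_
      simp only [F]
      split_ifs
      · rw [norm_mul, norm_mul, norm_mul, norm_mul, norm_pow]
        gcongr <;> first | exact hA' _ | exact hB' _
      · simp only [norm_zero]; positivity
  have h2N : Filter.Tendsto (fun N : ℕ => 2 * N) Filter.atTop Filter.atTop :=
    Filter.tendsto_atTop_mono (fun n => by simp only [id]; omega) Filter.tendsto_id
  have hprod := (multipliable_jf hz).hasProd.tendsto_prod_nat.comp h2N
  simp only [hF] at hlim
  exact tendsto_nhds_unique hprod hlim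

/-- weights -/
noncomputable def jw (n : ℕ) : ℝ := if Even n then 2 else 1

lemma sinh_ineq (y : ℝ) (hy : 0 ≤ y) : y ^ 2 * (1 + 2 * Real.cosh y) ≤ 3 * Real.sinh y ^ 2 := by
  have h1 := (Real.hasSum_cosh y).mul_left 2 |>.mul_left (y ^ 2)
  have h2 := Real.hasSum_cosh (2 * y)
  have hs : 3 * Real.sinh y ^ 2 = 3 / 2 * (Real.cosh (2 * y) - 1) := by
    rw [Real.cosh_two_mul, Real.cosh_sq]; ring
  have h3 := ((hasSum_nat_add_iff' 2).mpr h2).mul_left (3 / 2)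
  have h4 := (hasSum_nat_add_iff' 1).mpr h1
  have := hasSum_le (fun n => ?_) h4 h3
  · simp [Finset.sum_range_succ] at this
    rw [hs]; nlinarith
  · have e1 : (2 * (n + 2)).factorial = (2 * n + 4) * (2 * n + 3) * (2 * (n + 1)).factorial := by
      rw [show 2 * (n + 2) = 2 * (n + 1) + 1 + 1 by ring, Nat.factorial_succ, Nat.factorial_succ]
      ring
    rw [e1]
    push_cast
    have hf : (0 : ℝ) < ((2 * (n + 1)).factorial : ℝ) := by positivity
    have hkey : (2 : ℝ) * ((2 * n + 4) * (2 * n + 3)) ≤ 3 / 2 * 2 ^ (2 * (n + 2)) := by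
      clear * -
      rw [pow_mul]
      norm_num
      induction n with
      | zero => norm_num
      | succ n ih =>
        push_cast
        rw [show n + 1 + 2 = n + 2 + 1 by ring, pow_succ]
        have : (0 : ℝ) ≤ n := by positivity
        nlinarith
    have e2 : (3 / 2 : ℝ) * ((2 * y) ^ (2 * (n + 2)) / ((2 * n + 4) * (2 * n + 3) * ((2 * (n + 1)).factorial : ℝ))) =
      (y ^ (2 * (n + 2)) / ((2 * (n + 1)).factorial : ℝ)) * ((3 / 2 * 2 ^ (2 * (n + 2))) / ((2 * n + 4) * (2 * n + 3))) := by
      rw [mul_pow]; field_simp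
    have e3 : y ^ 2 * (2 * (y ^ (2 * (n + 1)) / ((2 * (n + 1)).factorial : ℝ))) =
      (y ^ (2 * (n + 2)) / ((2 * (n + 1)).factorial : ℝ)) * 2 := by
      rw [show 2 * (n + 2) = 2 + 2 * (n + 1) by ring, pow_add]; ring
    rw [e2, e3]
    apply mul_le_mul_of_nonneg_left _ (by positivity)
    rw [le_div_iff₀ (by positivity)]
    exact hkey

lemma inner_sum_le (y : ℝ) (hy : 0 < y) (N : ℕ) :
    ∑ n ∈ Finset.range N, jw n * (n + 1) * (Real.exp (-y)) ^ (n + 1) ≤ 3 / (2 * y ^ 2) := by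
  set x := Real.exp (-y) with hx
  have hx0 : 0 < x := Real.exp_pos _
  have hx1 : x < 1 := by rw [hx, Real.exp_lt_one_iff]; linarith
  have hx2 : x ^ 2 < 1 := by nlinarith
  -- closed form
  have hclosed : ∀ M : ℕ, ∑ n ∈ Finset.range (2 * M), jw n * (n + 1) * x ^ (n + 1) ≤
      2 * x * (1 + x + x ^ 2) / (1 - x ^ 2) ^ 2 := by
    intro M
    have hle : ∀ M : ℕ, ∑ n ∈ Finset.range (2 * M), jw n * (n + 1) * x ^ (n + 1) +
        x ^ (2 * M) * (2 * x * (1 + x + x ^ 2) / (1 - x ^ 2) ^ 2 + 2 * M * x * (2 + x) / (1 - x ^ 2))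
          = 2 * x * (1 + x + x ^ 2) / (1 - x ^ 2) ^ 2 := by
      intro M
      induction M with
      | zero => simp
      | succ M ih =>
        refine Eq.trans ?_ ih
        rw [show 2 * (M + 1) = 2 * M + 1 + 1 by ring, Finset.sum_range_succ, Finset.sum_range_succ]
        have e1 : jw (2 * M) = 2 := by simp [jw]
        have e2 : jw (2 * M + 1) = 1 := by simp [jw]
        rw [e1, e2]
        have hne : 1 - x ^ 2 ≠ 0 := by linarith
        push_cast
        generalize ∑ n ∈ Finset.range (2 * M), jw n * ((n : ℝ) + 1) * x ^ (n + 1) = T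
        rw [pow_succ x (2 * M + 1), pow_succ x (2 * M)]
        generalize x ^ (2 * M) = Y
        field_simp
        ring
    have hpos : 0 ≤ x ^ (2 * M) * (2 * x * (1 + x + x ^ 2) / (1 - x ^ 2) ^ 2 + 2 * M * x * (2 + x) / (1 - x ^ 2)) := by
      have : 0 < 1 - x ^ 2 := by linarith
      positivity
    linarith [hle M]
  have hmono : ∑ n ∈ Finset.range N, jw n * (n + 1) * x ^ (n + 1) ≤
      ∑ n ∈ Finset.range (2 * N), jw n * (n + 1) * x ^ (n + 1) := by
    apply Finset.sum_le_sum_of_subset_of_nonneg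
    · apply Finset.range_subset_range.mpr; omega
    · intro n _ _
      have : 0 ≤ jw n := by unfold jw; split_ifs <;> norm_num
      positivity
  refine hmono.trans ((hclosed N).trans ?_)
  have hs := sinh_ineq y hy.le
  rw [Real.cosh_eq, Real.sinh_eq, ← hx] at hs
  have hex : Real.exp y = x⁻¹ := by rw [hx, Real.exp_neg, inv_inv]
  rw [hex] at hs
  rw [div_le_div_iff₀ (by apply pow_pos; linarith) (by positivity)]
  have e1 : y ^ 2 * (1 + 2 * ((x⁻¹ + x) / 2)) * (4 * x ^ 2) = 2 * x * (1 + x + x ^ 2) * (2 * y ^ 2) := by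
    field_simp; ring
  have e2 : 3 * ((x⁻¹ - x) / 2) ^ 2 * (4 * x ^ 2) = 3 * (1 - x ^ 2) ^ 2 := by
    field_simp; norm_num
  rw [← e1, ← e2]
  exact mul_le_mul_of_nonneg_right hs (by positivity)

lemma partial_lambert_le (t : ℝ) (ht : 0 < t) (N : ℕ) :
    ∑ n ∈ Finset.range N, jw n * (n + 1) * ((Real.exp (-t)) ^ (n + 1) / (1 - (Real.exp (-t)) ^ (n + 1)))
      ≤ Real.pi ^ 2 / (4 * t ^ 2) := by
  set r := Real.exp (-t) with hr
  have hr0 : 0 < r := Real.exp_pos _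
  have hr1 : r < 1 := by rw [hr, Real.exp_lt_one_iff]; linarith
  have hg : ∀ n : ℕ, HasSum (fun k : ℕ => jw n * (n + 1) * (r ^ (k + 1)) ^ (n + 1))
      (jw n * (n + 1) * (r ^ (n + 1) / (1 - r ^ (n + 1)))) := by
    intro n
    have hl : r ^ (n + 1) < 1 := pow_lt_one₀ hr0.le hr1 (by omega)
    have := ((hasSum_geometric_of_lt_one (by positivity) hl).mul_left (r ^ (n + 1))).mul_left
      (jw n * (n + 1))
    rw [← div_eq_mul_inv] at this
    have e : (fun k : ℕ => jw n * (n + 1) * (r ^ (k + 1)) ^ (n + 1)) =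
        fun k : ℕ => jw n * (n + 1) * (r ^ (n + 1) * (r ^ (n + 1)) ^ k) := by
      funext k
      rw [← pow_mul, ← pow_mul, ← pow_add]; congr 2; ring
    rw [e]; exact this
  have hsum := hasSum_sum (s := Finset.range N) (fun n _ => hg n)
  have hz := ((hasSum_nat_add_iff' 1).mpr hasSum_zeta_two).mul_left (3 / (2 * t ^ 2))
  have := hasSum_le (fun k => ?_) hsum hz
  · refine this.trans (le_of_eq ?_)
    simp; field_simp; norm_num
  · have h := inner_sum_le ((k + 1 : ℕ) * t) (by positivity) N
    have e : Real.exp (-((k + 1 : ℕ) * t)) = r ^ (k + 1) := by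
      rw [hr, ← Real.exp_nat_mul]; congr 1; ring
    rw [e] at h
    refine h.trans (le_of_eq ?_)
    field_simp


lemma theta_small_le {s : ℝ} (h0 : 0 ≤ s) (h1 : s ≤ 0.0021) :
    ∑' j : ℤ, s ^ (j.natAbs ^ 2) ≤ 1.0045 := by
  have hlt : s < 1 := by linarith
  have hg := hasSum_geometric_of_lt_one h0 hlt
  have hle1 : ∀ n : ℕ, s ^ (n ^ 2) ≤ s ^ n := fun n =>
    pow_le_pow_of_le_one h0 hlt.le (Nat.le_self_pow two_ne_zero n)
  have hle2 : ∀ n : ℕ, s ^ ((n + 1) ^ 2) ≤ s * s ^ n := fun n => by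
    rw [← pow_succ']
    exact pow_le_pow_of_le_one h0 hlt.le (Nat.le_self_pow two_ne_zero _)
  have hs1 : Summable fun n : ℕ => s ^ (n ^ 2) :=
    Summable.of_nonneg_of_le (fun _ => by positivity) hle1 hg.summable
  have hs2 : Summable fun n : ℕ => s ^ ((n + 1) ^ 2) :=
    Summable.of_nonneg_of_le (fun _ => by positivity) hle2 (hg.summable.mul_left s)
  have h := HasSum.of_nat_of_neg_add_one (f := fun j : ℤ => s ^ (j.natAbs ^ 2))
    (m := ∑' n : ℕ, s ^ (n ^ 2)) (m' := ∑' n : ℕ, s ^ ((n + 1) ^ 2))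
    (by simpa using hs1.hasSum) (by
      have e : ∀ n : ℕ, (-((n : ℤ) + 1)).natAbs = n + 1 := fun n => by omega
      simp only [e]; exact hs2.hasSum)
  rw [h.tsum_eq]
  have b1 : ∑' n : ℕ, s ^ (n ^ 2) ≤ (1 - s)⁻¹ := hasSum_le hle1 hs1.hasSum hg
  have b2 : ∑' n : ℕ, s ^ ((n + 1) ^ 2) ≤ s * (1 - s)⁻¹ := hasSum_le hle2 hs2.hasSum (hg.mul_left s)
  have b3 : (1 + s) * (1 - s)⁻¹ ≤ 1.0045 := by
    rw [← div_eq_mul_inv, div_le_iff₀ (by linarith)]; linarith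
  linarith

lemma exp_six : Real.exp (-6.2) ≤ 0.0021 := by
  have h1 := Real.exp_one_gt_d9
  have h2 : Real.exp 6 = Real.exp 1 ^ 6 := by rw [← Real.exp_nat_mul]; norm_num
  have h3 : (2.718 : ℝ) ^ 6 ≤ Real.exp 1 ^ 6 := by gcongr; linarith
  have h4 := Real.add_one_le_exp (0.2 : ℝ)
  have h5 : Real.exp 6.2 = Real.exp 6 * Real.exp 0.2 := by rw [← Real.exp_add]; norm_num
  have h6 : (480 : ℝ) ≤ Real.exp 6.2 := by
    rw [h5, h2]
    have : (2.718 : ℝ) ^ 6 * 1.2 ≤ Real.exp 1 ^ 6 * Real.exp 0.2 := by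
      apply mul_le_mul h3 (by linarith) (by norm_num) (by positivity)
    refine le_trans ?_ this
    norm_num
  rw [Real.exp_neg]
  calc (Real.exp 6.2)⁻¹ ≤ (480 : ℝ)⁻¹ := by gcongr
    _ ≤ _ := by norm_num

lemma theta_le_sqrt (m : ℕ) (hm : 2 ≤ m) :
    ∑' j : ℤ, (Real.exp (-(1.01 * Real.pi / m))) ^ (j.natAbs ^ 2) ≤ (m : ℝ) ^ (1 / 2 : ℝ) := by
  have hm' : (2 : ℝ) ≤ m := by exact_mod_cast hm
  have hmpos : (0 : ℝ) < m := by linarith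
  have ha : 0 < (1.01 / m : ℝ) := by positivity
  have key := Real.tsum_exp_neg_mul_int_sq ha
  have hcast : ∀ j : ℤ, ((j.natAbs ^ 2 : ℕ) : ℝ) = (j : ℝ) ^ 2 := by
    intro j
    rw [Nat.cast_pow, Nat.cast_natAbs, Int.cast_abs, sq_abs]
  have e1 : ∀ j : ℤ, (Real.exp (-(1.01 * Real.pi / m))) ^ (j.natAbs ^ 2) =
      Real.exp (-Real.pi * (1.01 / m) * (j : ℝ) ^ 2) := by
    intro j
    rw [← Real.exp_nat_mul, hcast]; congr 1; ring
  have e2 : ∀ j : ℤ, (Real.exp (-(Real.pi * m / 1.01))) ^ (j.natAbs ^ 2) =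
      Real.exp (-Real.pi / (1.01 / m) * (j : ℝ) ^ 2) := by
    intro j
    rw [← Real.exp_nat_mul, hcast]; congr 1; field_simp
  simp only [e1, key]
  simp only [← e2]
  have hs : Real.exp (-(Real.pi * m / 1.01)) ≤ 0.0021 := by
    refine le_trans (Real.exp_le_exp.mpr ?_) exp_six
    have := Real.pi_gt_d2
    rw [neg_le_neg_iff, le_div_iff₀ (by norm_num)]
    nlinarith
  have hb := theta_small_le (Real.exp_pos _).le hs
  have h1 : (1 : ℝ) / (1.01 / m) ^ (1 / 2 : ℝ) = (m : ℝ) ^ (1 / 2 : ℝ) / 1.01 ^ (1 / 2 : ℝ) := by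
    rw [Real.div_rpow (by norm_num) hmpos.le, one_div_div]
  rw [h1, div_mul_eq_mul_div, div_le_iff₀ (by positivity)]
  apply mul_le_mul_of_nonneg_left _ (by positivity)
  refine hb.trans ?_
  rw [← Real.sqrt_eq_rpow]
  apply Real.le_sqrt_of_sq_le
  norm_num

lemma exp_pi_bound : Real.exp (1.01 * Real.pi) ≤ 24.48 := by
  have h1 := Real.exp_one_lt_d9
  have hpi := Real.pi_lt_d4
  have h2 : Real.exp 3 = Real.exp 1 ^ 3 := by rw [← Real.exp_nat_mul]; norm_num
  have h3 : Real.exp 1 ^ 3 ≤ (2.7183 : ℝ) ^ 3 := by gcongr; linarith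
  have h4 := Real.add_one_le_exp (-0.1731 : ℝ)
  have h5 : Real.exp 0.1731 ≤ (0.8269 : ℝ)⁻¹ := by
    rw [Real.exp_neg] at h4
    rw [le_inv_comm₀ (Real.exp_pos _) (by norm_num)]
    linarith
  calc Real.exp (1.01 * Real.pi) ≤ Real.exp (3 + 0.1731) := Real.exp_le_exp.mpr (by linarith)
    _ = Real.exp 3 * Real.exp 0.1731 := Real.exp_add _ _
    _ ≤ (2.7183 : ℝ) ^ 3 * (0.8269 : ℝ)⁻¹ := by
      rw [h2]; apply mul_le_mul h3 h5 (Real.exp_pos _).le (by norm_num)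
    _ ≤ 24.48 := by norm_num

/-- `2 ∑_{n ≥ 1} X^{n²}`. -/
noncomputable def Tser : PowerSeries ℂ :=
  PowerSeries.mk fun n => if n ≠ 0 ∧ IsSquare n then 2 else 0

/-- truncation of `Tser` -/
noncomputable def Ttr (m : ℕ) : PowerSeries ℂ :=
  ∑ a : Fin (m + 1), if 1 ≤ a.1 then PowerSeries.monomial (a.1 ^ 2) (2 : ℂ) else 0

lemma coeff_Ttr_pow (m j : ℕ) :
    PowerSeries.coeff m (Ttr m ^ j) = (2 : ℂ) ^ j * (repCount j m : ℂ) := by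
  rw [Ttr, Fintype.sum_pow, map_sum]
  have h : ∀ p : Fin j → Fin (m + 1),
      PowerSeries.coeff m (∏ i, if 1 ≤ (p i).1 then PowerSeries.monomial ((p i).1 ^ 2) (2 : ℂ) else 0) =
      if ((∀ i, 1 ≤ (p i).1) ∧ ∑ i, ((p i).1) ^ 2 = m) then (2 : ℂ) ^ j else 0 := by
    intro p
    by_cases hp : ∀ i, 1 ≤ (p i).1
    · have e : (∏ i, if 1 ≤ (p i).1 then PowerSeries.monomial ((p i).1 ^ 2) (2 : ℂ) else 0) =
          PowerSeries.monomial (∑ i, (p i).1 ^ 2) ((2 : ℂ) ^ j) := by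
        have e0 : ∀ i, (if 1 ≤ (p i).1 then PowerSeries.monomial ((p i).1 ^ 2) (2 : ℂ) else 0) =
            PowerSeries.C 2 * PowerSeries.X ^ ((p i).1 ^ 2) := by
          intro i
          rw [if_pos (hp i), PowerSeries.monomial_eq_mk]
          ext n
          simp [PowerSeries.coeff_X_pow, PowerSeries.coeff_mk]
        simp only [e0]
        rw [Finset.prod_mul_distrib, Finset.prod_pow_eq_pow_sum]
        ext n
        simp [← map_pow, PowerSeries.coeff_X_pow, PowerSeries.coeff_monomial]
      rw [e, PowerSeries.coeff_monomial]
      simp only [hp, implies_true, true_and]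
      congr 1
      simp [eq_comm]
    · have hp' := hp
      push Not at hp
      obtain ⟨i, hi⟩ := hp
      rw [Finset.prod_eq_zero (Finset.mem_univ i) (by rw [if_neg (by omega)])]
      simp [hp']
  rw [Finset.sum_congr rfl (fun p _ => h p), ← Finset.sum_filter, Finset.sum_const, repCount]
  simp [mul_comm]

lemma coeff_Ttr (m n : ℕ) (hn : n ≤ m) :
    PowerSeries.coeff n (Ttr m) = PowerSeries.coeff n Tser := by
  rw [Ttr, map_sum, Tser, PowerSeries.coeff_mk]
  split_ifs with h
  · obtain ⟨h0, a, ha⟩ := h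
    have ha1 : 1 ≤ a := by rcases a with _ | a; · simp at ha; omega
                           · omega
    have ham : a < m + 1 := by nlinarith
    rw [Finset.sum_eq_single (⟨a, ham⟩ : Fin (m + 1))]
    · rw [if_pos ha1, PowerSeries.coeff_monomial, if_pos (by simp [ha, sq])]
    · intro b _ hb
      split_ifs
      · rw [PowerSeries.coeff_monomial, if_neg]
        intro h2
        apply hb
        ext
        simp only
        have : b.1 ^ 2 = a ^ 2 := by rw [← h2, ha, sq]
        exact (Nat.pow_left_injective two_ne_zero) this
      · simp
    · simp
  · apply Finset.sum_eq_zero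
    intro b _
    split_ifs with hb
    · rw [PowerSeries.coeff_monomial, if_neg]
      intro h2
      apply h
      refine ⟨?_, ⟨b.1, by rw [h2, sq]⟩⟩
      rw [h2]; positivity
    · simp

lemma coeff_Tser_pow (m j : ℕ) :
    PowerSeries.coeff m (Tser ^ j) = (2 : ℂ) ^ j * (repCount j m : ℂ) := by
  rw [← coeff_Ttr_pow]
  have h : PowerSeries.X ^ (m + 1) ∣ Tser ^ j - Ttr m ^ j := by
    refine dvd_trans ?_ (sub_dvd_pow_sub_pow _ _ j)
    rw [PowerSeries.X_pow_dvd_iff]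
    intro n hn
    rw [map_sub, coeff_Ttr m n (by omega), sub_self]
  rw [PowerSeries.X_pow_dvd_iff] at h
  have := h m (by omega)
  rw [map_sub, sub_eq_zero] at this
  exact this

lemma X_pow_dvd_Tser_pow (j : ℕ) : PowerSeries.X ^ j ∣ Tser ^ j := by
  apply pow_dvd_pow_of_dvd
  rw [PowerSeries.X_dvd_iff]
  simp [Tser, ← PowerSeries.coeff_zero_eq_constantCoeff_apply]

/-- generalized binomial coefficients -/
noncomputable def gb (u : ℝ) (j : ℕ) : ℂ := ((j.factorial : ℂ)⁻¹) * ∏ i ∈ Finset.range j, ((u : ℂ) - i)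

lemma gb_zero (u : ℝ) : gb u 0 = 1 := by simp [gb]

lemma gb_succ (u : ℝ) (j : ℕ) : ((j : ℂ) + 1) * gb u (j + 1) = (u - j) * gb u j := by
  simp only [gb, Finset.prod_range_succ, Nat.factorial_succ]
  have : (j.factorial : ℂ) ≠ 0 := by exact_mod_cast j.factorial_ne_zero
  have : (j : ℂ) + 1 ≠ 0 := by exact_mod_cast Nat.succ_ne_zero j
  push_cast
  field_simp

lemma aeval_binomPoly (u : ℝ) (j : ℕ) : ((Polynomial.aeval u (binomPoly j) : ℝ) : ℂ) = gb u j := by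
  simp [binomPoly, gb, map_prod]

lemma aeval_thetaCoeff (u : ℝ) (m : ℕ) : ((Polynomial.aeval u (thetaCoeff m) : ℝ) : ℂ) =
    ∑ j ∈ Finset.Icc 1 m, gb u j * PowerSeries.coeff m (Tser ^ j) := by
  rw [thetaCoeff, map_sum, Complex.ofReal_sum]
  refine Finset.sum_congr rfl fun j _ => ?_
  rw [coeff_Tser_pow, map_smul, ← aeval_binomPoly, Rat.smul_def]
  push_cast
  ring

/-- partial sums of the binomial series -/
noncomputable def FN (u : ℝ) (N : ℕ) : PowerSeries ℂ :=
  ∑ j ∈ Finset.range (N + 1), PowerSeries.C (gb u j) * Tser ^ j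

/-- the formal power series `ϑ^u` -/
noncomputable def Fser (u : ℝ) : PowerSeries ℂ :=
  PowerSeries.mk fun n => PowerSeries.coeff n (FN u n)

lemma coeff_FN_eq (u : ℝ) (n N : ℕ) (h : n ≤ N) :
    PowerSeries.coeff n (FN u N) = PowerSeries.coeff n (Fser u) := by
  rw [Fser, PowerSeries.coeff_mk]
  induction N, h using Nat.le_induction with
  | base => rfl
  | succ N hN ih =>
    rw [FN, Finset.sum_range_succ, ← FN, map_add, ih, PowerSeries.coeff_C_mul]
    have := PowerSeries.X_pow_dvd_iff.mp (X_pow_dvd_Tser_pow (N + 1)) n (by omega)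
    rw [this, mul_zero, add_zero]

lemma coeff_Fser_zero (u : ℝ) : PowerSeries.coeff 0 (Fser u) = 1 := by
  simp [Fser, FN, gb_zero]

lemma coeff_Fser (u : ℝ) (m : ℕ) (hm : 1 ≤ m) :
    PowerSeries.coeff m (Fser u) = ((Polynomial.aeval u (thetaCoeff m) : ℝ) : ℂ) := by
  rw [Fser, PowerSeries.coeff_mk, aeval_thetaCoeff, FN, map_sum, Finset.sum_range_succ']
  simp only [PowerSeries.coeff_C_mul, pow_zero]
  rw [PowerSeries.coeff_one, if_neg (by omega), mul_zero, add_zero]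
  rw [Finset.sum_bij (fun j _ => j + 1)]
  · intro a ha; simp at *; omega
  · intro a _ b _ h; simpa using h
  · intro b hb
    simp only [Finset.mem_Icc] at hb
    exact ⟨b - 1, by simp; omega, by omega⟩
  · intro a _; rfl

lemma FN_ode (u : ℝ) (N : ℕ) :
    PowerSeries.derivative ℂ (FN u N) * (1 + Tser) =
      PowerSeries.C (u : ℂ) * (PowerSeries.derivative ℂ Tser * FN u N) +
        PowerSeries.C (((N : ℂ) - u) * gb u N) * Tser ^ N * PowerSeries.derivative ℂ Tser := by
  induction N with
  | zero =>
    simp [FN, gb_zero, PowerSeries.derivative_one]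
  | succ N ih =>
    have e : FN u (N + 1) = FN u N + PowerSeries.C (gb u (N + 1)) * Tser ^ (N + 1) := by
      rw [FN, Finset.sum_range_succ, ← FN]
    have e2 : PowerSeries.derivative ℂ (PowerSeries.C (gb u (N + 1)) * Tser ^ (N + 1)) =
        PowerSeries.C (((N : ℂ) + 1) * gb u (N + 1)) * (Tser ^ N * PowerSeries.derivative ℂ Tser) := by
      rw [← PowerSeries.smul_eq_C_mul, Derivation.map_smul, PowerSeries.smul_eq_C_mul, PowerSeries.derivative_pow]
      simp only [map_mul, map_add, map_natCast, map_one]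
      push_cast
      ring
    rw [e, map_add, add_mul, ih, e2]
    have h3 : PowerSeries.C (((N : ℂ) + 1) * gb u (N + 1)) = PowerSeries.C (((u : ℂ) - N) * gb u N) := by
      rw [gb_succ]
    have h4 : PowerSeries.C (((N : ℂ) - u) * gb u N) = - PowerSeries.C (((u : ℂ) - N) * gb u N) := by
      rw [← map_neg]; congr 1; ring
    rw [h4, ← h3]
    simp only [map_mul, map_add, map_sub, map_natCast, map_one]
    push_cast
    ring

lemma Fser_ode (u : ℝ) :
    PowerSeries.derivative ℂ (Fser u) * (1 + Tser) =
      PowerSeries.C (u : ℂ) * (PowerSeries.derivative ℂ Tser * Fser u) := by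
  ext n
  have h := congrArg (PowerSeries.coeff n) (FN_ode u (n + 1))
  have h0 : PowerSeries.coeff n (PowerSeries.C ((((n + 1 : ℕ) : ℂ) - u) * gb u (n + 1)) *
      Tser ^ (n + 1) * PowerSeries.derivative ℂ Tser) = 0 := by
    have : PowerSeries.X ^ (n + 1) ∣ PowerSeries.C ((((n + 1 : ℕ) : ℂ) - u) * gb u (n + 1)) *
      Tser ^ (n + 1) * PowerSeries.derivative ℂ Tser :=
      Dvd.dvd.mul_right (Dvd.dvd.mul_left (X_pow_dvd_Tser_pow _) _) _
    exact PowerSeries.X_pow_dvd_iff.mp this n (by omega)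
  rw [map_add, h0, add_zero] at h
  rw [PowerSeries.coeff_C_mul] at h ⊢
  rw [PowerSeries.coeff_mul, PowerSeries.coeff_mul] at h ⊢
  have hL : ∀ p ∈ Finset.HasAntidiagonal.antidiagonal n,
      PowerSeries.coeff p.1 (PowerSeries.derivative ℂ (Fser u)) * PowerSeries.coeff p.2 (1 + Tser) =
      PowerSeries.coeff p.1 (PowerSeries.derivative ℂ (FN u (n + 1))) * PowerSeries.coeff p.2 (1 + Tser) := by
    intro p hp
    have := Finset.HasAntidiagonal.mem_antidiagonal.mp hp
    rw [PowerSeries.coeff_derivative, PowerSeries.coeff_derivative, coeff_FN_eq u _ _ (by omega)]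
  have hR : ∀ p ∈ Finset.HasAntidiagonal.antidiagonal n,
      PowerSeries.coeff p.1 (PowerSeries.derivative ℂ Tser) * PowerSeries.coeff p.2 (Fser u) =
      PowerSeries.coeff p.1 (PowerSeries.derivative ℂ Tser) * PowerSeries.coeff p.2 (FN u (n + 1)) := by
    intro p hp
    have := Finset.HasAntidiagonal.mem_antidiagonal.mp hp
    rw [coeff_FN_eq u _ _ (by omega)]
  rw [Finset.sum_congr rfl hL, Finset.sum_congr rfl hR]
  exact h

lemma ode_unique (a : ℂ) (G H : PowerSeries ℂ)
    (hG : PowerSeries.derivative ℂ G * (1 + Tser) = PowerSeries.C a * (PowerSeries.derivative ℂ Tser * G))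
    (hH : PowerSeries.derivative ℂ H * (1 + Tser) = PowerSeries.C a * (PowerSeries.derivative ℂ Tser * H))
    (h0 : PowerSeries.coeff 0 G = PowerSeries.coeff 0 H) : G = H := by
  ext n
  induction n using Nat.strong_induction_on with
  | _ n ih =>
    rcases n with _ | n
    · exact h0
    have hg := congrArg (PowerSeries.coeff n) hG
    have hh := congrArg (PowerSeries.coeff n) hH
    rw [PowerSeries.coeff_C_mul, PowerSeries.coeff_mul, PowerSeries.coeff_mul] at hg hh
    have hR : ∀ p ∈ Finset.HasAntidiagonal.antidiagonal n,
      PowerSeries.coeff p.1 (PowerSeries.derivative ℂ Tser) * PowerSeries.coeff p.2 G =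
      PowerSeries.coeff p.1 (PowerSeries.derivative ℂ Tser) * PowerSeries.coeff p.2 H := by
      intro p hp
      have := Finset.HasAntidiagonal.mem_antidiagonal.mp hp
      rw [ih p.2 (by omega)]
    rw [Finset.sum_congr rfl hR, ← hh, ← sub_eq_zero, ← Finset.sum_sub_distrib] at hg
    rw [Finset.sum_eq_single (n, 0)] at hg
    · have hT : PowerSeries.coeff 0 Tser = 0 := by simp [Tser]
      simp only [PowerSeries.coeff_derivative, map_add, hT, PowerSeries.coeff_zero_one, add_zero,
        mul_one, ← sub_mul] at hg
      have hne : (n : ℂ) + 1 ≠ 0 := by exact_mod_cast Nat.succ_ne_zero n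
      exact sub_eq_zero.mp ((mul_eq_zero.mp hg).resolve_right hne)
    · intro p hp hne
      have h2 := Finset.HasAntidiagonal.mem_antidiagonal.mp hp
      have hlt : p.1 < n := by
        rcases Nat.lt_or_ge p.1 n with h | h
        · exact h
        · exfalso; apply hne; ext <;> simp <;> omega
      rw [PowerSeries.coeff_derivative, PowerSeries.coeff_derivative, ih (p.1 + 1) (by omega), sub_self]
    · intro h
      simp at h

/-- Taylor series at `0`. -/
noncomputable def tay (f : ℂ → ℂ) : PowerSeries ℂ :=
  PowerSeries.mk fun n => iteratedDeriv n f 0 / (n.factorial : ℂ)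

lemma tay_mul {f g : ℂ → ℂ} (hf : AnalyticAt ℂ f 0) (hg : AnalyticAt ℂ g 0) :
    tay (f * g) = tay f * tay g := by
  ext n
  rw [PowerSeries.coeff_mul, tay, PowerSeries.coeff_mk,
    iteratedDeriv_mul hf.contDiffAt hg.contDiffAt, Finset.sum_div,
    Finset.Nat.sum_antidiagonal_eq_sum_range_succ_mk]
  refine Finset.sum_congr rfl fun k hk => ?_
  have hk' : k ≤ n := by simpa [Nat.lt_succ_iff] using hk
  simp only [tay, PowerSeries.coeff_mk]
  rw [Nat.cast_choose ℂ hk']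
  have h1 : (k.factorial : ℂ) ≠ 0 := by exact_mod_cast k.factorial_ne_zero
  have h2 : ((n - k).factorial : ℂ) ≠ 0 := by exact_mod_cast (n - k).factorial_ne_zero
  have h3 : (n.factorial : ℂ) ≠ 0 := by exact_mod_cast n.factorial_ne_zero
  field_simp

lemma tay_deriv (f : ℂ → ℂ) : tay (deriv f) = PowerSeries.derivative ℂ (tay f) := by
  ext n
  rw [PowerSeries.coeff_derivative, tay, tay, PowerSeries.coeff_mk, PowerSeries.coeff_mk,
    iteratedDeriv_succ', Nat.factorial_succ]
  have h3 : (n.factorial : ℂ) ≠ 0 := by exact_mod_cast n.factorial_ne_zero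
  have hne : (n : ℂ) + 1 ≠ 0 := by exact_mod_cast Nat.succ_ne_zero n
  push_cast
  field_simp

lemma tay_congr {f g : ℂ → ℂ} (h : f =ᶠ[nhds 0] g) : tay f = tay g := by
  ext n
  simp only [tay, PowerSeries.coeff_mk, h.iteratedDeriv_eq n]

lemma tay_const_mul (a : ℂ) {f : ℂ → ℂ} (hf : AnalyticAt ℂ f 0) :
    tay (fun z => a * f z) = PowerSeries.C a * tay f := by
  ext n
  rw [PowerSeries.coeff_C_mul]
  simp only [tay, PowerSeries.coeff_mk]
  rw [iteratedDeriv_const_mul_field]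
  ring

lemma tay_of_hasSum {f : ℂ → ℂ} (t : PowerSeries ℂ)
    (h : ∀ z : ℂ, ‖z‖ < 1 → HasSum (fun n => z ^ n * PowerSeries.coeff n t) (f z)) :
    tay f = t := by
  have h1 : HasFPowerSeriesAt f
      (FormalMultilinearSeries.ofScalars ℂ (fun n => PowerSeries.coeff n t)) 0 := by
    rw [hasFPowerSeriesAt_iff]
    filter_upwards [Metric.ball_mem_nhds (0 : ℂ) one_pos] with z hz
    simp only [FormalMultilinearSeries.coeff_ofScalars, smul_eq_mul, zero_add]
    exact h z (by simpa using hz)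
  have h2 := h1.analyticAt.hasFPowerSeriesAt
  have h3 := h2.eq_formalMultilinearSeries h1
  ext n
  have h4 := congrArg (fun p => FormalMultilinearSeries.coeff p n) h3
  simp only [FormalMultilinearSeries.coeff_ofScalars] at h4
  rw [tay, PowerSeries.coeff_mk, h4]

lemma thetaC_hasSum {z : ℂ} (hz : ‖z‖ < 1) :
    HasSum (fun n => z ^ n * PowerSeries.coeff n (1 + Tser)) (thetaC z) := by
  have hs : Summable fun j : ℤ => z ^ (j.natAbs ^ 2) := by
    apply Summable.of_norm
    simpa [norm_pow] using summable_theta (norm_nonneg z) hz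
  have h1 := hs.hasSum.nat_add_neg
  have h2 := (hasSum_nat_add_iff' 1).mpr h1
  have hinj : Function.Injective (fun n : ℕ => (n + 1) ^ 2) := by
    intro a b h
    have := Nat.pow_left_injective two_ne_zero h
    omega
  have h3 : HasSum (fun k : ℕ => z ^ k * PowerSeries.coeff k Tser) (thetaC z - 1) := by
    rw [← hinj.hasSum_iff]
    · have e : ((fun k : ℕ => z ^ k * PowerSeries.coeff k Tser) ∘ fun n : ℕ => (n + 1) ^ 2) =
          fun n : ℕ => z ^ (((n + 1 : ℕ) : ℤ).natAbs ^ 2) + z ^ ((-((n + 1 : ℕ) : ℤ)).natAbs ^ 2) := by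
        funext n
        have hsq : IsSquare ((n + 1) ^ 2) := ⟨n + 1, sq _⟩
        simp only [Function.comp, Int.natAbs_neg, Int.natAbs_natCast, Tser, PowerSeries.coeff_mk]
        rw [if_pos ⟨by positivity, hsq⟩]
        ring
      rw [e]
      have hv : thetaC z - 1 = ∑' (b : ℤ), z ^ b.natAbs ^ 2 + z ^ Int.natAbs 0 ^ 2 -
          ∑ i ∈ Finset.range 1, (z ^ ((i : ℕ) : ℤ).natAbs ^ 2 + z ^ (-((i : ℕ) : ℤ)).natAbs ^ 2) := by
        simp [thetaC]
      rw [hv]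
      exact h2
    · intro k hk
      simp only [Tser, PowerSeries.coeff_mk]
      rw [if_neg, mul_zero]
      rintro ⟨h0, a, ha⟩
      apply hk
      refine ⟨a - 1, ?_⟩
      have : a ≠ 0 := by rintro rfl; simp at ha; exact h0 ha
      show (a - 1 + 1) ^ 2 = k
      rw [Nat.sub_add_cancel (by omega), ha, sq]
  have h4 : HasSum (fun k : ℕ => z ^ k * PowerSeries.coeff k (1 : PowerSeries ℂ)) 1 := by
    have := hasSum_single (f := fun k : ℕ => z ^ k * PowerSeries.coeff k (1 : PowerSeries ℂ)) 0
      (by intro b hb; simp [PowerSeries.coeff_one, hb])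
    simpa using this
  have h5 := h4.add h3
  have e : (1 : ℂ) + (thetaC z - 1) = thetaC z := by ring
  rw [e] at h5
  simpa [map_add, mul_add] using h5

lemma thetaC_zero : thetaC 0 = 1 := by
  rw [thetaC, tsum_eq_single 0]
  · simp
  · intro j hj; simp [hj]

lemma thetaC_ne_zero {z : ℂ} (hz : ‖z‖ < 1) : thetaC z ≠ 0 := by
  rw [← tprod_jf_eq hz]; exact tprod_jf_ne_zero hz

lemma thetaC_diff : DifferentiableOn ℂ thetaC (Metric.ball (0 : ℂ) 1) := by
  have : DifferentiableOn ℂ (fun q ↦ ∏' n, jf n q) (Metric.ball (0 : ℂ) 1) :=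
    multipliableLocallyUniformlyOn_jf.hasProdLocallyUniformlyOn.differentiableOn
    (.of_forall fun _ ↦ by simpa [Finset.prod_fn] using
      DifferentiableOn.finsetProd (fun n _ ↦ (jf_differentiable n).differentiableOn)) Metric.isOpen_ball
  refine this.congr fun z hz => ?_
  rw [tprod_jf_eq (by simpa using hz)]

lemma norm_logDeriv_jf (n : ℕ) {z : ℂ} (hz : ‖z‖ < 1) (hz0 : z ≠ 0) :
    ‖logDeriv (jf n) z‖ ≤ jw n * (n + 1) * (‖z‖ ^ (n + 1) / (1 - ‖z‖ ^ (n + 1))) / ‖z‖ := by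
  have hr0 : 0 < ‖z‖ := norm_pos_iff.mpr hz0
  have hl : ‖z‖ ^ (n + 1) < 1 := pow_lt_one₀ (norm_nonneg _) hz (by omega)
  have hp : jw n * (n + 1) * (‖z‖ ^ (n + 1) / (1 - ‖z‖ ^ (n + 1))) / ‖z‖ =
      jw n * (n + 1) * ‖z‖ ^ n / (1 - ‖z‖ ^ (n + 1)) := by
    rw [pow_succ ‖z‖ n]
    field_simp
  rw [hp]
  have hcast : ‖(n : ℂ) + 1‖ = n + 1 := by
    have : ((n : ℂ) + 1) = ((n + 1 : ℕ) : ℂ) := by push_cast; rfl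
    rw [this, Complex.norm_natCast]; push_cast; rfl
  by_cases hn : Even n
  · have e : jf n = fun z => (1 + z ^ (n + 1)) ^ 2 := by ext z; simp [jf, hn]
    have hne : (1 + z ^ (n + 1)) ≠ 0 := by
      have := jf_ne_zero n hz
      rw [e] at this
      exact fun h => this (by simp [h])
    have hd : HasDerivAt (fun z : ℂ => (1 + z ^ (n + 1)) ^ 2)
        (2 * (1 + z ^ (n + 1)) * (((n : ℂ) + 1) * z ^ n)) z := by
      have := (((hasDerivAt_pow (n + 1) z).const_add 1).fun_pow 2)
      convert! this using 1
      push_cast; simp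
    have e2 : logDeriv (jf n) z = 2 * (((n : ℂ) + 1) * z ^ n) / (1 + z ^ (n + 1)) := by
      rw [logDeriv_apply, e, hd.deriv]
      field_simp
    have hlow : 1 - ‖z‖ ^ (n + 1) ≤ ‖1 + z ^ (n + 1)‖ := by
      have := norm_sub_norm_le (1 : ℂ) (-z ^ (n + 1))
      simpa using this
    rw [e2, norm_div, norm_mul, norm_mul, hcast, norm_pow, jw, if_pos hn, Complex.norm_ofNat, ← mul_assoc]
    apply div_le_div_of_nonneg_left (by positivity) (by linarith) hlow
  · have e : jf n = fun z => 1 - z ^ (n + 1) := by ext z; simp [jf, hn]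
    have hd : HasDerivAt (fun z : ℂ => 1 - z ^ (n + 1)) (-(((n : ℂ) + 1) * z ^ n)) z := by
      have := ((hasDerivAt_pow (n + 1) z).const_sub 1)
      convert! this using 1
      push_cast; simp
    have e2 : logDeriv (jf n) z = -(((n : ℂ) + 1) * z ^ n) / (1 - z ^ (n + 1)) := by
      rw [logDeriv_apply, e, hd.deriv]
    have hlow : 1 - ‖z‖ ^ (n + 1) ≤ ‖1 - z ^ (n + 1)‖ := by
      have := norm_sub_norm_le (1 : ℂ) (z ^ (n + 1))
      simpa using this
    rw [e2, norm_div, norm_neg, norm_mul, hcast, norm_pow, jw, if_neg hn, one_mul]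
    apply div_le_div_of_nonneg_left (by positivity) (by linarith) hlow

lemma norm_logDeriv_theta (t : ℝ) (ht : 0 < t) {z : ℂ} (hz : ‖z‖ = Real.exp (-t)) :
    ‖deriv thetaC z / thetaC z‖ ≤ Real.pi ^ 2 / (4 * t ^ 2) / Real.exp (-t) := by
  have hz1 : ‖z‖ < 1 := by rw [hz, Real.exp_lt_one_iff]; linarith
  have hz0 : z ≠ 0 := norm_pos_iff.mp (by rw [hz]; exact Real.exp_pos _)
  have hpart : ∀ N, ∑ n ∈ Finset.range N, ‖logDeriv (jf n) z‖ ≤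
      Real.pi ^ 2 / (4 * t ^ 2) / Real.exp (-t) := by
    intro N
    refine (Finset.sum_le_sum fun n _ => norm_logDeriv_jf n hz1 hz0).trans ?_
    rw [← Finset.sum_div, hz]
    exact div_le_div_of_nonneg_right (partial_lambert_le t ht N) (Real.exp_pos _).le
  have hsum : Summable fun n => ‖logDeriv (jf n) z‖ :=
    summable_of_sum_range_le (fun _ => norm_nonneg _) hpart
  have hmem : z ∈ Metric.ball (0 : ℂ) 1 := by simpa using hz1
  have key := logDeriv_tprod_eq_tsum Metric.isOpen_ball hmem (f := fun n z => jf n z)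
    (fun n => jf_ne_zero n hz1) (fun n => (jf_differentiable n).differentiableOn)
    hsum.of_norm multipliableLocallyUniformlyOn_jf (tprod_jf_ne_zero hz1)
  have heq : (fun z => ∏' n, jf n z) =ᶠ[nhds z] thetaC := by
    filter_upwards [Metric.isOpen_ball.mem_nhds hmem] with w hw
    exact tprod_jf_eq (by simpa using hw)
  rw [logDeriv_apply, heq.deriv_eq, heq.eq_of_nhds] at key
  rw [key]
  refine (norm_tsum_le_tsum_norm hsum).trans ?_
  exact hsum.tsum_le_of_sum_range_le hpart

lemma exists_log_theta : ∃ L : ℂ → ℂ, L 0 = 0 ∧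
    (∀ z ∈ Metric.ball (0 : ℂ) 1, HasDerivAt L (deriv thetaC z / thetaC z) z) ∧
    ∀ z ∈ Metric.ball (0 : ℂ) 1, Complex.exp (L z) = thetaC z := by
  have hd : DifferentiableOn ℂ (fun z => deriv thetaC z / thetaC z) (Metric.ball (0 : ℂ) 1) :=
    (thetaC_diff.deriv Metric.isOpen_ball).div thetaC_diff
      (fun z hz => thetaC_ne_zero (by simpa using hz))
  obtain ⟨g, hg⟩ := hd.isExactOn_ball
  have hL : ∀ z ∈ Metric.ball (0 : ℂ) 1, HasDerivAt (fun z => g z - g 0) (deriv thetaC z / thetaC z) z :=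
    fun z hz => (hg z hz).sub_const _
  refine ⟨fun z => g z - g 0, by simp, hL, ?_⟩
  have hder : ∀ z ∈ Metric.ball (0 : ℂ) 1,
      HasDerivAt (fun z => thetaC z * Complex.exp (-(g z - g 0))) 0 z := by
    intro z hz
    have h1 := (thetaC_diff.differentiableAt (Metric.isOpen_ball.mem_nhds hz)).hasDerivAt
    have h2 := h1.mul (hL z hz).neg.cexp
    have hne : thetaC z ≠ 0 := thetaC_ne_zero (by simpa using hz)
    convert! h2 using 1
    field_simp
    ring
  intro z hz
  have hc := (convex_ball (0 : ℂ) 1).is_const_of_fderivWithin_eq_zero (𝕜 := ℂ)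
    (f := fun z => thetaC z * Complex.exp (-(g z - g 0)))
    (fun w hw => (hder w hw).differentiableAt.differentiableWithinAt)
    (fun w hw => by
      rw [fderivWithin_of_isOpen Metric.isOpen_ball hw]
      have h := (hder w hw).hasFDerivAt.fderiv
      rw [h]
      ext
      simp)
    hz (Metric.mem_ball_self one_pos)
  simp only [sub_self, neg_zero, Complex.exp_zero, mul_one, thetaC_zero] at hc
  rw [Complex.exp_neg] at hc
  have hne := Complex.exp_ne_zero (g z - g 0)
  field_simp at hc
  exact hc.symm

lemma norm_thetaC_le {z : ℂ} (hz : ‖z‖ < 1) : ‖thetaC z‖ ≤ ∑' j : ℤ, ‖z‖ ^ (j.natAbs ^ 2) := by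
  have hs := summable_theta (norm_nonneg z) hz
  have hs' : Summable fun j : ℤ => ‖z ^ (j.natAbs ^ 2)‖ := by simpa [norm_pow] using hs
  simpa [norm_pow, thetaC] using norm_tsum_le_tsum_norm hs'

lemma bound_ge_two (u : ℝ) (hu : 0 ≤ u) (m : ℕ) (hm : 2 ≤ m) :
    |Polynomial.aeval u (thetaCoeff m)| ≤ 6 * u * (m : ℝ) ^ (u / 2 + 1) := by
  obtain ⟨L, hL0, hL, hexp⟩ := exists_log_theta
  have hmpos : (0 : ℝ) < m := by positivity
  set G : ℂ → ℂ := fun z => Complex.exp (u * L z) with hG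
  have h0mem : (0 : ℂ) ∈ Metric.ball (0 : ℂ) 1 := Metric.mem_ball_self one_pos
  have hGd : ∀ z ∈ Metric.ball (0 : ℂ) 1, HasDerivAt G (G z * (u * (deriv thetaC z / thetaC z))) z :=
    fun z hz => ((hL z hz).const_mul (u : ℂ)).cexp
  have hGdiff : DifferentiableOn ℂ G (Metric.ball (0 : ℂ) 1) :=
    fun z hz => (hGd z hz).differentiableAt.differentiableWithinAt
  have hGa : AnalyticAt ℂ G 0 := hGdiff.analyticAt (Metric.isOpen_ball.mem_nhds h0mem)
  have hTa : AnalyticAt ℂ thetaC 0 := thetaC_diff.analyticAt (Metric.isOpen_ball.mem_nhds h0mem)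
  have htheta : tay thetaC = 1 + Tser := tay_of_hasSum _ fun z hz => thetaC_hasSum hz
  have hode : deriv G * thetaC =ᶠ[nhds 0] fun z => (u : ℂ) * (deriv thetaC * G) z := by
    filter_upwards [Metric.isOpen_ball.mem_nhds h0mem] with z hz
    have hne : thetaC z ≠ 0 := thetaC_ne_zero (by simpa using hz)
    simp only [Pi.mul_apply, (hGd z hz).deriv]
    field_simp
  have hode2 : PowerSeries.derivative ℂ (tay G) * (1 + Tser) =
      PowerSeries.C (u : ℂ) * (PowerSeries.derivative ℂ Tser * tay G) := by
    have h := tay_congr hode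
    rw [tay_const_mul _ (hTa.deriv.mul hGa), tay_mul hGa.deriv hTa, tay_mul hTa.deriv hGa,
      tay_deriv, tay_deriv, htheta, map_add, PowerSeries.derivative_one, zero_add] at h
    exact h
  have hGF : tay G = Fser u := by
    apply ode_unique _ _ _ hode2 (Fser_ode u)
    rw [coeff_Fser_zero, tay, PowerSeries.coeff_mk]
    simp [hG, hL0]
  have hcoef : ((Polynomial.aeval u (thetaCoeff m) : ℝ) : ℂ) =
      iteratedDeriv m G 0 / (m.factorial : ℂ) := by
    rw [← coeff_Fser u m (by omega), ← hGF, tay, PowerSeries.coeff_mk]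
  -- Cauchy estimate
  set t : ℝ := 1.01 * Real.pi / m with ht
  have htpos : 0 < t := by have := Real.pi_pos; positivity
  set r : ℝ := Real.exp (-t) with hr
  have hr0 : 0 < r := Real.exp_pos _
  have hr1 : r < 1 := by rw [hr, Real.exp_lt_one_iff]; linarith
  set S : ℝ := Real.pi ^ 2 / (4 * t ^ 2) with hS
  have hS0 : 0 ≤ S := by positivity
  have hsphere : ∀ z ∈ Metric.sphere (0 : ℂ) r, ‖deriv G z‖ ≤ u * (S / r) * (m : ℝ) ^ (u / 2) := by
    intro z hz
    have hzr : ‖z‖ = r := by simpa using hz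
    have hz1 : ‖z‖ < 1 := by rw [hzr]; exact hr1
    have hzb : z ∈ Metric.ball (0 : ℂ) 1 := by simpa using hz1
    rw [(hGd z hzb).deriv, norm_mul, norm_mul, Complex.norm_real, Real.norm_of_nonneg hu]
    have h1 := norm_logDeriv_theta t htpos hzr
    have h2 : ‖G z‖ ≤ (m : ℝ) ^ (u / 2) := by
      have e1 : ‖G z‖ = ‖thetaC z‖ ^ u := by
        rw [hG, ← hexp z hzb, Complex.norm_exp, Complex.norm_exp, ← Real.exp_mul]
        congr 1
        simp [mul_comm]
      have h3 : ‖thetaC z‖ ≤ (m : ℝ) ^ (1 / 2 : ℝ) := by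
        refine (norm_thetaC_le hz1).trans ?_
        rw [hzr]
        exact theta_le_sqrt m hm
      rw [e1]
      calc ‖thetaC z‖ ^ u ≤ ((m : ℝ) ^ (1 / 2 : ℝ)) ^ u := Real.rpow_le_rpow (norm_nonneg _) h3 hu
        _ = (m : ℝ) ^ (u / 2) := by rw [← Real.rpow_mul hmpos.le]; congr 1; ring
    rw [mul_comm]
    exact mul_le_mul (mul_le_mul_of_nonneg_left h1 hu) h2 (norm_nonneg _) (by positivity)
  have hDC : DiffContOnCl ℂ (deriv G) (Metric.ball (0 : ℂ) r) := by
    apply DifferentiableOn.diffContOnCl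
    refine (hGdiff.deriv Metric.isOpen_ball).mono ?_
    rw [closure_ball _ hr0.ne']
    exact Metric.closedBall_subset_ball hr1
  have hC := Complex.norm_iteratedDeriv_le_of_forall_mem_sphere_norm_le (m - 1) hr0 hDC hsphere
  have hm1 : m = m - 1 + 1 := by omega
  have hit : iteratedDeriv m G 0 = iteratedDeriv (m - 1) (deriv G) 0 := by
    rw [hm1, iteratedDeriv_succ', ← hm1]
  rw [← hit] at hC
  have hnorm : |Polynomial.aeval u (thetaCoeff m)| = ‖iteratedDeriv m G 0‖ / (m.factorial : ℝ) := by
    rw [← Real.norm_eq_abs, ← Complex.norm_real, hcoef, norm_div, Complex.norm_natCast]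
  rw [hnorm, div_le_iff₀ (by positivity)]
  refine hC.trans ?_
  have hfac : (m.factorial : ℝ) = m * ((m - 1).factorial : ℝ) := by
    exact_mod_cast (Nat.mul_factorial_pred (by omega : m ≠ 0)).symm
  have hrm : r ^ m = r * r ^ (m - 1) := by
    conv_lhs => rw [hm1]
    rw [pow_succ']
  have hrm2 : (r ^ m)⁻¹ = Real.exp (1.01 * Real.pi) := by
    rw [hr, ← Real.exp_nat_mul, ← Real.exp_neg]
    congr 1
    rw [ht]; field_simp
  have hS2 : S = m ^ 2 / (4 * 1.0201) := by
    have := Real.pi_pos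
    rw [hS, ht]; field_simp; norm_num
  have e1 : ((m - 1).factorial : ℝ) * (u * (S / r) * (m : ℝ) ^ (u / 2)) / r ^ (m - 1) =
      ((m - 1).factorial : ℝ) * u * (m : ℝ) ^ (u / 2) * S * (r ^ m)⁻¹ := by
    rw [hrm]; field_simp
  rw [e1, hrm2, hfac, hS2, Real.rpow_add_one hmpos.ne']
  have hE := exp_pi_bound
  calc ((m - 1).factorial : ℝ) * u * (m : ℝ) ^ (u / 2) * (m ^ 2 / (4 * 1.0201)) * Real.exp (1.01 * Real.pi)
      ≤ ((m - 1).factorial : ℝ) * u * (m : ℝ) ^ (u / 2) * (m ^ 2 / (4 * 1.0201)) * 24.48 := by gcongr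
    _ = (((m - 1).factorial : ℝ) * u * (m : ℝ) ^ (u / 2) * m ^ 2) * (24.48 / (4 * 1.0201)) := by ring
    _ ≤ (((m - 1).factorial : ℝ) * u * (m : ℝ) ^ (u / 2) * m ^ 2) * 6 := by
      apply mul_le_mul_of_nonneg_left (by norm_num) (by positivity)
    _ = _ := by ring

/-- for real `u ≥ 0` and `m ≥ 1`, `|c_m(u)| ≤ 6u·m^{u/2+1}`. -/
theorem thetaCoeff_bound' (u : ℝ) (hu : 0 ≤ u) (m : ℕ) (hm : 1 ≤ m) :
    |Polynomial.aeval u (thetaCoeff m)| ≤ 6 * u * (m : ℝ) ^ (u / 2 + 1) := by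
  rcases Nat.lt_or_ge m 2 with h | h
  · obtain rfl : m = 1 := by omega
    have h1 := aeval_thetaCoeff u 1
    have h2 : ((Polynomial.aeval u (thetaCoeff 1) : ℝ) : ℂ) = ((2 * u : ℝ) : ℂ) := by
      rw [h1]
      simp [gb, Tser, mul_comm]
    have h3 : (Polynomial.aeval u (thetaCoeff 1) : ℝ) = 2 * u := by exact_mod_cast h2
    rw [h3, abs_of_nonneg (by positivity)]
    simp
    linarith
  · exact bound_ge_two u hu m h
end
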